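/- arXiv:2605.04464 — 2 statements merged into one kernel-verified Lean document; each statement's English description precedes it below -/
import Mathlib

section
/- Let D be a division ring with center F and let n be a positive integer. Suppose f is an element of the free associative F-algebra F⟨X⟩ (in variables x₁,…,x_m) whose image f(M_n(D)) is not contained in the center of M_n(D). Then either M_n(D) equals the additive subgroup generated by the set of products {f(a₁,…,a_m)·f(b₁,…,b_m) : a_i, b_j ∈ M_n(D)}, or else n = 2, D has exactly two elements, and this additive subgroup equals the four-element set {0, I₂, [[1,1],[1,0]], [[0,1],[1,1]]} of 2×2 matrices over the two-element field. -/
section divring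
variable {D : Type*} [DivisionRing D]

/-- Cartan–Brauer–Hua. -/
lemma pp_cbh (K : AddSubgroup D) (h1 : (1 : D) ∈ K) (hmul : ∀ x ∈ K, ∀ y ∈ K, x * y ∈ K)
    (hinv : ∀ x ∈ K, x⁻¹ ∈ K) (hconj : ∀ u : D, u ≠ 0 → ∀ x ∈ K, u * x * u⁻¹ ∈ K)
    (a : D) (ha : a ∈ K) (hna : ∃ y, a * y ≠ y * a) : ∀ x, x ∈ K := by
  by_contra! hcon
  obtain ⟨x, hx⟩ := hcon
  have key : ∀ x, x ∉ K → a * x = x * a := by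
    intro x hx
    have hx0 : x ≠ 0 := by
      rintro rfl; exact hx K.zero_mem
    have hx1 : x + 1 ≠ 0 := by
      intro h
      apply hx
      have : x = -1 := eq_neg_of_add_eq_zero_left h
      rw [this]; exact K.neg_mem h1
    set w := x * a * x⁻¹ with hw
    set w' := (x + 1) * a * (x + 1)⁻¹ with hw'
    have hwK : w ∈ K := hconj x hx0 a ha
    have hw'K : w' ∈ K := hconj _ hx1 a ha
    have e1 : w * x = x * a := by rw [hw, mul_assoc, inv_mul_cancel₀ hx0, mul_one]
    have e2 : w' * (x + 1) = (x + 1) * a := by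
      rw [hw', mul_assoc, inv_mul_cancel₀ hx1, mul_one]
    have e3 : (w' - w) * x = a - w' := by
      have : w' * x + w' = x * a + a := by
        rw [mul_add, add_mul, mul_one, one_mul] at e2; exact e2
      rw [sub_mul, e1, eq_sub_of_add_eq this]; abel
    by_cases hd : w' - w = 0
    · have h4 : a - w' = 0 := by rw [← e3, hd, zero_mul]
      have : w = a := by rw [← sub_eq_zero.mp hd, ← sub_eq_zero.mp h4]
      rw [← e1, this]
    · exfalso; apply hx
      have : x = (w' - w)⁻¹ * (a - w') := by rw [← e3, inv_mul_cancel_left₀ hd]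
      rw [this]
      exact hmul _ (hinv _ (K.sub_mem hw'K hwK)) _ (K.sub_mem ha hw'K)
  obtain ⟨y, hy⟩ := hna
  by_cases hyK : y ∈ K
  · have h1 := key x hx
    have h2 := key (x + y) (fun h => hx (by simpa using K.sub_mem h hyK))
    apply hy
    rw [mul_add, add_mul, h1] at h2
    exact add_left_cancel h2
  · exact hy (key y hyK)

/-- If one noncentral `a` has `[a, D] ⊆ M`, `M` conjugation invariant, then `[D, D] ⊆ M`. -/
lemma pp_comm (M : AddSubgroup D) (hconj : ∀ u : D, u ≠ 0 → ∀ x ∈ M, u * x * u⁻¹ ∈ M)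
    (a : D) (hna : ∃ y, a * y ≠ y * a) (ha : ∀ x, a * x - x * a ∈ M) :
    ∀ b x, b * x - x * b ∈ M := by
  let K : AddSubgroup D :=
    { carrier := {b | ∀ x, b * x - x * b ∈ M}
      zero_mem' := by intro x; simp
      add_mem' := by
        intro b c hb hc x
        have : (b + c) * x - x * (b + c) = (b * x - x * b) + (c * x - x * c) := by noncomm_ring
        rw [this]; exact M.add_mem (hb x) (hc x)
      neg_mem' := by
        intro b hb x
        have : (-b) * x - x * (-b) = -(b * x - x * b) := by noncomm_ring
        rw [this]; exact M.neg_mem (hb x) }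
  refine pp_cbh K (by intro x; simp) ?_ ?_ ?_ a ha hna
  · intro b hb c hc x
    have : (b * c) * x - x * (b * c) = (b * (c * x) - (c * x) * b) + (c * (x * b) - (x * b) * c) := by
      noncomm_ring
    rw [this]; exact M.add_mem (hb _) (hc _)
  · intro b hb x
    by_cases h0 : b = 0
    · simp [h0]
    have : b⁻¹ * x - x * b⁻¹ = -(b * (b⁻¹ * x * b⁻¹) - (b⁻¹ * x * b⁻¹) * b) := by
      rw [mul_assoc b⁻¹ x, mul_inv_cancel_left₀ h0, mul_assoc, mul_assoc x, inv_mul_cancel₀ h0]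
      simp
    rw [this]; exact M.neg_mem (hb _)
  · intro u hu b hb x
    have := hconj u hu _ (hb (u⁻¹ * x * u))
    have e : u * (b * (u⁻¹ * x * u) - (u⁻¹ * x * u) * b) * u⁻¹ = (u * b * u⁻¹) * x - x * (u * b * u⁻¹) := by
      rw [mul_sub, sub_mul]
      simp only [mul_assoc, mul_inv_cancel₀ hu, mul_inv_cancel_left₀ hu, mul_one]
    rw [e] at this; exact this

/-- centralizers of conjugation invariant noncentral sets are central -/
lemma pp_centralizer (S : Set D) (hconj : ∀ u : D, u ≠ 0 → ∀ x ∈ S, u * x * u⁻¹ ∈ S)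
    (s : D) (hs : s ∈ S) (hns : ∃ y, s * y ≠ y * s) (a : D) (ha : ∀ x ∈ S, a * x = x * a) :
    ∀ y, a * y = y * a := by
  by_contra! hna
  let K : AddSubgroup D :=
    { carrier := {b | ∀ x ∈ S, b * x = x * b}
      zero_mem' := by intro x; simp
      add_mem' := by
        intro b c hb hc x hx
        rw [add_mul, mul_add, hb x hx, hc x hx]
      neg_mem' := by
        intro b hb x hx
        rw [neg_mul, mul_neg, hb x hx] }
  have := pp_cbh K (by intro x; simp) ?_ ?_ ?_ a ha hna
  · obtain ⟨y, hy⟩ := hns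
    exact hy (this y s hs).symm
  · intro b hb c hc x hx
    rw [mul_assoc, hc x hx, ← mul_assoc, hb x hx, mul_assoc]
  · intro b hb x hx
    exact (Commute.inv_left₀ (show Commute b x from hb x hx))
  · intro u hu b hb x hx
    have := hb _ (hconj u⁻¹ (inv_ne_zero hu) x hx)
    rw [inv_inv] at this
    calc u * b * u⁻¹ * x = u * (b * (u⁻¹ * x * u)) * u⁻¹ := by
          simp only [mul_assoc, mul_inv_cancel₀ hu, mul_one]
      _ = u * ((u⁻¹ * x * u) * b) * u⁻¹ := by rw [this]
      _ = _ := by simp only [mul_assoc, mul_inv_cancel_left₀ hu]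

/-- if `[a,y]` is central for all `y` then `a` is central -/
lemma pp_noncentral_comm (a : D) (hna : ∃ y, a * y ≠ y * a) :
    ∃ y z, (a * y - y * a) * z ≠ z * (a * y - y * a) := by
  by_contra! h
  obtain ⟨y, hy⟩ := hna
  have h1 := h (a * y) y
  have h2 := h y y
  have h3 := h y a
  have e : a * (a * y) - (a * y) * a = a * (a * y - y * a) := by noncomm_ring
  rw [e] at h1
  have h4 : (a * y - y * a) * (a * y - y * a) = 0 := by
    calc (a * y - y * a) * (a * y - y * a)
        = a * (y * (a * y - y * a)) - y * (a * (a * y - y * a)) := by noncomm_ring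
      _ = a * ((a * y - y * a) * y) - y * (a * (a * y - y * a)) := by rw [h2]
      _ = 0 := by rw [← h1]; noncomm_ring
  exact hy (sub_eq_zero.mp (mul_self_eq_zero.mp h4))

/-- In characteristic three some cube is noncentral. -/
lemma pp_cube (h3 : (3 : D) = 0) (u : D) (hnu : ∃ y, u * y ≠ y * u)
    (hc : ∀ v y : D, v * v * v * y = y * (v * v * v)) : False := by
  -- find x with [u,x] ≠ 0, [u,[u,x]] = 0
  have ex : ∃ x, u * x - x * u ≠ 0 ∧ u * (u * x - x * u) = (u * x - x * u) * u := by
    obtain ⟨x, hx⟩ := hnu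
    by_cases h : u * (u * x - x * u) = (u * x - x * u) * u
    · exact ⟨x, sub_ne_zero.mpr hx, h⟩
    · refine ⟨u * x - x * u, sub_ne_zero.mpr h, ?_⟩
      have e : u * (u * (u * x - x * u) - (u * x - x * u) * u)
          - (u * (u * x - x * u) - (u * x - x * u) * u) * u
          = (u * u * u * x - x * (u * u * u)) - 3 * (u * u * x * u - u * x * u * u) := by
        noncomm_ring
      rw [hc u x, h3] at e
      simpa [sub_eq_zero] using e
  obtain ⟨x, hz, hcomm⟩ := ex
  set z := u * x - x * u with hzdef
  have hu0 : u ≠ 0 := by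
    rintro rfl; simp at hzdef; exact hz hzdef
  have hzi : u * z⁻¹ = z⁻¹ * u := (Commute.inv_right₀ (show Commute u z from hcomm))
  set y := x * z⁻¹ * u with hy
  have e1 : u * y = (y + 1) * u := by
    have : u * x = z + x * u := by rw [hzdef]; abel
    calc u * y = (u * x) * z⁻¹ * u := by rw [hy]; simp only [mul_assoc]
      _ = z * z⁻¹ * u + x * (u * z⁻¹) * u := by rw [this]; noncomm_ring
      _ = u + x * z⁻¹ * u * u := by rw [mul_inv_cancel₀ hz, hzi]; simp only [mul_assoc, one_mul]
      _ = _ := by rw [hy]; noncomm_ring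
  have e1' : ∀ t, u * (y * t) = (y + 1) * (u * t) := by
    intro t; rw [← mul_assoc, e1, mul_assoc]
  have e2 : u * (y * y * y) = (y + 1) * (y + 1) * (y + 1) * u := by
    simp only [mul_assoc, e1', e1]
  have e3 : (y + 1) * (y + 1) * (y + 1) = y * y * y + 1 + 3 * (y * y + y) := by noncomm_ring
  rw [e3, h3, ← hc y u] at e2
  simp only [zero_mul, add_zero, add_mul, one_mul] at e2
  exact hu0 (by simpa using e2)

/-- Final step for division rings. -/
lemma pp_final (V A : AddSubgroup D) (hconj : ∀ u : D, u ≠ 0 → ∀ x ∈ V, u * x * u⁻¹ ∈ V)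
    (hAconj : ∀ u : D, u ≠ 0 → ∀ x ∈ A, u * x * u⁻¹ ∈ A)
    (hVA : ∀ v ∈ V, ∀ w ∈ V, v * w ∈ A)
    (a : D) (hna : ∃ y, a * y ≠ y * a)
    (ha : ∀ x, ∃ z, (∀ y, z * y = y * z) ∧ a * x - x * a + z ∈ V) : ∀ x, x ∈ A := by
  -- `[D,D] ⊆ V + Z`
  let M : AddSubgroup D :=
    { carrier := {b | ∃ z, (∀ y, z * y = y * z) ∧ b + z ∈ V}
      zero_mem' := ⟨0, by simp, by simp⟩
      add_mem' := by
        rintro b c ⟨z, hz, hb⟩ ⟨w, hw, hc⟩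
        refine ⟨z + w, fun y => by rw [add_mul, mul_add, hz, hw], ?_⟩
        have : b + c + (z + w) = (b + z) + (c + w) := by abel
        rw [this]; exact V.add_mem hb hc
      neg_mem' := by
        rintro b ⟨z, hz, hb⟩
        refine ⟨-z, fun y => by rw [neg_mul, mul_neg, hz], ?_⟩
        have : -b + -z = -(b + z) := by abel
        rw [this]; exact V.neg_mem hb }
  have hM : ∀ b x, b * x - x * b ∈ M := by
    refine pp_comm M ?_ a hna ha
    rintro u hu x ⟨z, hz, hx⟩
    refine ⟨z, hz, ?_⟩
    have := hconj u hu _ hx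
    rw [mul_add, add_mul, ← hz u, mul_assoc z, mul_inv_cancel₀ hu, mul_one] at this
    exact this
  have hconjdiff : ∀ u : D, u ≠ 0 → ∀ c ∈ M, u * c * u⁻¹ - c ∈ V := by
    rintro u hu c ⟨z, hz, hc⟩
    have h1 := V.sub_mem (hconj u hu _ hc) hc
    rw [mul_add, add_mul, ← hz u, mul_assoc z, mul_inv_cancel₀ hu, mul_one] at h1
    simpa using h1
  have hsq : ∀ u x : D, u * (u * x - x * u) - (u * x - x * u) * u ∈ V := by
    intro u x
    by_cases hu : u = 0
    · simp [hu]
    have h1 := hconjdiff u hu _ (hM u (x * u))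
    have e : u * (x * u) - x * u * u = (u * x - x * u) * u := by noncomm_ring
    rw [e, ← mul_assoc, mul_assoc _ u u⁻¹, mul_inv_cancel₀ hu, mul_one] at h1
    exact h1
  have hV : ∀ b x, b * x - x * b ∈ V := by
    by_cases h3 : (3 : D) = 0
    · have : ∃ v y : D, v * v * v * y ≠ y * (v * v * v) := by
        by_contra! hcon
        exact pp_cube h3 a hna hcon
      obtain ⟨v, hv⟩ := this
      refine pp_comm V hconj (v * v * v) hv ?_
      intro x
      have := hsq v (v * x - x * v)
      have e : v * (v * (v * x - x * v) - (v * x - x * v) * v)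
          - (v * (v * x - x * v) - (v * x - x * v) * v) * v
          = (v * v * v * x - x * (v * v * v)) - 3 * (v * v * x * v - v * x * v * v) := by
        noncomm_ring
      rw [e, h3] at this
      simpa using this
    · have hs : ∀ u w x : D, (u * (w * x - x * w) - (w * x - x * w) * u)
          + (w * (u * x - x * u) - (u * x - x * u) * w) ∈ V := by
        intro u w x
        have := V.sub_mem (V.sub_mem (hsq (u + w) x) (hsq u x)) (hsq w x)
        convert this using 1
        noncomm_ring
      have ht : ∀ u w x : D, (u * (w * x - x * w) - (w * x - x * w) * u) ∈ V := by
        intro u w x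
        have hc3 : ∀ y : D, (3 : D)⁻¹ * y = y * (3 : D)⁻¹ := fun y =>
          (Commute.inv_left₀ (show Commute (3 : D) y from (Nat.cast_commute 3 y)))
        have h1 := V.sub_mem (hs ((3 : D)⁻¹ * u) w x) (hs x ((3 : D)⁻¹ * u) w)
        set k := (3 : D)⁻¹ * u with hk
        have hu : u = 3 * k := by rw [hk, mul_inv_cancel_left₀ h3]
        convert h1 using 1
        rw [hu]
        noncomm_ring
      obtain ⟨y, z, hyz⟩ := pp_noncentral_comm a hna
      refine pp_comm V hconj (a * y - y * a) ⟨z, hyz⟩ ?_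
      intro x
      have := V.neg_mem (ht x a y)
      simpa using this
  -- now finish
  let C : Set D := {c | ∃ b x, c = b * x - x * b}
  have hC : ∀ u : D, u ≠ 0 → ∀ x ∈ C, u * x * u⁻¹ ∈ C := by
    rintro u hu _ ⟨b, x, rfl⟩
    refine ⟨u * b * u⁻¹, u * x * u⁻¹, ?_⟩
    rw [mul_sub, sub_mul]
    simp only [mul_assoc, inv_mul_cancel_left₀ hu]
  have hCV : ∀ c ∈ C, c ∈ V := by rintro _ ⟨b, x, rfl⟩; exact hV b x
  obtain ⟨y0, hy0⟩ := pp_noncentral_comm a hna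
  have hcen := pp_centralizer C hC (a * y0 - y0 * a) ⟨a, y0, rfl⟩ hy0
  have hCA : ∀ b x, b * x - x * b ∈ A := by
    by_cases hcc : ∃ c ∈ C, ∃ d ∈ C, ∃ y, (c * d - d * c) * y ≠ y * (c * d - d * c)
    · obtain ⟨c, hc, d, hd, hy⟩ := hcc
      refine pp_comm A hAconj _ hy ?_
      intro x
      have e : (c * d - d * c) * x - x * (c * d - d * c)
        = (c * (d * x - x * d) - (d * x - x * d) * c) - (d * (c * x - x * c) - (c * x - x * c) * d) := by
        noncomm_ring
      rw [e]
      have := hCV c hc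
      have := hCV d hd
      exact A.sub_mem (A.sub_mem (hVA _ (hCV c hc) _ (hV d x)) (hVA _ (hV d x) _ (hCV c hc)))
        (A.sub_mem (hVA _ (hCV d hd) _ (hV c x)) (hVA _ (hV c x) _ (hCV d hd)))
    · push Not at hcc
      have : ∃ d ∈ C, (a * y0 - y0 * a) * d ≠ d * (a * y0 - y0 * a) := by
        by_contra! h
        obtain ⟨z, hz⟩ := hy0
        exact hz (hcen _ h z)
      obtain ⟨d, hd, hne⟩ := this
      set c := a * y0 - y0 * a with hcdef
      have hz := hcc c ⟨a, y0, rfl⟩ d hd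
      set z := c * d - d * c with hzdef
      have hz0 : z ≠ 0 := sub_ne_zero.mpr hne
      have hzi : ∀ y, z⁻¹ * y = y * z⁻¹ := fun y =>
        (Commute.inv_left₀ (show Commute z y from hz y))
      have h1 : (1 : D) ∈ V := by
        have := hV (z⁻¹ * c) d
        rw [← mul_assoc d, ← hzi d, mul_assoc, mul_assoc, ← mul_sub, ← hzdef, inv_mul_cancel₀ hz0] at this
        exact this
      intro b x
      have := hVA _ h1 _ (hV b x)
      rwa [one_mul] at this
  -- choose c ∈ C noncentral
  obtain ⟨z, hz⟩ := hy0
  set c := a * y0 - y0 * a with hcdef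
  have hcz : z * c - c * z ≠ 0 := sub_ne_zero.mpr (Ne.symm hz)
  intro x
  set q := z * c - c * z with hq
  have h1 := A.sub_mem (hCA z (c * (q⁻¹ * x))) (hVA _ (hV a y0) _ (hV z (q⁻¹ * x)))
  convert h1 using 1
  calc x = q * (q⁻¹ * x) := by rw [mul_inv_cancel_left₀ hcz]
    _ = _ := by rw [← hcdef]; generalize q⁻¹ * x = t; rw [hq]; noncomm_ring

end divring


section infinitecenter
variable {D : Type*} [DivisionRing D] {F : Type*} [Field F] [Algebra F D]
open Polynomial

lemma pp_pow_ne [Infinite F] {a b : ℕ} (h : a ≠ b) : ∃ l : F, l ^ a ≠ l ^ b := by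
  by_contra! hcon
  have : (X : F[X]) ^ a = X ^ b := by
    apply Polynomial.funext
    intro r; simpa using hcon r
  have := congrArg natDegree this
  simp at this
  exact h this

lemma pp_elim (D : Type*) [DivisionRing D] [Algebra F D] [Infinite F] (d0 : ℕ) (K : Finset (ℕ × ℕ))
    (hK : ∀ k ∈ K, k.1 ≠ k.2 * d0) :
    ∃ κ : ℕ × ℕ → F, κ (d0, 1) ≠ 0 ∧ (∀ k ∈ K, κ k = 0) ∧
      ∀ (I : Finset (ℕ × ℕ)) (c : ℕ × ℕ → D) (M : AddSubgroup D),
        (∀ t r : F, ∑ k ∈ I, (t ^ k.1 * r ^ k.2) • c k ∈ M) →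
        ∀ t r : F, ∑ k ∈ I, (κ k * (t ^ k.1 * r ^ k.2)) • c k ∈ M := by
  classical
  induction K using Finset.induction_on with
  | empty => exact ⟨fun _ => 1, by simp, by simp, by simp⟩
  | insert e K he ih =>
    obtain ⟨κ, h0, hz, hM⟩ := ih (fun k hk => hK k (Finset.mem_insert_of_mem hk))
    have hne : e.2 * d0 ≠ e.1 * 1 := by
      rw [mul_one]; exact (hK e (Finset.mem_insert_self _ _)).symm
    obtain ⟨l, hl⟩ := pp_pow_ne (F := F) hne
    refine ⟨fun k => κ k * (l ^ (e.2 * k.1) - l ^ (e.1 * k.2)), ?_, ?_, ?_⟩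
    · exact mul_ne_zero h0 (sub_ne_zero.mpr hl)
    · intro k hk
      rcases Finset.mem_insert.mp hk with rfl | hk
      · simp [mul_comm]
      · simp [hz k hk]
    · intro I c M h t r
      have h1 := M.sub_mem (hM I c M h (l ^ e.2 * t) r) (hM I c M h t (l ^ e.1 * r))
      rw [← Finset.sum_sub_distrib] at h1
      convert h1 using 2 with k hk
      rw [← sub_smul]
      congr 1
      ring

/-- evaluation at an element commuting with the coefficients -/
noncomputable def ppEv {E : Type*} [Ring E] [Algebra F E] (g : E →ₐ[F] D) (t : D)
    (h : ∀ a, Commute (g a) t) : E[X] →ₐ[F] D :=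
  { Polynomial.eval₂RingHom' (g : E →+* D) t h with
    commutes' := by
      intro r
      change Polynomial.eval₂ (g : E →+* D) t (algebraMap F E[X] r) = _
      rw [Polynomial.algebraMap_apply, Polynomial.eval₂_C]
      exact g.commutes r }

lemma ppEv_apply {E : Type*} [Ring E] [Algebra F E] (g : E →ₐ[F] D) (t : D)
    (h : ∀ a, Commute (g a) t) (p : E[X]) : ppEv g t h p = Polynomial.eval₂ (g : E →+* D) t p := rfl

/-- homogeneous components -/
noncomputable def ppHom (f : FreeAlgebra F ℕ) : (FreeAlgebra F ℕ)[X] :=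
  FreeAlgebra.lift F (fun i => C (FreeAlgebra.ι F i) * X) f

/-- restriction to a line -/
noncomputable def ppLine (x w : ℕ → D) : FreeAlgebra F ℕ →ₐ[F] D[X] :=
  FreeAlgebra.lift F (fun i => C (x i) + C (w i) * X)

lemma ppHom_eval (f : FreeAlgebra F ℕ) (x : ℕ → D) (t : F) :
    FreeAlgebra.lift F (t • x) f =
      ∑ d ∈ Finset.range ((ppHom f).natDegree + 1), t ^ d • FreeAlgebra.lift F x ((ppHom f).coeff d) := by
  have hcomm : ∀ a, Commute (FreeAlgebra.lift F x a) (algebraMap F D t) := fun a =>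
    (Algebra.commutes t _).symm
  have h1 : FreeAlgebra.lift F (t • x) = (ppEv (FreeAlgebra.lift F x) (algebraMap F D t) hcomm).comp
      (FreeAlgebra.lift F (fun i => C (FreeAlgebra.ι F i) * X)) := by
    ext i
    simp [ppEv_apply, Polynomial.eval₂_mul_X, Algebra.smul_def, Algebra.commutes]
  rw [h1]
  change eval₂ _ _ (ppHom f) = _
  rw [Polynomial.eval₂_eq_sum_range]
  refine Finset.sum_congr rfl fun d _ => ?_
  rw [← map_pow, ← Algebra.commutes, ← Algebra.smul_def]
  rfl

lemma ppLine_eval (f : FreeAlgebra F ℕ) (x w : ℕ → D) (r : F) (N : ℕ) (hN : (ppLine x w f).natDegree < N) :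
    FreeAlgebra.lift F (x + r • w) f =
      ∑ j ∈ Finset.range N, r ^ j • (ppLine x w f).coeff j := by
  have hcomm : ∀ a, Commute (AlgHom.id F D a) (algebraMap F D r) := fun a =>
    (Algebra.commutes r _).symm
  have h1 : FreeAlgebra.lift F (x + r • w) = (ppEv (AlgHom.id F D) (algebraMap F D r) hcomm).comp
      (ppLine x w) := by
    ext i
    simp [ppLine, ppEv_apply, Polynomial.eval₂_mul_X, Algebra.smul_def, Algebra.commutes]
  rw [h1]
  change eval₂ _ _ (ppLine x w f) = _
  rw [Polynomial.eval₂_eq_sum_range' _ hN]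
  refine Finset.sum_congr rfl fun d _ => ?_
  rw [← map_pow, ← Algebra.commutes, ← Algebra.smul_def]
  rfl

lemma ppLine_natDegree (D : Type*) [DivisionRing D] [Algebra F D] (f : FreeAlgebra F ℕ) :
    ∃ N, ∀ x w : ℕ → D, (ppLine x w f).natDegree ≤ N := by
  induction f using FreeAlgebra.induction with
  | grade0 r =>
    refine ⟨0, fun x w => ?_⟩
    rw [AlgHom.commutes, Polynomial.algebraMap_apply]
    simp
  | grade1 i =>
    refine ⟨1, fun x w => ?_⟩
    simp only [ppLine, FreeAlgebra.lift_ι_apply]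
    compute_degree
  | mul a b ha hb =>
    obtain ⟨N, hN⟩ := ha
    obtain ⟨M, hM⟩ := hb
    refine ⟨N + M, fun x w => ?_⟩
    rw [map_mul]
    exact natDegree_mul_le_of_le (hN x w) (hM x w)
  | add a b ha hb =>
    obtain ⟨N, hN⟩ := ha
    obtain ⟨M, hM⟩ := hb
    refine ⟨max N M, fun x w => ?_⟩
    rw [map_add]
    exact natDegree_add_le_of_le (hN x w) (hM x w)

lemma ppLine_coeff (f : FreeAlgebra F ℕ) (x : ℕ → D) (y : D) :
    (ppLine x (fun i => x i * y - y * x i) f).coeff 0 = FreeAlgebra.lift F x f ∧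
    (ppLine x (fun i => x i * y - y * x i) f).coeff 1 =
      FreeAlgebra.lift F x f * y - y * FreeAlgebra.lift F x f := by
  induction f using FreeAlgebra.induction with
  | grade0 r =>
    rw [AlgHom.commutes, AlgHom.commutes, Polynomial.algebraMap_apply]
    simp [Polynomial.coeff_C, Algebra.commutes]
  | grade1 i =>
    simp [ppLine, Polynomial.coeff_C]
  | mul a b ha hb =>
    rw [map_mul, map_mul, Polynomial.mul_coeff_zero, Polynomial.mul_coeff_one, ha.1, ha.2, hb.1, hb.2]
    refine ⟨rfl, ?_⟩
    noncomm_ring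
  | add a b ha hb =>
    rw [map_add, map_add, Polynomial.coeff_add, Polynomial.coeff_add, ha.1, ha.2, hb.1, hb.2]
    refine ⟨rfl, ?_⟩
    noncomm_ring

lemma ppHom_zero (f : FreeAlgebra F ℕ) (x : ℕ → D) (y : D) :
    FreeAlgebra.lift F x ((ppHom f).coeff 0) * y = y * FreeAlgebra.lift F x ((ppHom f).coeff 0) := by
  induction f using FreeAlgebra.induction generalizing y with
  | grade0 r =>
    simp [ppHom, Polynomial.algebraMap_apply, Algebra.commutes]
  | grade1 i =>
    simp [ppHom]
  | mul a b ha hb =>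
    simp only [ppHom] at *
    rw [map_mul, Polynomial.mul_coeff_zero, map_mul, mul_assoc, hb, ← mul_assoc, ha, mul_assoc]
  | add a b ha hb =>
    simp only [ppHom] at *
    rw [map_add, Polynomial.coeff_add, map_add, add_mul, mul_add, ha, hb]

lemma pp_vander [Infinite F] (N : ℕ) (c : ℕ → D) (h : ∀ r : F, ∑ j ∈ Finset.range N, r ^ j • c j = 0) :
    ∀ j < N, c j = 0 := by
  intro j hj
  rw [← Module.forall_dual_apply_eq_zero_iff F]
  intro φ
  have : ∑ j ∈ Finset.range N, C (φ (c j)) * (X : F[X]) ^ j = 0 := by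
    apply Polynomial.funext
    intro r
    have := congrArg φ (h r)
    rw [map_sum, map_zero] at this
    simp only [map_smul, smul_eq_mul] at this
    simp only [eval_finsetSum, eval_mul, eval_C, eval_pow, eval_X, eval_zero]
    rw [← this]
    exact Finset.sum_congr rfl fun _ _ => mul_comm _ _
  have := congrArg (fun p => coeff p j) this
  simpa [Polynomial.finsetSum_coeff, coeff_X_pow, hj] using this

lemma pp_inf [Infinite F] (f : FreeAlgebra F ℕ)
    (hf : ∃ (x : ℕ → D) (z : D), FreeAlgebra.lift F x f * z ≠ z * FreeAlgebra.lift F x f)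
    (V : AddSubgroup D) (hV : ∀ x : ℕ → D, FreeAlgebra.lift F x f ∈ V) :
    ∃ a : D, (∃ y, a * y ≠ y * a) ∧
      ∀ x, ∃ z, (∀ y, z * y = y * z) ∧ a * x - x * a + z ∈ V := by
  classical
  set N1 := (ppHom f).natDegree + 1 with hN1
  -- noncentral degrees
  let P : ℕ → Prop := fun d => ∃ (x : ℕ → D) (z : D),
    FreeAlgebra.lift F x ((ppHom f).coeff d) * z ≠ z * FreeAlgebra.lift F x ((ppHom f).coeff d)
  have hPlt : ∀ d, P d → d < N1 := by
    rintro d ⟨x, z, h⟩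
    by_contra hlt
    rw [Polynomial.coeff_eq_zero_of_natDegree_lt (by omega)] at h
    simp at h
  have hPex : ∃ d, P d := by
    by_contra! hcon
    obtain ⟨x, z, h⟩ := hf
    apply h
    have h1 := ppHom_eval f x (1 : F)
    simp only [one_smul, one_pow] at h1
    rw [h1, Finset.sum_mul, Finset.mul_sum]
    refine Finset.sum_congr rfl fun d _ => ?_
    by_contra hh
    exact hcon d ⟨x, z, hh⟩
  obtain ⟨d, hd⟩ := hPex
  set d0 := Nat.findGreatest P N1 with hd0
  have hPd0 : P d0 := Nat.findGreatest_spec (hPlt d hd).le hd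
  have hmax : ∀ e, d0 < e → ¬ P e := by
    intro e he hPe
    exact absurd (Nat.le_findGreatest (hPlt e hPe).le hPe) (by omega)
  have hd0pos : 0 < d0 := by
    rcases Nat.eq_zero_or_pos d0 with h | h
    · rw [h] at hPd0
      obtain ⟨x, z, hh⟩ := hPd0
      exact absurd (ppHom_zero f x z) hh
    · exact h
  -- degree bounds
  choose B hB using fun d => ppLine_natDegree (F := F) D ((ppHom f).coeff d)
  set N2 := (Finset.range N1).sup B + 2 with hN2
  have hB2 : ∀ d ∈ Finset.range N1, ∀ x w : ℕ → D, (ppLine x w ((ppHom f).coeff d)).natDegree < N2 := by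
    intro d hd x w
    have := Finset.le_sup (f := B) hd
    have := hB d x w
    omega
  set I := Finset.range N1 ×ˢ Finset.range N2 with hI
  obtain ⟨κ, hκ0, hκz, hκM⟩ := pp_elim D (F := F) d0 (I.filter (fun k => k.1 ≠ k.2 * d0)) (by
    intro k hk; exact (Finset.mem_filter.mp hk).2)
  obtain ⟨x, z, hxz⟩ := hPd0
  refine ⟨FreeAlgebra.lift F x ((ppHom f).coeff d0), ⟨z, hxz⟩, ?_⟩
  intro y0
  set y : D := (κ (d0, 1))⁻¹ • y0 with hy
  set w : ℕ → D := fun i => x i * y - y * x i with hw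
  let c : ℕ × ℕ → D := fun k => (ppLine x w ((ppHom f).coeff k.1)).coeff k.2
  have hval : ∀ t r : F, ∑ k ∈ I, (t ^ k.1 * r ^ k.2) • c k ∈ V := by
    intro t r
    have h1 := hV (t • (x + r • w))
    rw [ppHom_eval] at h1
    convert h1 using 1
    rw [hI, Finset.sum_product]
    refine Finset.sum_congr rfl fun d hd => ?_
    rw [ppLine_eval _ x w r N2 (hB2 d hd x w), Finset.smul_sum]
    refine Finset.sum_congr rfl fun j _ => ?_
    rw [mul_smul]
  have h2 := hκM I c V hval 1 1
  simp only [one_pow, mul_one] at h2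
  have hcI : (d0, 1) ∈ I := by
    rw [hI, Finset.mem_product]
    refine ⟨Finset.mem_range.mpr (hPlt d0 ⟨x, z, hxz⟩), Finset.mem_range.mpr ?_⟩
    show 1 < N2
    omega
  rw [← Finset.add_sum_erase I _ hcI] at h2
  refine ⟨∑ k ∈ I.erase (d0, 1), κ k • c k, ?_, ?_⟩
  rotate_left
  · convert h2 using 2
    show _ = κ (d0, 1) • (ppLine x w ((ppHom f).coeff d0)).coeff 1
    rw [hw, (ppLine_coeff _ x y).2, hy]
    rw [mul_smul_comm, smul_mul_assoc, ← smul_sub, smul_smul, mul_inv_cancel₀ hκ0, one_smul]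
  · intro v
    rw [Finset.sum_mul, Finset.mul_sum]
    refine Finset.sum_congr rfl fun k hk => ?_
    obtain ⟨hk1, hkI⟩ := Finset.mem_erase.mp hk
    by_cases hkp : k.1 = k.2 * d0
    · suffices hc : c k * v = v * c k by
        rw [smul_mul_assoc, hc, mul_smul_comm]
      rw [hI, Finset.mem_product, Finset.mem_range, Finset.mem_range] at hkI
      -- the homogeneous component is central valued
      have hnP : ¬ P k.1 := by
        have h01 : k.2 ≠ 1 := by
          intro h
          apply hk1
          ext
          · rw [hkp, h, one_mul]
          · exact h
        rcases Nat.eq_zero_or_pos k.2 with h | h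
        · rw [hkp, h, zero_mul]
          rintro ⟨x, z, hh⟩
          exact hh (ppHom_zero f x z)
        · apply hmax
          rw [hkp]
          have : 2 * d0 ≤ k.2 * d0 := Nat.mul_le_mul_right _ (by omega)
          omega
      have hz := pp_vander (F := F) N2
        (fun j => (ppLine x w ((ppHom f).coeff k.1)).coeff j * v - v * (ppLine x w ((ppHom f).coeff k.1)).coeff j)
        (by
          intro r
          have h3 : FreeAlgebra.lift F (x + r • w) ((ppHom f).coeff k.1) * v
            = v * FreeAlgebra.lift F (x + r • w) ((ppHom f).coeff k.1) := by
            by_contra hh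
            exact hnP ⟨_, _, hh⟩
          rw [ppLine_eval _ x w r N2 (hB2 k.1 (Finset.mem_range.mpr hkI.1) x w), Finset.sum_mul,
            Finset.mul_sum, ← sub_eq_zero, ← Finset.sum_sub_distrib] at h3
          rw [← h3]
          refine Finset.sum_congr rfl fun j _ => ?_
          rw [smul_sub, smul_mul_assoc, mul_smul_comm]) k.2 hkI.2
      exact sub_eq_zero.mp hz
    · rw [hκz k (Finset.mem_filter.mpr ⟨hkI, hkp⟩)]
      simp

end infinitecenter


section finitecenter
variable {D : Type*} [DivisionRing D] {F : Type*} [Field F] [Algebra F D]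

lemma pp_finrange [Infinite D] {ι : Type*} [DecidableEq ι] (s : Finset ι) (a b : ι → D)
    (h : (Set.range fun z : D => ∑ i ∈ s, a i * z * b i).Finite) :
    ∀ z : D, ∑ i ∈ s, a i * z * b i = 0 := by
  induction s using Finset.induction_on generalizing a with
  | empty => simp
  | insert r s hr ih =>
    by_cases har : a r = 0
    · simp only [Finset.sum_insert hr, har, zero_mul, zero_add] at h ⊢
      exact ih a h
    set ψ : D → D := fun z => z * b r + ∑ i ∈ s, (a r)⁻¹ * a i * z * b i with hψ
    have hψe : ∀ z, ψ z = (a r)⁻¹ * ∑ i ∈ insert r s, a i * z * b i := by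
      intro z
      rw [Finset.sum_insert hr, mul_add, Finset.mul_sum]
      simp only [hψ, mul_assoc]
      rw [inv_mul_cancel_left₀ har]
    have hψf : (Set.range ψ).Finite := by
      refine (h.image (fun x => (a r)⁻¹ * x)).subset ?_
      rintro _ ⟨z, rfl⟩
      exact ⟨_, ⟨z, rfl⟩, (hψe z).symm⟩
    have hlin : ∀ c z, ψ (c * z) = c * ψ z := by
      intro c
      have key : ∀ z, ∑ i ∈ s, ((a r)⁻¹ * a i * c - c * ((a r)⁻¹ * a i)) * z * b i
          = ψ (c * z) - c * ψ z := by
        intro z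
        simp only [hψ, mul_add, Finset.mul_sum, sub_mul, Finset.sum_sub_distrib, mul_assoc]
        abel
      have h0 := ih (fun i => (a r)⁻¹ * a i * c - c * ((a r)⁻¹ * a i)) (by
        refine ((hψf.prod hψf).image (fun x : D × D => x.1 - c * x.2)).subset ?_
        rintro _ ⟨z, rfl⟩
        exact ⟨(ψ (c * z), ψ z), ⟨⟨_, rfl⟩, ⟨_, rfl⟩⟩, (key z).symm⟩)
      intro z
      have := h0 z
      rw [key] at this
      exact sub_eq_zero.mp this
    have h1 : ψ 1 = 0 := by
      by_contra hne
      have : Function.Injective ψ := by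
        intro x y hxy
        rw [← mul_one x, ← mul_one y, hlin, hlin] at hxy
        exact mul_right_cancel₀ hne hxy
      exact Set.infinite_range_of_injective this hψf
    intro z
    have := hlin z 1
    rw [h1, mul_zero, mul_one, hψe] at this
    exact (mul_eq_zero.mp this).resolve_left (inv_ne_zero har)

lemma pp_indep (hcen : ∀ x : D, (∀ y, x * y = y * x) → x ∈ Set.range (algebraMap F D))
    (U : Submodule F D) (hU : (1 : D) ∉ U) {ι : Type*} [DecidableEq ι] (s : Finset ι) (a b : ι → D)
    (hb : ∀ i ∈ s, b i ∈ U) : ¬ ∀ z : D, z + ∑ i ∈ s, a i * z * b i = 0 := by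
  induction hn : s.card generalizing s a with
  | zero =>
    intro h
    rw [Finset.card_eq_zero] at hn
    subst hn
    simpa using h 1
  | succ n ih =>
    intro h
    by_cases hc : ∀ i ∈ s, ∀ y, a i * y = y * a i
    · apply hU
      have h1 := h 1
      rw [eq_neg_of_add_eq_zero_left h1]
      apply U.neg_mem
      apply U.sum_mem
      intro i hi
      obtain ⟨r, hr⟩ := hcen _ (hc i hi)
      rw [mul_one, ← hr, ← Algebra.smul_def]
      exact U.smul_mem _ (hb i hi)
    · push Not at hc
      obtain ⟨k, hk, c, hkc⟩ := hc
      set e : ι → D := fun i => a i * c - c * a i with he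
      have hek : e k ≠ 0 := sub_ne_zero.mpr hkc
      have h2 : ∀ z, ∑ i ∈ s, e i * z * b i = 0 := by
        intro z
        have h3 := h (c * z)
        have h4 := congrArg (fun x => c * x) (h z)
        simp only [mul_add, Finset.mul_sum, mul_zero] at h4
        rw [← sub_eq_zero.mpr (h3.trans h4.symm)]
        simp only [he, sub_mul, Finset.sum_sub_distrib, mul_assoc]
        abel
      refine ih (s.erase k) (fun i => a i - a k * (e k)⁻¹ * e i)
        (fun i hi => hb i (Finset.mem_of_mem_erase hi)) ?_ ?_
      · rw [Finset.card_erase_of_mem hk, hn]; rfl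
      · intro z
        have h3 := h z
        have h4 := h2 z
        rw [← Finset.add_sum_erase s _ hk] at h3 h4
        have h5 : a k * z * b k = - ∑ i ∈ s.erase k, a k * (e k)⁻¹ * e i * z * b i := by
          have : a k * (e k)⁻¹ * (e k * z * b k + ∑ i ∈ s.erase k, e i * z * b i) = 0 := by
            rw [h4, mul_zero]
          rw [mul_add, Finset.mul_sum] at this
          simp only [mul_assoc] at this ⊢
          rw [inv_mul_cancel_left₀ hek] at this
          exact eq_neg_of_add_eq_zero_left this
        rw [h5] at h3
        rw [← h3]
        simp only [sub_mul, Finset.sum_sub_distrib]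
        abel

/-- two-sided multiplications with coefficients in `U` -/
noncomputable def ppT (U : Submodule F D) : Submodule F (D →ₗ[F] D) :=
  Submodule.span F (Set.range fun p : U × U =>
    (LinearMap.mulLeft F (p.1 : D)).comp (LinearMap.mulRight F (p.2 : D)))

lemma pp_G1 [Finite F] [Infinite D] (U : Submodule F D) (hU : Finite U) :
    Finite (ppT U) ∧ ∃ v : D, ∀ φ ∈ ppT U, φ v ∈ U → φ = 0 := by
  classical
  have hfin : Finite (ppT U) := by
    have : Module.Finite F (ppT U) := Module.Finite.span_of_finite F (Set.finite_range _)
    exact Module.finite_of_finite F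
  refine ⟨hfin, ?_⟩
  by_contra! hcon
  have : Fintype (ppT U) := Fintype.ofFinite _
  have : Fintype U := Fintype.ofFinite _
  have hcov : (⋃ φ ∈ (Finset.univ : Finset (ppT U)).filter (fun φ => φ ≠ 0),
      ((U.comap φ.1 : Submodule F D) : Set D)) = Set.univ := by
    rw [Set.eq_univ_iff_forall]
    intro v
    obtain ⟨φ, h1, h2, h3⟩ := hcon v
    simp only [Set.mem_iUnion]
    refine ⟨⟨φ, h1⟩, ?_, ?_⟩
    · simp only [Finset.mem_filter, Finset.mem_univ, true_and, ne_eq]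
      intro h; exact h3 (congrArg Subtype.val h)
    · exact h2
  obtain ⟨φ, hφ, hidx⟩ := Submodule.exists_finiteIndex_of_cover hcov
  apply (Finset.mem_filter.mp hφ).2
  ext z
  obtain ⟨c, hc⟩ := (Submodule.mem_span_range_iff_exists_fun F).mp φ.2
  have hform : ∀ z, φ.1 z = ∑ p : U × U, (c p • (p.1 : D)) * z * p.2 := by
    intro z
    rw [← hc]
    simp [LinearMap.sum_apply, mul_assoc]
  rw [hform]
  refine pp_finrange Finset.univ (fun p : U × U => c p • (p.1 : D)) (fun p => (p.2 : D)) ?_ z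
  simp_rw [← hform]
  set H := (U.comap φ.1).toAddSubgroup
  have : Finite (D ⧸ H) := AddSubgroup.finite_quotient_of_finiteIndex
  refine (Set.finite_range (fun p : (D ⧸ H) × U => φ.1 (Quotient.out p.1) + p.2)).subset ?_
  rintro _ ⟨z, rfl⟩
  have hz : -(Quotient.out (z : D ⧸ H)) + z ∈ H := by
    rw [← QuotientAddGroup.eq]
    exact Quotient.out_eq _
  have hz' : φ.1 (-(Quotient.out (z : D ⧸ H)) + z) ∈ U := hz
  refine ⟨((z : D ⧸ H), ⟨_, hz'⟩), ?_⟩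
  simp

end finitecenter


section finitecenter2
variable {D : Type*} [DivisionRing D] {F : Type*} [Field F] [Algebra F D]

lemma pp_split {d : ℕ} {p : List ℕ} (hp : p.Nodup) (hlt : ∀ i ∈ p, i < d + 1) (hd : d ∈ p) :
    ∃ s t, p = s ++ d :: t ∧ s.Nodup ∧ t.Nodup ∧ (∀ i ∈ s, i < d) ∧ (∀ i ∈ t, i < d) := by
  obtain ⟨s, t, rfl⟩ := List.append_of_mem hd
  rw [List.nodup_append'] at hp
  obtain ⟨h1, h2, h3⟩ := hp
  rw [List.nodup_cons] at h2
  refine ⟨s, t, rfl, h1, h2.2, ?_, ?_⟩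
  · intro i hi
    have := hlt i (by simp [hi])
    have hne : i ≠ d := by
      rintro rfl
      exact h3 hi (by simp)
    omega
  · intro i hi
    have := hlt i (by simp [hi])
    have hne : i ≠ d := by
      rintro rfl
      exact h2.1 hi
    omega

lemma pp_map_update {d : ℕ} (y : ℕ → D) (v : D) {s : List ℕ} (h : ∀ i ∈ s, i < d) :
    s.map (Function.update y d v) = s.map y := by
  apply List.map_congr_left
  intro i hi
  rw [Function.update_of_ne (h i hi).ne]

lemma pp_generic [Finite F] [Infinite D]
    (hcen : ∀ x : D, (∀ y, x * y = y * x) → x ∈ Set.range (algebraMap F D)) (d : ℕ) :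
    ∃ (y : ℕ → D) (U U' : Submodule F D), Finite U ∧ (1 : D) ∈ U ∧ U' ≤ U ∧ (1 : D) ∉ U' ∧
      (∀ p : List ℕ, p.Nodup → (∀ i ∈ p, i < d) →
        (p.map y).prod ∈ U ∧ (p ≠ [] → (p.map y).prod ∈ U')) ∧
      ∀ (J : Finset (List ℕ)) (γ : List ℕ → F), (∀ p ∈ J, p.Perm (List.range d)) →
        List.range d ∈ J → γ (List.range d) ≠ 0 →
        ∑ p ∈ J, γ p • (p.map y).prod ≠ 0 ∧
        (0 < d → ∀ r : F, ∑ p ∈ J, γ p • (p.map y).prod ≠ algebraMap F D r) := by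
  classical
  induction d with
  | zero =>
    refine ⟨fun _ => 0, Submodule.span F {1}, ⊥, ?_, Submodule.mem_span_singleton_self _, bot_le,
      by simp, ?_, ?_⟩
    · have : Module.Finite F (Submodule.span F {(1 : D)}) :=
        Module.Finite.span_of_finite F (Set.finite_singleton _)
      exact Module.finite_of_finite F
    · intro p _ hp
      have : p = [] := List.eq_nil_iff_forall_not_mem.mpr fun i hi => absurd (hp i hi) (by omega)
      subst this
      simp [Submodule.mem_span_singleton_self]
    · intro J γ hJ hm hγ
      have hJ' : J = {[]} := by
        ext p
        simp only [Finset.mem_singleton]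
        constructor
        · intro h; simpa using hJ p h
        · rintro rfl; exact hm
      subst hJ'
      simp at hγ
      simp [hγ]
  | succ d ih =>
    obtain ⟨y, U, U', hUf, h1U, hUU, h1U', hmon, hB⟩ := ih
    obtain ⟨hTf, v, hv⟩ := pp_G1 U hUf
    set W : Submodule F D := (ppT U).map (LinearMap.applyₗ v) with hW
    have hWf : Finite W := by
      have : Module.Finite F (ppT U) := Module.Finite.of_finite
      have : Module.Finite F W := Module.Finite.map _ _
      exact Module.finite_of_finite F
    have hUWf : Finite (U ⊔ W : Submodule F D) := by
      have : Module.Finite F U := Module.Finite.of_finite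
      have : Module.Finite F W := Module.Finite.of_finite
      have : Module.Finite F (U ⊔ W : Submodule F D) := Submodule.finite_sup _ _
      exact Module.finite_of_finite F
    have hmem : ∀ a ∈ U, ∀ b ∈ U, (LinearMap.mulLeft F a).comp (LinearMap.mulRight F b) ∈ ppT U :=
      fun a ha b hb => Submodule.subset_span ⟨(⟨a, ha⟩, ⟨b, hb⟩), rfl⟩
    have hmemW : ∀ a ∈ U, ∀ b ∈ U, a * v * b ∈ W := by
      intro a ha b hb
      refine ⟨_, hmem a ha b hb, ?_⟩
      simp [mul_assoc]
    have hprod : ∀ s t : List ℕ, (∀ i ∈ s, i < d) → (∀ i ∈ t, i < d) →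
        ((s ++ d :: t).map (Function.update y d v)).prod = (s.map y).prod * v * (t.map y).prod := by
      intro s t hs ht
      rw [List.map_append, List.map_cons, List.prod_append, List.prod_cons, pp_map_update y v hs,
        pp_map_update y v ht, Function.update_self, mul_assoc]
    refine ⟨Function.update y d v, U ⊔ W, U' ⊔ W, hUWf, Submodule.mem_sup_left h1U,
      sup_le_sup_right hUU _, ?_, ?_, ?_⟩
    · intro h
      obtain ⟨u, hu, w, ⟨φ, hφ, rfl⟩, hw⟩ := Submodule.mem_sup.mp h
      have h0 : φ = 0 := by
        apply hv φ hφ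
        have : φ v = 1 - u := by rw [← hw]; simp
        rw [this]
        exact U.sub_mem h1U (hUU hu)
      subst h0
      apply h1U'
      rw [← hw]
      simpa using hu
    · intro p hp hlt
      by_cases hd : d ∈ p
      · obtain ⟨s, t, rfl, hs, ht, hs', ht'⟩ := pp_split hp hlt hd
        rw [hprod s t hs' ht']
        have := hmemW _ (hmon s hs hs').1 _ (hmon t ht ht').1
        exact ⟨Submodule.mem_sup_right this, fun _ => Submodule.mem_sup_right this⟩
      · have hlt' : ∀ i ∈ p, i < d := by
          intro i hi
          have h1 := hlt i hi
          have h2 : i ≠ d := by rintro rfl; exact hd hi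
          omega
        rw [pp_map_update y v hlt']
        exact ⟨Submodule.mem_sup_left (hmon p hp hlt').1,
          fun h => Submodule.mem_sup_left ((hmon p hp hlt').2 h)⟩
    · intro J γ hJ hm hγ
      have hsp : ∀ p : List ℕ, ∃ s t, p ∈ J → p = s ++ d :: t ∧ s.Nodup ∧ t.Nodup ∧
          (∀ i ∈ s, i < d) ∧ (∀ i ∈ t, i < d) := by
        intro p
        by_cases hp : p ∈ J
        · have hperm := hJ p hp
          obtain ⟨s, t, h⟩ := pp_split (hperm.nodup_iff.mpr List.nodup_range)
            (fun i hi => List.mem_range.mp (hperm.mem_iff.mp hi))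
            (hperm.mem_iff.mpr (List.mem_range.mpr (Nat.lt_succ_self d)))
          exact ⟨s, t, fun _ => h⟩
        · exact ⟨[], [], fun h => absurd h hp⟩
      choose s t hst using hsp
      suffices key : ∑ p ∈ J, γ p • (p.map (Function.update y d v)).prod ∉ U by
        constructor
        · intro h; rw [h] at key; exact key U.zero_mem
        · intro _ r h
          rw [h, Algebra.algebraMap_eq_smul_one] at key
          exact key (U.smul_mem _ h1U)
      intro hsum
      set φ : D →ₗ[F] D := ∑ p ∈ J, γ p • (LinearMap.mulLeft F ((s p).map y).prod).comp
        (LinearMap.mulRight F ((t p).map y).prod) with hφ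
      have hφT : φ ∈ ppT U := by
        refine Submodule.sum_mem _ fun p hp => Submodule.smul_mem _ _ ?_
        obtain ⟨_, h2, h3, h4, h5⟩ := hst p hp
        exact hmem _ (hmon _ h2 h4).1 _ (hmon _ h3 h5).1
      have hφz : ∀ z, φ z = ∑ p ∈ J, γ p • (((s p).map y).prod * z * ((t p).map y).prod) := by
        intro z
        simp [hφ, LinearMap.sum_apply, mul_assoc]
      have hφ0 : φ = 0 := by
        apply hv φ hφT
        rw [hφz]
        convert hsum using 1
        refine Finset.sum_congr rfl fun p hp => ?_
        obtain ⟨h1, h2, h3, h4, h5⟩ := hst p hp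
        conv_rhs => rw [h1, hprod _ _ h4 h5]
        rw [← h1]
      set J0 := J.filter (fun p => t p = []) with hJ0
      set a0 : D := ∑ p ∈ J0, γ p • ((s p).map y).prod with ha0
      have hJ0s : ∀ p ∈ J0, p = s p ++ [d] := by
        intro p hp
        obtain ⟨h1, h2⟩ := Finset.mem_filter.mp hp
        have := (hst p h1).1
        rwa [h2] at this
      have ha0ne : a0 ≠ 0 := by
        have hinj : Set.InjOn s J0 := by
          intro p hp q hq h
          rw [hJ0s p hp, hJ0s q hq, h]
        have h1 : a0 = ∑ q ∈ J0.image s, γ (q ++ [d]) • (q.map y).prod := by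
          rw [Finset.sum_image hinj, ha0]
          refine Finset.sum_congr rfl fun p hp => ?_
          rw [← hJ0s p hp]
        rw [h1]
        have hr := (hst _ hm)
        have htr : t (List.range (d + 1)) = [] := by
          by_contra hne
          have h2 := hr.1
          have h3 : (List.range (d+1)).getLast? = (t (List.range (d + 1))).getLast? := by
            conv_lhs => rw [h2]
            rw [List.getLast?_append_of_ne_nil _ (by simp)]
            cases hh : t (List.range (d + 1)) with
            | nil => exact absurd hh hne
            | cons a b => simp [List.getLast?_cons_cons]
          rw [List.range_succ, List.getLast?_concat] at h3
          have h4 := List.mem_of_getLast? h3.symm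
          rw [← List.range_succ] at h4
          exact absurd (hr.2.2.2.2 d h4) (by omega)
        have hmr : List.range (d + 1) ∈ J0 := Finset.mem_filter.mpr ⟨hm, htr⟩
        have hsr : s (List.range (d + 1)) = List.range d := by
          have := hJ0s _ hmr
          rw [List.range_succ] at this
          rw [List.range_succ]
          exact (List.append_cancel_right this).symm
        refine (hB (J0.image s) (fun q => γ (q ++ [d])) ?_ ?_ ?_).1
        · intro q hq
          obtain ⟨p, hp, rfl⟩ := Finset.mem_image.mp hq
          have h2 := hJ p (Finset.mem_filter.mp hp).1
          rw [hJ0s p hp, List.range_succ] at h2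
          exact (List.perm_append_right_iff _).mp h2
        · exact Finset.mem_image.mpr ⟨_, hmr, hsr⟩
        · show γ (List.range d ++ [d]) ≠ 0
          rw [← List.range_succ]; exact hγ
      refine pp_indep hcen U' h1U' (J.filter (fun p => ¬ t p = []))
        (fun p => a0⁻¹ * (γ p • ((s p).map y).prod)) (fun p => ((t p).map y).prod) ?_ ?_
      · intro p hp
        obtain ⟨h1, h2⟩ := Finset.mem_filter.mp hp
        obtain ⟨_, _, h3, _, h5⟩ := hst p h1
        exact (hmon _ h3 h5).2 h2
      · intro z
        have h1 := hφz z
        rw [hφ0, LinearMap.zero_apply, ← Finset.sum_filter_add_sum_filter_not J (fun p => t p = [])] at h1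
        have h2 : ∑ p ∈ J0, γ p • (((s p).map y).prod * z * ((t p).map y).prod) = a0 * z := by
          rw [ha0, Finset.sum_mul]
          refine Finset.sum_congr rfl fun p hp => ?_
          rw [(Finset.mem_filter.mp hp).2]
          simp
        rw [h2] at h1
        have h3 := congrArg (fun x => a0⁻¹ * x) h1
        simp only [mul_zero, mul_add, Finset.mul_sum] at h3
        rw [inv_mul_cancel_left₀ ha0ne] at h3
        rw [h3]
        congr 1
        refine Finset.sum_congr rfl fun p hp => ?_
        simp only [smul_mul_assoc, mul_assoc, mul_smul_comm]

end finitecenter2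


section finitecenter3
variable {D : Type*} [DivisionRing D] {F : Type*} [Field F] [Algebra F D]

lemma pp_expand (D : Type*) [DivisionRing D] [Algebra F D] (f : FreeAlgebra F ℕ) :
    ∃ c : List ℕ →₀ F, ∀ x : ℕ → D,
      FreeAlgebra.lift F x f = ∑ l ∈ c.support, c l • (l.map x).prod := by
  set mono : List ℕ → ((ℕ → D) → D) := fun l x => (l.map x).prod with hmono
  have key : (fun x : ℕ → D => FreeAlgebra.lift F x f) ∈ Submodule.span F (Set.range mono) := by
    induction f using FreeAlgebra.induction with
    | grade0 r =>
      have : (fun x : ℕ → D => FreeAlgebra.lift F x (algebraMap F (FreeAlgebra F ℕ) r)) = r • mono [] := by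
        funext x
        simp [hmono, Algebra.smul_def]
      rw [this]
      exact Submodule.smul_mem _ _ (Submodule.subset_span ⟨_, rfl⟩)
    | grade1 i =>
      apply Submodule.subset_span
      refine ⟨[i], ?_⟩
      funext x
      simp [hmono]
    | mul a b ha hb =>
      have h := Submodule.mul_mem_mul ha hb
      rw [Submodule.span_mul_span] at h
      have h2 : (fun x : ℕ → D => FreeAlgebra.lift F x (a * b)) =
          (fun x : ℕ → D => FreeAlgebra.lift F x a) * (fun x : ℕ → D => FreeAlgebra.lift F x b) := by
        funext x; simp
      rw [h2]
      refine Submodule.span_mono ?_ h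
      rintro _ ⟨_, ⟨l, rfl⟩, _, ⟨m, rfl⟩, rfl⟩
      refine ⟨l ++ m, ?_⟩
      funext x
      simp [hmono]
    | add a b ha hb =>
      have h2 : (fun x : ℕ → D => FreeAlgebra.lift F x (a + b)) =
          (fun x : ℕ → D => FreeAlgebra.lift F x a) + (fun x : ℕ → D => FreeAlgebra.lift F x b) := by
        funext x; simp
      rw [h2]
      exact Submodule.add_mem _ ha hb
  obtain ⟨c, hc⟩ := Finsupp.mem_span_range_iff_exists_finsupp.mp key
  refine ⟨c, fun x => ?_⟩
  have := congrFun hc x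
  rw [← this, Finsupp.sum, Finset.sum_apply]
  rfl

/-- words over the letters below `d` lying above a given word -/
def ppJ (h : ℕ → ℕ) (d : ℕ) : List ℕ → Finset (List ℕ)
  | [] => {[]}
  | i :: l => ((((Finset.range d).filter (fun k => h k = i)) ×ˢ ppJ h d l)).image
      (fun p => p.1 :: p.2)

lemma pp_memJ (h : ℕ → ℕ) (d : ℕ) (l w : List ℕ) :
    w ∈ ppJ h d l ↔ w.map h = l ∧ ∀ k ∈ w, k < d := by
  induction l generalizing w with
  | nil =>
    simp only [ppJ, Finset.mem_singleton, List.map_eq_nil_iff]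
    constructor
    · rintro rfl; simp
    · exact fun h => h.1
  | cons i l ih =>
    simp only [ppJ, Finset.mem_image, Finset.mem_product, Finset.mem_filter, Finset.mem_range, ih,
      Prod.exists]
    constructor
    · rintro ⟨a, b, ⟨⟨h1, h2⟩, h3, h4⟩, rfl⟩
      simp [h1, h2, h3]
      exact h4
    · rintro ⟨h1, h2⟩
      cases w with
      | nil => simp at h1
      | cons a b =>
        simp only [List.map_cons, List.cons.injEq] at h1
        exact ⟨a, b, ⟨⟨h2 a (by simp), h1.1⟩, h1.2, fun k hk => h2 k (by simp [hk])⟩, rfl⟩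

lemma pp_sumJ (h : ℕ → ℕ) (d : ℕ) (y : ℕ → D) (l : List ℕ) :
    (l.map (fun i => ∑ k ∈ (Finset.range d).filter (fun k => h k = i), y k)).prod =
      ∑ w ∈ ppJ h d l, (w.map y).prod := by
  induction l with
  | nil => simp [ppJ]
  | cons i l ih =>
    rw [List.map_cons, List.prod_cons, ih, ppJ, Finset.sum_image, Finset.sum_product,
      Finset.sum_mul_sum]
    · simp
    · rintro ⟨a, b⟩ _ ⟨a', b'⟩ _ hh
      simpa using hh

lemma pp_peel (V : AddSubgroup D) (J : Finset (List ℕ)) (γ : List ℕ → F)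
    (hV : ∀ y : ℕ → D, ∑ w ∈ J, γ w • (w.map y).prod ∈ V) (d : ℕ) :
    ∀ y : ℕ → D, ∑ w ∈ J.filter (fun w => ∀ k < d, k ∈ w), γ w • (w.map y).prod ∈ V := by
  induction d with
  | zero => simpa using hV
  | succ d ih =>
    intro y
    set J1 := J.filter (fun w => ∀ k < d, k ∈ w) with hJ1
    have e : J.filter (fun w => ∀ k < d + 1, k ∈ w) = J1.filter (fun w => d ∈ w) := by
      rw [hJ1, Finset.filter_filter]
      refine Finset.filter_congr fun w _ => ?_
      constructor
      · exact fun h => ⟨fun k hk => h k (by omega), h d (by omega)⟩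
      · rintro ⟨h1, h2⟩ k hk
        rcases Nat.lt_succ_iff_lt_or_eq.mp hk with h | rfl
        · exact h1 k h
        · exact h2
    rw [e]
    have h1 := ih y
    have h2 := ih (Function.update y d 0)
    rw [← Finset.sum_filter_add_sum_filter_not J1 (fun w => d ∈ w)] at h1 h2
    have h3 : ∑ w ∈ J1.filter (fun w => d ∈ w), γ w • (w.map (Function.update y d 0)).prod = 0 := by
      refine Finset.sum_eq_zero fun w hw => ?_
      rw [List.prod_eq_zero, smul_zero]
      rw [List.mem_map]
      exact ⟨d, (Finset.mem_filter.mp hw).2, by simp⟩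
    have h4 : ∑ w ∈ J1.filter (fun w => ¬ d ∈ w), γ w • (w.map (Function.update y d 0)).prod =
        ∑ w ∈ J1.filter (fun w => ¬ d ∈ w), γ w • (w.map y).prod := by
      refine Finset.sum_congr rfl fun w hw => ?_
      congr 2
      apply List.map_congr_left
      intro i hi
      rw [Function.update_of_ne]
      rintro rfl
      exact (Finset.mem_filter.mp hw).2 hi
    rw [h3, h4, zero_add] at h2
    have := V.sub_mem h1 h2
    rwa [add_sub_cancel_right] at this

lemma pp_deriv (y : ℕ → D) (z : D) (w : List ℕ) (hw : w.Nodup) :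
    (w.map y).prod * z - z * (w.map y).prod =
      ∑ k ∈ w.toFinset, (w.map (Function.update y k (y k * z - z * y k))).prod := by
  induction w with
  | nil => simp
  | cons k w ih =>
    rw [List.nodup_cons] at hw
    have hk : k ∉ w.toFinset := by simpa using hw.1
    rw [List.toFinset_cons, Finset.sum_insert hk]
    have h1 : w.map (Function.update y k (y k * z - z * y k)) = w.map y := by
      apply List.map_congr_left
      intro i hi
      rw [Function.update_of_ne]
      rintro rfl; exact hw.1 hi
    have h2 : ∑ j ∈ w.toFinset, ((k :: w).map (Function.update y j (y j * z - z * y j))).prod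
        = y k * ((w.map y).prod * z - z * (w.map y).prod) := by
      rw [ih hw.2, Finset.mul_sum]
      refine Finset.sum_congr rfl fun j hj => ?_
      rw [List.map_cons, List.prod_cons, Function.update_of_ne]
      rintro rfl; exact hk hj
    rw [h2, List.map_cons, List.map_cons, List.prod_cons, List.prod_cons, h1, Function.update_self]
    noncomm_ring

lemma pp_fin [Finite F] [Infinite D]
    (hcen : ∀ x : D, (∀ y, x * y = y * x) → x ∈ Set.range (algebraMap F D))
    (f : FreeAlgebra F ℕ)
    (hf : ∃ (x : ℕ → D) (z : D), FreeAlgebra.lift F x f * z ≠ z * FreeAlgebra.lift F x f)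
    (V : AddSubgroup D) (hV : ∀ x : ℕ → D, FreeAlgebra.lift F x f ∈ V) :
    ∃ a : D, (∃ y, a * y ≠ y * a) ∧
      ∀ x, ∃ z, (∀ y, z * y = y * z) ∧ a * x - x * a + z ∈ V := by
  classical
  obtain ⟨c, hc⟩ := pp_expand (F := F) D f
  have hne : c.support.Nonempty := by
    rw [Finset.nonempty_iff_ne_empty]
    intro he
    obtain ⟨x, z, h⟩ := hf
    rw [hc, he] at h
    simp at h
  obtain ⟨l0, hl0, hmax⟩ := Finset.exists_max_image c.support List.length hne
  set d := l0.length with hd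
  have hdpos : 0 < d := by
    by_contra h0
    obtain ⟨x, z, h⟩ := hf
    apply h
    rw [hc, Finset.sum_mul, Finset.mul_sum]
    refine Finset.sum_congr rfl fun l hl => ?_
    have h1 := hmax l hl
    have : l = [] := List.length_eq_zero_iff.mp (by omega)
    subst this
    simp
  set h : ℕ → ℕ := fun k => l0.getD k 0 with hh
  have hl0r : (List.range d).map h = l0 := by
    apply List.ext_getElem
    · simp [hd]
    · intro i h1 h2
      simp [hh, List.getD_eq_getElem?_getD, h2]
  set J : Finset (List ℕ) := c.support.biUnion (ppJ h d) with hJ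
  have hmemJ : ∀ w, w ∈ J ↔ w.map h ∈ c.support ∧ ∀ k ∈ w, k < d := by
    intro w
    simp only [hJ, Finset.mem_biUnion, pp_memJ]
    constructor
    · rintro ⟨l, h1, rfl, h3⟩; exact ⟨h1, h3⟩
    · rintro ⟨h1, h2⟩; exact ⟨_, h1, rfl, h2⟩
  have hV1 : ∀ y : ℕ → D, ∑ w ∈ J, c (w.map h) • (w.map y).prod ∈ V := by
    intro y
    have h1 := hV (fun i => ∑ k ∈ (Finset.range d).filter (fun k => h k = i), y k)
    rw [hc] at h1
    convert h1 using 1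
    rw [hJ, Finset.sum_biUnion]
    · refine Finset.sum_congr rfl fun l _ => ?_
      rw [pp_sumJ, Finset.smul_sum]
      refine Finset.sum_congr rfl fun w hw => ?_
      rw [((pp_memJ h d l w).mp hw).1]
    · intro l _ l' _ hll
      rw [Function.onFun, Finset.disjoint_left]
      intro w hw hw'
      exact hll (((pp_memJ h d l w).mp hw).1.symm.trans ((pp_memJ h d l' w).mp hw').1)
  have hV2 := pp_peel V J (fun w => c (w.map h)) hV1 d
  set J' := J.filter (fun w => ∀ k < d, k ∈ w) with hJ'
  have hperm : ∀ p ∈ J', p.Perm (List.range d) := by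
    intro p hp
    obtain ⟨h1, h2⟩ := Finset.mem_filter.mp hp
    have h3 := hmax _ ((hmemJ p).mp h1).1
    rw [List.length_map] at h3
    have h4 : (List.range d).Subperm p :=
      List.subperm_of_subset List.nodup_range (fun k hk => h2 k (List.mem_range.mp hk))
    exact (h4.perm_of_length_le (by simpa using h3)).symm
  obtain ⟨y, U, U', -, -, -, -, -, hB⟩ := pp_generic (F := F) hcen d
  have hB' := hB J' (fun w => c (w.map h)) hperm
    (by
      refine Finset.mem_filter.mpr ⟨(hmemJ _).mpr ⟨?_, ?_⟩, ?_⟩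
      · rw [hl0r]; exact hl0
      · intro k hk; exact List.mem_range.mp hk
      · intro k hk; exact List.mem_range.mpr hk)
    (by
      show c ((List.range d).map h) ≠ 0
      rw [hl0r]; exact Finsupp.mem_support_iff.mp hl0)
  refine ⟨∑ w ∈ J', c (w.map h) • (w.map y).prod, ?_, ?_⟩
  · by_contra! hcon
    obtain ⟨r, hr⟩ := hcen _ hcon
    exact hB'.2 hdpos r hr.symm
  · intro z
    refine ⟨0, by simp, ?_⟩
    have : (∑ w ∈ J', c (w.map h) • (w.map y).prod) * z - z * (∑ w ∈ J', c (w.map h) • (w.map y).prod)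
        = ∑ k ∈ Finset.range d, ∑ w ∈ J', c (w.map h) •
            (w.map (Function.update y k (y k * z - z * y k))).prod := by
      rw [Finset.sum_mul, Finset.mul_sum, ← Finset.sum_sub_distrib, Finset.sum_comm]
      refine Finset.sum_congr rfl fun w hw => ?_
      have hp := hperm w hw
      rw [smul_mul_assoc, mul_smul_comm, ← smul_sub,
        pp_deriv y z w (hp.nodup_iff.mpr List.nodup_range), Finset.smul_sum]
      refine Finset.sum_congr ?_ fun _ _ => rfl
      ext k
      rw [List.mem_toFinset, hp.mem_iff, List.mem_range, Finset.mem_range]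
    rw [add_zero, this]
    exact V.sum_mem fun k _ => hV2 _

end finitecenter3


section matrixcase
variable {D : Type*} [DivisionRing D] {ι : Type*} [Fintype ι] [DecidableEq ι]
open Matrix

/-- conjugation invariance -/
def PPInv {R : Type*} [Ring R] (V : AddSubgroup R) : Prop :=
  ∀ u w : R, u * w = 1 → w * u = 1 → ∀ v ∈ V, u * v * w ∈ V

lemma pp_single_mul (k l : ι) (x : D) (v : Matrix ι ι D) (a b : ι) :
    (single k l x * v) a b = if a = k then x * v l b else 0 := by
  split_ifs with h
  · subst h; simp
  · simp [h]

lemma pp_mul_single (k l : ι) (x : D) (v : Matrix ι ι D) (a b : ι) :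
    (v * single k l x) a b = if b = l then v a k * x else 0 := by
  split_ifs with h
  · subst h; simp
  · simp [h]

/-- transvection difference -/
def ppd (k l : ι) (x : D) (v : Matrix ι ι D) : Matrix ι ι D :=
  single k l x * v - v * single k l x - single k l x * v * single k l x

lemma ppd_apply (k l : ι) (x : D) (v : Matrix ι ι D) (a b : ι) :
    ppd k l x v a b = (if a = k then x * v l b else 0) - (if b = l then v a k * x else 0)
      - (if b = l then (if a = k then x * v l k else 0) * x else 0) := by
  simp only [ppd, Matrix.sub_apply, pp_single_mul, pp_mul_single]

lemma ppd_mem {V : AddSubgroup (Matrix ι ι D)} (hV : PPInv V) {k l : ι} (hkl : k ≠ l) (x : D)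
    {v : Matrix ι ι D} (hv : v ∈ V) : ppd k l x v ∈ V := by
  have hE : single k l x * single k l x = (0 : Matrix ι ι D) := by
    simp [hkl.symm]
  have h := hV (1 + single k l x) (1 - single k l x) (by rw [add_mul, mul_sub, mul_sub, hE]; simp)
    (by rw [sub_mul, mul_add, mul_add, hE]; simp) v hv
  have h2 := V.sub_mem h hv
  convert h2 using 1
  rw [ppd]
  noncomm_ring

/-- diagonal conjugation difference -/
lemma pps_mem {V : AddSubgroup (Matrix ι ι D)} (hV : PPInv V) (i : ι) {s : D} (hs : s ≠ 0)
    {v : Matrix ι ι D} (hv : v ∈ V) :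
    (Matrix.of fun a b => (if a = i then s else 1) * v a b * (if b = i then s⁻¹ else 1)) ∈ V := by
  have h := hV (diagonal fun a => if a = i then s else 1) (diagonal fun a => if a = i then s⁻¹ else 1)
    (by
      rw [diagonal_mul_diagonal, ← diagonal_one]
      congr 1; funext a; split_ifs <;> simp [hs])
    (by
      rw [diagonal_mul_diagonal, ← diagonal_one]
      congr 1; funext a; split_ifs <;> simp [hs]) v hv
  convert h using 1
  ext a b
  simp only [of_apply, diagonal_mul, mul_diagonal]

lemma pp_perm_mem {V : AddSubgroup (Matrix ι ι D)} (hV : PPInv V) (σ : Equiv.Perm ι)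
    {v : Matrix ι ι D} (hv : v ∈ V) : v.submatrix σ σ ∈ V := by
  have h := hV (σ.permMatrix D) (σ⁻¹.permMatrix D)
    (by rw [← permMatrix_mul]; simp) (by rw [← permMatrix_mul]; simp) v hv
  convert h using 1
  ext a b
  simp [Equiv.Perm.permMatrix, PEquiv.toMatrix_toPEquiv_mul, PEquiv.mul_toMatrix_toPEquiv, Equiv.Perm.inv_def]

lemma pp_off {V A : AddSubgroup (Matrix ι ι D)} (hV : PPInv V) (hA : PPInv A)
    (hVA : ∀ v ∈ V, ∀ w ∈ V, v * w ∈ A) {i j : ι} (hij : i ≠ j) {x : D} (hx : x ≠ 0)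
    (h : single i j x ∈ V) : A = ⊤ := by
  have h1 : ∀ y : D, single i j y ∈ V := by
    intro y
    by_cases hy : y = 0
    · subst hy; rw [single_zero]; exact V.zero_mem
    have h2 := pps_mem hV i (s := y * x⁻¹) (mul_ne_zero hy (inv_ne_zero hx)) h
    convert h2 using 1
    ext a b
    simp only [of_apply, single_apply]
    by_cases ha : i = a
    · by_cases hb : j = b
      · subst ha hb
        simp [hij.symm, hx]
      · simp [hb]
    · simp [ha]
  have h2 : ∀ k l : ι, k ≠ l → ∀ y : D, single k l y ∈ V := by
    intro k l hkl y
    set j' := Equiv.swap i k j with hj'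
    have hj'k : j' ≠ k := by
      intro h
      have : Equiv.swap i k j = Equiv.swap i k i := by rw [Equiv.swap_apply_left]; exact h
      exact hij ((Equiv.swap i k).injective this).symm
    set σ : Equiv.Perm ι := Equiv.swap i k * Equiv.swap j' l with hσ
    have hk : σ k = i := by
      rw [hσ, Equiv.Perm.mul_apply, Equiv.swap_apply_of_ne_of_ne hj'k.symm hkl, Equiv.swap_apply_right]
    have hl : σ l = j := by
      rw [hσ, Equiv.Perm.mul_apply, Equiv.swap_apply_right, hj', Equiv.swap_apply_self]
    have h3 := pp_perm_mem hV σ (h1 y)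
    convert h3 using 1
    ext a b
    simp only [submatrix_apply, single_apply, ← hk, ← hl, σ.injective.eq_iff]
  have hdiag : ∀ k : ι, ∀ y : D, single k k y ∈ A := by
    intro k y
    obtain ⟨l, hl⟩ : ∃ l, k ≠ l := by
      by_cases h : k = i
      · exact ⟨j, h ▸ hij⟩
      · exact ⟨i, h⟩
    have := hVA _ (h2 k l hl y) _ (h2 l k hl.symm 1)
    simpa using this
  have hoff : ∀ k l : ι, k ≠ l → ∀ y : D, single k l y ∈ A := by
    intro k l hkl y
    have := ppd_mem hA hkl 1 (hdiag l y)
    convert this using 1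
    simp [ppd, hkl, hkl.symm]
  rw [eq_top_iff]
  intro m _
  rw [matrix_eq_sum_single m]
  refine A.sum_mem fun k _ => A.sum_mem fun l _ => ?_
  by_cases hkl : k = l
  · subst hkl; exact hdiag _ _
  · exact hoff _ _ hkl _

/-- existence of a nonzero off-diagonal matrix unit multiple -/
def PPOff (V : AddSubgroup (Matrix ι ι D)) : Prop :=
  ∃ i j : ι, i ≠ j ∧ ∃ x : D, x ≠ 0 ∧ single i j x ∈ V

lemma pp_diag [Nontrivial ι] {V : AddSubgroup (Matrix ι ι D)} (hV : PPInv V) {v : Matrix ι ι D} (hv : v ∈ V)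
    (hnc : ∃ z, v * z ≠ z * v) (hd : ∀ i j, i ≠ j → v i j = 0) : PPOff V := by
  by_contra hno
  have h1 : ∀ i j, i ≠ j → ∀ x, x * v j j = v i i * x := by
    intro i j hij x
    by_contra hne
    refine hno ⟨i, j, hij, x * v j j - v i i * x, sub_ne_zero.mpr hne, ?_⟩
    convert ppd_mem hV hij x hv using 1
    ext a b
    rw [ppd_apply, single_apply]
    by_cases ha : a = i
    · subst ha
      by_cases hb : b = j
      · subst hb
        simp [hd b a hij.symm]
      · simp [hb, Ne.symm hb, hd j b (Ne.symm hb)]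
    · by_cases hb : b = j
      · subst hb
        simp [ha, Ne.symm ha, hd a i ha]
      · simp [ha, hb, Ne.symm ha]
  obtain ⟨z, hz⟩ := hnc
  apply hz
  have hvd : v = diagonal fun i => v i i := by
    ext a b
    by_cases h : a = b
    · subst h; simp
    · simp [h, hd a b h]
  obtain ⟨i0, j0, hij0⟩ := exists_pair_ne ι
  have hex : ∀ i : ι, ∃ j, i ≠ j := by
    intro i
    by_cases h : i = i0
    · exact ⟨j0, h ▸ hij0⟩
    · exact ⟨i0, h⟩
  have hall : ∀ i j, v i i = v j j := by
    intro i j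
    by_cases h : i = j
    · rw [h]
    · simpa using (h1 i j h 1).symm
  have hcomm : ∀ i x, x * v i i = v i i * x := by
    intro i x
    obtain ⟨j, hj⟩ := hex i
    have := h1 i j hj x
    rwa [hall j i] at this
  rw [hvd]
  ext a b
  simp only [diagonal_mul, mul_diagonal]
  rw [hcomm, hall a b]

lemma pp_three {V : AddSubgroup (Matrix ι ι D)} (hV : PPInv V) {v : Matrix ι ι D} (hv : v ∈ V)
    {i j k : ι} (hij : i ≠ j) (hik : i ≠ k) (hjk : j ≠ k) (h : v i j ≠ 0) : PPOff V := by
  refine ⟨j, i, hij.symm, v i j, h, ?_⟩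
  have h1 := ppd_mem hV hik.symm 1 (ppd_mem hV hij.symm 1 (ppd_mem hV hjk 1 hv))
  convert h1 using 1
  ext a b
  rw [single_apply]
  by_cases haj : a = j
  · subst haj
    by_cases hbi : b = i
    · subst hbi
      simp [ppd_apply, hij, hij.symm, hik, hik.symm, hjk, hjk.symm]
    · simp [ppd_apply, hij, hij.symm, hik, hik.symm, hjk, hjk.symm, hbi, Ne.symm hbi]
  · by_cases hbi : b = i
    · subst hbi
      simp [ppd_apply, hij, hij.symm, hik, hik.symm, hjk, hjk.symm, haj, Ne.symm haj]
    · simp [ppd_apply, hij, hij.symm, hik, hik.symm, hjk, hjk.symm, haj, Ne.symm haj, hbi, Ne.symm hbi]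

lemma pp_two_big {V : AddSubgroup (Matrix ι ι D)} (hV : PPInv V) {v : Matrix ι ι D} (hv : v ∈ V)
    {i j : ι} (hij : i ≠ j) (hall : ∀ k, k = i ∨ k = j) {s : D} (hs0 : s ≠ 0) (hs1 : s ≠ 1)
    (h : v i j ≠ 0) : PPOff V := by
  have hS : ∀ v ∈ V, ∃ w ∈ V, w i j = (s - 1) * v i j ∧ w j j = 0 ∧ w j i = v j i * s⁻¹ - v j i := by
    intro v hv
    refine ⟨_, V.sub_mem (pps_mem hV i hs0 hv) hv, ?_, ?_, ?_⟩
    · simp [hij.symm, sub_mul]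
    · simp [hij.symm]
    · simp [hij.symm]
  have hs1' : s - 1 ≠ 0 := sub_ne_zero.mpr hs1
  have heq : ∀ m : Matrix ι ι D, m i i = 0 → m j i = 0 → m j j = 0 → m = single i j (m i j) := by
    intro m h1 h2 h3
    ext a b
    rcases hall a with rfl | rfl <;> rcases hall b with rfl | rfl <;>
      simp [hij, hij.symm, h1, h2, h3]
  -- upper triangular with zero last diagonal entry
  have hup : ∀ w ∈ V, w i j ≠ 0 → w j i = 0 → w j j = 0 → PPOff V := by
    intro w hw h1 h2 h3
    by_cases ha : w i i = 0
    · exact ⟨i, j, hij, w i j, h1, heq w ha h2 h3 ▸ hw⟩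
    · have hm := ppd_mem hV hij 1 hw
      rw [heq (ppd i j 1 w) (by simp [ppd_apply, hij, hij.symm, h2])
        (by simp [ppd_apply, hij, hij.symm]) (by simp [ppd_apply, hij, hij.symm, h2])] at hm
      refine ⟨i, j, hij, _, ?_, hm⟩
      simp [ppd_apply, h2, h3, ha]
  obtain ⟨w, hw, h1, h2, -⟩ := hS v hv
  have h1' : w i j ≠ 0 := by rw [h1]; exact mul_ne_zero hs1' h
  by_cases hc : w j i = 0
  · exact hup w hw h1' hc h2
  · obtain ⟨x, hx0, hx⟩ : ∃ x : D, x ≠ 0 ∧ w i i + x * w j i ≠ 0 := by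
      by_cases hh : w i i + 1 * w j i = 0
      · refine ⟨s, hs0, fun h4 => ?_⟩
        have : (s - 1) * w j i = 0 := by
          rw [sub_mul, ← add_sub_add_left_eq_sub _ _ (w i i), h4, hh, sub_zero]
        exact (mul_ne_zero hs1' hc) this
      · exact ⟨1, one_ne_zero, hh⟩
    have hm := ppd_mem hV hij x hw
    obtain ⟨t, ht, t1, t2, t3⟩ := hS _ hm
    refine hup t ht ?_ ?_ t2
    · rw [t1]
      apply mul_ne_zero hs1'
      have : ppd i j x w i j = -((w i i + x * w j i) * x) := by
        simp [ppd_apply, h2, add_mul]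
        abel
      rw [this]
      exact neg_ne_zero.mpr (mul_ne_zero hx hx0)
    · rw [t3]
      simp [ppd_apply, hij, hij.symm]

lemma pp_VA {R : Type*} [Ring R] (S : Set R) (A : AddSubgroup R) (h : ∀ s ∈ S, ∀ t ∈ S, s * t ∈ A) :
    ∀ v ∈ AddSubgroup.closure S, ∀ w ∈ AddSubgroup.closure S, v * w ∈ A := by
  intro v hv
  induction hv using AddSubgroup.closure_induction with
  | mem s hs =>
    intro w hw
    induction hw using AddSubgroup.closure_induction with
    | mem t ht => exact h s hs t ht
    | zero => simp [A.zero_mem]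
    | add a b _ _ ha hb => rw [mul_add]; exact A.add_mem ha hb
    | neg a _ ha => rw [mul_neg]; exact A.neg_mem ha
  | zero => intro w _; simp [A.zero_mem]
  | add a b _ _ ha hb => intro w hw; rw [add_mul]; exact A.add_mem (ha w hw) (hb w hw)
  | neg a _ ha => intro w hw; rw [neg_mul]; exact A.neg_mem (ha w hw)

lemma pp_inv_closure {R : Type*} [Ring R] (S : Set R)
    (h : ∀ u w : R, u * w = 1 → w * u = 1 → ∀ v ∈ S, u * v * w ∈ S) :
    PPInv (AddSubgroup.closure S) := by
  intro u w huw hwu v hv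
  induction hv using AddSubgroup.closure_induction with
  | mem s hs => exact AddSubgroup.subset_closure (h u w huw hwu s hs)
  | zero => simp
  | add a b _ _ ha hb => rw [mul_add, add_mul]; exact AddSubgroup.add_mem _ ha hb
  | neg a _ ha => rw [mul_neg, neg_mul]; exact AddSubgroup.neg_mem _ ha

end matrixcase


section twotwo
open Matrix

/-- two by two matrices over the field with two elements -/
abbrev PPM := Matrix (Fin 2) (Fin 2) (ZMod 2)

/-- the exceptional four-element set -/
def PP4 (v : PPM) : Prop := v = 0 ∨ v = 1 ∨ v = !![1, 1; 1, 0] ∨ v = !![0, 1; 1, 1]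

/-- involutions -/
def PPu (v : PPM) : Prop := v = !![1, 1; 0, 1] ∨ v = !![1, 0; 1, 1] ∨ v = !![0, 1; 1, 0]

/-- matrices leading to a matrix unit -/
def PPq (v : PPM) : Prop :=
  (∃ i j : Fin 2, i ≠ j ∧ v = single i j 1) ∨
  (∃ i j k l : Fin 2, i ≠ j ∧ k ≠ l ∧
    ((1 + single k l 1) * v * (1 + single k l 1) = single i j 1 ∨
     (1 + single k l 1) * v * (1 + single k l 1) - v = single i j 1))

instance (v : PPM) : Decidable (PP4 v) := by unfold PP4; infer_instance
instance (v : PPM) : Decidable (PPu v) := by unfold PPu; infer_instance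
instance (v : PPM) : Decidable (PPq v) := by unfold PPq; infer_instance

lemma pp_matforall {P : PPM → Prop} (h : ∀ a b c d : ZMod 2, P !![a, b; c, d]) (v : PPM) : P v := by
  have := h (v 0 0) (v 0 1) (v 1 0) (v 1 1)
  rwa [← Matrix.eta_fin_two v] at this

lemma pp_f1 : ∀ v : PPM, PP4 v ∨ PPu v ∨ PPq v := by
  apply pp_matforall
  decide

lemma pp_f4add : ∀ v w : PPM, PP4 v → PP4 w → PP4 (v + w) := by
  rintro v w (rfl | rfl | rfl | rfl) (rfl | rfl | rfl | rfl) <;> decide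

lemma pp_f4mul : ∀ v w : PPM, PP4 v → PP4 w → PP4 (v * w) := by
  rintro v w (rfl | rfl | rfl | rfl) (rfl | rfl | rfl | rfl) <;> decide

lemma pp_umul : ∀ v w : PPM, PPu v → PPu w → PP4 (v * w) := by
  rintro v w (rfl | rfl | rfl) (rfl | rfl | rfl) <;> decide

lemma pp_u4 : ∀ v w : PPM, PPu v → PP4 w → w ≠ 0 → PPu (v * w) := by
  rintro v w (rfl | rfl | rfl) (rfl | rfl | rfl | rfl) <;> decide

lemma pp_uconj : ∀ v w : PPM, PPu v → PPu w → ∃ g : PPM, g * g = 1 ∧ g * v * g = w := by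
  rintro v w (rfl | rfl | rfl) (rfl | rfl | rfl)
  · exact ⟨1, by decide, by decide⟩
  · exact ⟨!![0, 1; 1, 0], by decide, by decide⟩
  · exact ⟨!![1, 0; 1, 1], by decide, by decide⟩
  · exact ⟨!![0, 1; 1, 0], by decide, by decide⟩
  · exact ⟨1, by decide, by decide⟩
  · exact ⟨!![1, 1; 0, 1], by decide, by decide⟩
  · exact ⟨!![1, 0; 1, 1], by decide, by decide⟩
  · exact ⟨!![1, 1; 0, 1], by decide, by decide⟩
  · exact ⟨1, by decide, by decide⟩

lemma pp_span : ∀ m : PPM, ∃ a b c d : Bool, m = (if a then 1 else 0) +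
    (if b then !![1, 1; 1, 0] else 0) + (if c then !![1, 1; 0, 1] else 0) +
    (if d then !![1, 0; 1, 1] else 0) := by
  apply pp_matforall
  decide

/-- the exceptional subgroup -/
def ppB : AddSubgroup PPM where
  carrier := {v | PP4 v}
  add_mem' := fun {a b} ha hb => pp_f4add a b ha hb
  zero_mem' := Or.inl rfl
  neg_mem' := by
    intro v hv
    have : -v = v := by
      ext i j
      rw [Matrix.neg_apply]
      exact ZMod.neg_eq_self_mod_two _
    rw [this]; exact hv

lemma pp_two (S : Set PPM) (A : AddSubgroup PPM)
    (hS : ∀ u w : PPM, u * w = 1 → w * u = 1 → ∀ v ∈ S, u * v * w ∈ S) (hA : PPInv A)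
    (hprod : ∀ s ∈ S, ∀ t ∈ S, s * t ∈ A)
    (hmin : ∀ B : AddSubgroup PPM, (∀ s ∈ S, ∀ t ∈ S, s * t ∈ B) → A ≤ B)
    (hnc : ∃ s ∈ S, ∃ z, s * z ≠ z * s) : A = ⊤ ∨ A = ppB := by
  have hV : PPInv (AddSubgroup.closure S) := pp_inv_closure S hS
  have hVA := pp_VA S A hprod
  by_cases hq : ∃ s ∈ S, PPq s
  · left
    obtain ⟨s, hs, hq⟩ := hq
    have hsV : s ∈ AddSubgroup.closure S := AddSubgroup.subset_closure hs
    rcases hq with ⟨i, j, hij, rfl⟩ | ⟨i, j, k, l, hij, hkl, h⟩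
    · exact pp_off hV hA hVA hij one_ne_zero hsV
    · have hg : (1 + single k l 1 : PPM) * (1 + single k l 1) = 1 := by
        clear h; revert k l; decide
      have h2 := hV _ _ hg hg s hsV
      rcases h with h | h
      · rw [h] at h2
        exact pp_off hV hA hVA hij one_ne_zero h2
      · have h3 := AddSubgroup.sub_mem _ h2 hsV
        rw [h] at h3
        exact pp_off hV hA hVA hij one_ne_zero h3
  have hS2 : ∀ s ∈ S, PP4 s ∨ PPu s := by
    intro s hs
    rcases pp_f1 s with h | h | h
    · exact Or.inl h
    · exact Or.inr h
    · exact absurd ⟨s, hs, h⟩ hq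
  by_cases hu : ∃ s ∈ S, PPu s
  · obtain ⟨s, hs, hsu⟩ := hu
    have hSu : ∀ w, PPu w → w ∈ S := by
      intro w hw
      obtain ⟨g, h1, h2⟩ := pp_uconj s w hsu hw
      rw [← h2]
      exact hS g g h1 h1 s hs
    have hBA : ppB ≤ A := by
      rintro v (rfl | rfl | rfl | rfl)
      · exact A.zero_mem
      · have := hprod _ (hSu !![0, 1; 1, 0] (by decide)) _ (hSu !![0, 1; 1, 0] (by decide))
        convert this using 1; decide
      · have := hprod _ (hSu !![1, 1; 0, 1] (by decide)) _ (hSu !![0, 1; 1, 0] (by decide))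
        convert this using 1; decide
      · have := hprod _ (hSu !![0, 1; 1, 0] (by decide)) _ (hSu !![1, 1; 0, 1] (by decide))
        convert this using 1; decide
    by_cases ht : ∃ t ∈ S, PP4 t ∧ t ≠ 0
    · left
      obtain ⟨t, ht, h4, h0⟩ := ht
      have hAu : ∀ w, PPu w → w ∈ A := by
        intro w hw
        obtain ⟨g, h1, h2⟩ := pp_uconj _ w (pp_u4 s t hsu h4 h0) hw
        rw [← h2]
        exact hA g g h1 h1 _ (hprod s hs t ht)
      rw [eq_top_iff]
      intro m _
      obtain ⟨a, b, c, d, rfl⟩ := pp_span m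
      refine A.add_mem (A.add_mem (A.add_mem ?_ ?_) ?_) ?_
      · split_ifs
        · exact hBA (by right; left; rfl)
        · exact A.zero_mem
      · split_ifs
        · exact hBA (by right; right; left; rfl)
        · exact A.zero_mem
      · split_ifs
        · exact hAu _ (by decide)
        · exact A.zero_mem
      · split_ifs
        · exact hAu _ (by decide)
        · exact A.zero_mem
    · right
      refine le_antisymm (hmin _ ?_) hBA
      have hS3 : ∀ s ∈ S, s = 0 ∨ PPu s := by
        intro s hs
        rcases hS2 s hs with h | h
        · left
          by_contra h0
          exact ht ⟨s, hs, h, h0⟩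
        · exact Or.inr h
      intro s hs t ht
      rcases hS3 s hs with rfl | h1
      · rw [zero_mul]; exact ppB.zero_mem
      rcases hS3 t ht with rfl | h2
      · rw [mul_zero]; exact ppB.zero_mem
      exact pp_umul s t h1 h2
  · right
    have hS3 : ∀ s ∈ S, PP4 s := by
      intro s hs
      rcases hS2 s hs with h | h
      · exact h
      · exact absurd ⟨s, hs, h⟩ hu
    refine le_antisymm (hmin _ fun s hs t ht => pp_f4mul s t (hS3 s hs) (hS3 t ht)) ?_
    have hsw : !![1, 1; 1, 0] ∈ S ∧ !![0, 1; 1, 1] ∈ S := by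
      obtain ⟨s, hs, z, hz⟩ := hnc
      rcases hS3 s hs with rfl | rfl | rfl | rfl
      · simp at hz
      · simp at hz
      · refine ⟨hs, ?_⟩
        have := hS !![0, 1; 1, 0] !![0, 1; 1, 0] (by decide) (by decide) _ hs
        convert this using 1; decide
      · refine ⟨?_, hs⟩
        have := hS !![0, 1; 1, 0] !![0, 1; 1, 0] (by decide) (by decide) _ hs
        convert this using 1; decide
    rintro v (rfl | rfl | rfl | rfl)
    · exact A.zero_mem
    · have := hprod _ hsw.1 _ hsw.2
      convert this using 1; decide
    · have := hprod _ hsw.2 _ hsw.2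
      convert this using 1; decide
    · have := hprod _ hsw.1 _ hsw.1
      convert this using 1; decide

end twotwo

open Matrix

lemma pp_lift_conj {F R : Type*} [CommRing F] [Ring R] [Algebra F R] (f : FreeAlgebra F ℕ)
    (u w : R) (huw : u * w = 1) (hwu : w * u = 1) (x : ℕ → R) :
    u * FreeAlgebra.lift F x f * w = FreeAlgebra.lift F (fun i => u * x i * w) f := by
  induction f using FreeAlgebra.induction with
  | grade0 r =>
    rw [AlgHom.commutes, AlgHom.commutes, ← Algebra.commutes, mul_assoc, huw, mul_one]
  | grade1 i => simp
  | mul a b ha hb =>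
    rw [map_mul, map_mul, ← ha, ← hb]
    calc _ = u * FreeAlgebra.lift F x a * 1 * FreeAlgebra.lift F x b * w := by noncomm_ring
      _ = _ := by rw [← hwu]; noncomm_ring
  | add a b ha hb => rw [map_add, map_add, ← ha, ← hb]; noncomm_ring

/-- products of two values -/
def PPP {R : Type*} [Mul R] (S : Set R) : Set R := {x | ∃ s ∈ S, ∃ t ∈ S, x = s * t}

lemma pp_invP {R : Type*} [Ring R] (S : Set R)
    (h : ∀ u w : R, u * w = 1 → w * u = 1 → ∀ v ∈ S, u * v * w ∈ S) :
    PPInv (AddSubgroup.closure (PPP S)) := by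
  apply pp_inv_closure
  rintro u w huw hwu _ ⟨s, hs, t, ht, rfl⟩
  refine ⟨_, h u w huw hwu s hs, _, h u w huw hwu t ht, ?_⟩
  calc _ = u * s * 1 * t * w := by noncomm_ring
    _ = _ := by rw [← hwu]; noncomm_ring

lemma pp_one (D : Type*) [DivisionRing D] (f : FreeAlgebra (Subring.center D) ℕ)
    (hf : ∃ (x : ℕ → D) (z : D), FreeAlgebra.lift (Subring.center D) x f * z ≠
      z * FreeAlgebra.lift (Subring.center D) x f) :
    AddSubgroup.closure (PPP (Set.range fun x : ℕ → D => FreeAlgebra.lift (Subring.center D) x f)) = ⊤ := by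
  set S := Set.range fun x : ℕ → D => FreeAlgebra.lift (Subring.center D) x f with hS
  have hSinv : ∀ u w : D, u * w = 1 → w * u = 1 → ∀ v ∈ S, u * v * w ∈ S := by
    rintro u w huw hwu _ ⟨x, rfl⟩
    exact ⟨_, (pp_lift_conj f u w huw hwu x).symm⟩
  have hV := pp_inv_closure S hSinv
  have hA := pp_invP S hSinv
  have hVA := pp_VA S (AddSubgroup.closure (PPP S)) (fun s hs t ht =>
    AddSubgroup.subset_closure ⟨s, hs, t, ht, rfl⟩)
  have hinf : Infinite D := by
    by_contra h
    rw [not_infinite_iff_finite] at h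
    obtain ⟨x, z, hxz⟩ := hf
    letI := littleWedderburn D
    exact hxz (mul_comm _ _)
  have hSV : ∀ x : ℕ → D, FreeAlgebra.lift (Subring.center D) x f ∈ AddSubgroup.closure S :=
    fun x => AddSubgroup.subset_closure ⟨x, rfl⟩
  have key : ∃ a : D, (∃ y, a * y ≠ y * a) ∧
      ∀ x, ∃ z, (∀ y, z * y = y * z) ∧ a * x - x * a + z ∈ AddSubgroup.closure S := by
    rcases finite_or_infinite (Subring.center D) with h | h
    · refine pp_fin (F := Subring.center D) ?_ f hf _ hSV
      intro x hx
      exact ⟨⟨x, Subring.mem_center_iff.mpr fun g => (hx g).symm⟩, rfl⟩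
    · exact pp_inf (F := Subring.center D) f hf _ hSV
  obtain ⟨a, ha, hax⟩ := key
  rw [eq_top_iff]
  intro x _
  exact pp_final (AddSubgroup.closure S) _
    (fun u hu x hx => hV u u⁻¹ (mul_inv_cancel₀ hu) (inv_mul_cancel₀ hu) x hx)
    (fun u hu x hx => hA u u⁻¹ (mul_inv_cancel₀ hu) (inv_mul_cancel₀ hu) x hx) hVA a ha hax x

lemma pp_many {D : Type*} [DivisionRing D] {n : ℕ} (hn : 2 ≤ n)
    (hno : ¬ (n = 2 ∧ Nat.card D = 2)) {V : AddSubgroup (Matrix (Fin n) (Fin n) D)} (hV : PPInv V)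
    (hnc : ∃ v ∈ V, ∃ z, v * z ≠ z * v) : PPOff V := by
  obtain ⟨v, hv, hz⟩ := hnc
  have : Nontrivial (Fin n) := Fin.nontrivial_iff_two_le.mpr hn
  by_cases hd : ∀ i j, i ≠ j → v i j = 0
  · exact pp_diag hV hv hz hd
  push Not at hd
  obtain ⟨i, j, hij, h⟩ := hd
  by_cases h3 : ∃ k, i ≠ k ∧ j ≠ k
  · obtain ⟨k, h1, h2⟩ := h3
    exact pp_three hV hv hij h1 h2 h
  push Not at h3
  have hall : ∀ k, k = i ∨ k = j := by
    intro k
    by_cases hk : i = k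
    · exact Or.inl hk.symm
    · exact Or.inr (h3 k hk).symm
  have hn2 : n = 2 := by
    have h1 : (Finset.univ : Finset (Fin n)) ⊆ {i, j} := by
      intro k _
      simpa using hall k
    have := Finset.card_le_card h1
    rw [Finset.card_univ, Fintype.card_fin] at this
    have := this.trans (Finset.card_le_two)
    omega
  obtain ⟨s, hs0, hs1⟩ : ∃ s : D, s ≠ 0 ∧ s ≠ 1 := by
    by_contra! hcon
    apply hno
    refine ⟨hn2, ?_⟩
    rw [Nat.card_eq_two_iff]
    refine ⟨0, 1, zero_ne_one, ?_⟩
    rw [Set.eq_univ_iff_forall]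
    intro x
    by_cases hx : x = 0
    · left; exact hx
    · right; exact hcon x hx
  exact pp_two_big hV hv hij hall hs0 hs1 h

lemma pp_special {D : Type*} [DivisionRing D] (hD : Nat.card D = 2)
    (S : Set (Matrix (Fin 2) (Fin 2) D))
    (hS : ∀ u w : Matrix (Fin 2) (Fin 2) D, u * w = 1 → w * u = 1 → ∀ v ∈ S, u * v * w ∈ S)
    (hnc : ∃ s ∈ S, ∃ z, s * z ≠ z * s) :
    AddSubgroup.closure (PPP S) = ⊤ ∨
    (AddSubgroup.closure (PPP S) : Set (Matrix (Fin 2) (Fin 2) D)) =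
      {0, 1, Matrix.of fun (i j : Fin 2) => if (i : ℕ) = 1 ∧ (j : ℕ) = 1 then 0 else 1,
            Matrix.of fun (i j : Fin 2) => if (i : ℕ) = 0 ∧ (j : ℕ) = 0 then 0 else 1} := by
  have hfin : Finite D := Nat.finite_of_card_ne_zero (by omega)
  letI : Fintype D := Fintype.ofFinite D
  have hcard : Fintype.card D = 2 := by rw [← Nat.card_eq_fintype_card, hD]
  let e : ZMod 2 ≃+* D := ZMod.ringEquivOfPrime D Nat.prime_two hcard
  let E : PPM ≃+* Matrix (Fin 2) (Fin 2) D := e.mapMatrix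
  set A := AddSubgroup.closure (PPP S) with hAdef
  have hA : PPInv A := pp_invP S hS
  have hE1 : ∀ u w : PPM, u * w = 1 → E u * E w = 1 := by
    intro u w h; rw [← map_mul, h, map_one]
  have hmain := pp_two (E ⁻¹' S) (A.comap (E : PPM →+ Matrix (Fin 2) (Fin 2) D))
    (by
      intro u w huw hwu v hv
      have := hS (E u) (E w) (hE1 _ _ huw) (hE1 _ _ hwu) (E v) hv
      rw [← map_mul, ← map_mul] at this
      exact this)
    (by
      intro u w huw hwu v hv
      have := hA (E u) (E w) (hE1 _ _ huw) (hE1 _ _ hwu) (E v) hv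
      rw [← map_mul, ← map_mul] at this
      exact this)
    (by
      intro s hs t ht
      show E (s * t) ∈ A
      rw [map_mul]
      exact AddSubgroup.subset_closure ⟨_, hs, _, ht, rfl⟩)
    (by
      intro B hB x hx
      have h1 : A ≤ B.comap (E.symm : Matrix (Fin 2) (Fin 2) D →+ PPM) := by
        rw [hAdef, AddSubgroup.closure_le]
        rintro _ ⟨s, hs, t, ht, rfl⟩
        show E.symm (s * t) ∈ B
        rw [map_mul]
        refine hB _ ?_ _ ?_
        · show E (E.symm s) ∈ S
          rwa [E.apply_symm_apply]
        · show E (E.symm t) ∈ S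
          rwa [E.apply_symm_apply]
      have h2 : E.symm (E x) ∈ B := h1 hx
      rwa [E.symm_apply_apply] at h2)
    (by
      obtain ⟨s, hs, z, hz⟩ := hnc
      refine ⟨E.symm s, ?_, E.symm z, ?_⟩
      · show E (E.symm s) ∈ S
        rwa [E.apply_symm_apply]
      · rw [← map_mul, ← map_mul]
        exact fun h => hz (E.symm.injective h))
  have hmem : ∀ x, x ∈ A ↔ E.symm x ∈ A.comap (E : PPM →+ Matrix (Fin 2) (Fin 2) D) := by
    intro x
    rw [AddSubgroup.mem_comap]
    show x ∈ A ↔ E (E.symm x) ∈ A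
    rw [E.apply_symm_apply]
  rcases hmain with h | h
  · left
    rw [eq_top_iff]
    intro x _
    rw [hmem, h]
    trivial
  · right
    ext x
    rw [SetLike.mem_coe, hmem, h]
    have h3 : E !![1, 1; 1, 0] = Matrix.of fun (i j : Fin 2) => if (i : ℕ) = 1 ∧ (j : ℕ) = 1 then 0 else 1 := by
      ext i j
      fin_cases i <;> fin_cases j <;> simp [E]
    have h4 : E !![0, 1; 1, 1] = Matrix.of fun (i j : Fin 2) => if (i : ℕ) = 0 ∧ (j : ℕ) = 0 then 0 else 1 := by
      ext i j
      fin_cases i <;> fin_cases j <;> simp [E]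
    show PP4 (E.symm x) ↔ _
    rw [← h3, ← h4]
    simp only [PP4, Set.mem_insert_iff, Set.mem_singleton_iff, E.symm_apply_eq, map_zero, map_one]

theorem stmt_0 (D : Type*) [DivisionRing D] (n : ℕ) (hn : 0 < n)
    (f : FreeAlgebra (Subring.center D) ℕ)
    (hf : ¬ Set.range (fun a : ℕ → Matrix (Fin n) (Fin n) D =>
        FreeAlgebra.lift (Subring.center D) a f) ⊆
        Set.center (Matrix (Fin n) (Fin n) D)) :
    AddSubgroup.closure
        {x : Matrix (Fin n) (Fin n) D | ∃ a b : ℕ → Matrix (Fin n) (Fin n) D,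
          x = FreeAlgebra.lift (Subring.center D) a f *
              FreeAlgebra.lift (Subring.center D) b f} = ⊤ ∨
      (n = 2 ∧ Nat.card D = 2 ∧
        (AddSubgroup.closure
          {x : Matrix (Fin n) (Fin n) D | ∃ a b : ℕ → Matrix (Fin n) (Fin n) D,
            x = FreeAlgebra.lift (Subring.center D) a f *
                FreeAlgebra.lift (Subring.center D) b f} :
            Set (Matrix (Fin n) (Fin n) D)) =
          {0, 1, Matrix.of fun (i j : Fin n) => if (i : ℕ) = 1 ∧ (j : ℕ) = 1 then 0 else 1,
            Matrix.of fun (i j : Fin n) => if (i : ℕ) = 0 ∧ (j : ℕ) = 0 then 0 else 1}) := by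
  set S := Set.range (fun a : ℕ → Matrix (Fin n) (Fin n) D =>
        FreeAlgebra.lift (Subring.center D) a f) with hS
  have hset : {x : Matrix (Fin n) (Fin n) D | ∃ a b : ℕ → Matrix (Fin n) (Fin n) D,
          x = FreeAlgebra.lift (Subring.center D) a f *
              FreeAlgebra.lift (Subring.center D) b f} = PPP S := by
    ext x
    constructor
    · rintro ⟨a, b, rfl⟩
      exact ⟨_, ⟨a, rfl⟩, _, ⟨b, rfl⟩, rfl⟩
    · rintro ⟨_, ⟨a, rfl⟩, _, ⟨b, rfl⟩, rfl⟩
      exact ⟨a, b, rfl⟩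
  rw [hset]
  have hSinv : ∀ u w : Matrix (Fin n) (Fin n) D, u * w = 1 → w * u = 1 → ∀ v ∈ S, u * v * w ∈ S := by
    rintro u w huw hwu _ ⟨x, rfl⟩
    exact ⟨_, (pp_lift_conj f u w huw hwu x).symm⟩
  have hnc : ∃ s ∈ S, ∃ z, s * z ≠ z * s := by
    obtain ⟨s, hs, hsc⟩ := Set.not_subset.mp hf
    refine ⟨s, hs, ?_⟩
    by_contra! hcon
    exact hsc (Semigroup.mem_center_iff.mpr fun g => (hcon g).symm)
  rcases Nat.lt_or_ge n 2 with h2 | h2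
  · left
    obtain rfl : n = 1 := by omega
    let E : Matrix (Fin 1) (Fin 1) D ≃ₐ[Subring.center D] D :=
      { toFun := fun m => m 0 0
        invFun := fun x => Matrix.of fun _ _ => x
        left_inv := by
          intro m; ext i j
          rw [Subsingleton.elim i 0, Subsingleton.elim j 0]; rfl
        right_inv := fun _ => rfl
        map_mul' := by intro a b; simp [Matrix.mul_apply]
        map_add' := fun _ _ => rfl
        commutes' := by intro r; simp [Matrix.algebraMap_matrix_apply] }
    have hlift : ∀ x : ℕ → D, FreeAlgebra.lift (Subring.center D) x f =
        E (FreeAlgebra.lift (Subring.center D) (fun i => E.symm (x i)) f) := by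
      intro x
      have : FreeAlgebra.lift (Subring.center D) x =
          (E : _ →ₐ[Subring.center D] D).comp (FreeAlgebra.lift (Subring.center D) (fun i => E.symm (x i))) := by
        ext i; simp
      rw [this]; rfl
    have h1 := pp_one D f (by
      obtain ⟨_, ⟨a, rfl⟩, z, hz⟩ := hnc
      refine ⟨fun i => E (a i), E z, ?_⟩
      rw [hlift]
      simp only [AlgEquiv.symm_apply_apply]
      rw [← map_mul, ← map_mul]
      exact fun h => hz (E.injective h))
    rw [eq_top_iff]
    intro m _
    have h3 : AddSubgroup.closure (PPP (Set.range fun x : ℕ → D => FreeAlgebra.lift (Subring.center D) x f))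
        ≤ (AddSubgroup.closure (PPP S)).comap (E.symm : D →+ Matrix (Fin 1) (Fin 1) D) := by
      rw [AddSubgroup.closure_le]
      rintro _ ⟨_, ⟨a, rfl⟩, _, ⟨b, rfl⟩, rfl⟩
      show E.symm (_ * _) ∈ AddSubgroup.closure (PPP S)
      simp only [hlift]
      rw [map_mul, E.symm_apply_apply, E.symm_apply_apply]
      exact AddSubgroup.subset_closure ⟨_, ⟨_, rfl⟩, _, ⟨_, rfl⟩, rfl⟩
    have h4 : E m ∈ AddSubgroup.closure (PPP (Set.range fun x : ℕ → D => FreeAlgebra.lift (Subring.center D) x f)) := by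
      rw [h1]; trivial
    have h5 : E.symm (E m) ∈ AddSubgroup.closure (PPP S) := h3 h4
    rwa [E.symm_apply_apply] at h5
  · by_cases hex : n = 2 ∧ Nat.card D = 2
    · obtain ⟨rfl, hD⟩ := hex
      rcases pp_special hD S hSinv hnc with h | h
      · exact Or.inl h
      · exact Or.inr ⟨rfl, hD, h⟩
    · left
      have hV := pp_inv_closure S hSinv
      obtain ⟨s, hs, hz⟩ := hnc
      obtain ⟨i, j, hij, x, hx, hm⟩ := pp_many h2 hex hV ⟨s, AddSubgroup.subset_closure hs, hz⟩
      exact pp_off hV (pp_invP S hSinv) (pp_VA S _ fun s hs t ht =>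
        AddSubgroup.subset_closure ⟨s, hs, t, ht, rfl⟩) hij hx hm
end

section
/- Let F be a field with more than two elements, let R be a unital associative F-algebra, and let f be an element of the free associative F-algebra F⟨X⟩ such that f(R) is fully noncentral, i.e. the two-sided ideal of R generated by the set {f(a₁,…,a_m)·r − r·f(a₁,…,a_m) : a_i, r ∈ R} equals R. Then for every maximal two-sided ideal M of R, every element of R can be written as s + m, where s belongs to the additive subgroup of R generated by products of two values of f (that is, elements f(a₁,…,a_m)·f(b₁,…,b_m)) and m ∈ M. -/
theorem aux_simple_top {S : Type*} [Ring S] [IsSimpleRing S] (U : AddSubgroup S) (c : S)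
    (hc : c ≠ 0) (h : ∀ x y, x * c * y ∈ U) : ∀ s, s ∈ U := by
  let I : TwoSidedIdeal S := TwoSidedIdeal.mk' {s | ∀ x y, x * s * y ∈ U}
    (by intro x y; simp)
    (by
      intro a b ha hb x y
      have := U.add_mem (ha x y) (hb x y)
      simpa [mul_add, add_mul] using this)
    (by
      intro a ha x y
      have := U.neg_mem (ha x y)
      simpa using this)
    (by
      intro a b hb x y
      have := hb (x * a) y
      simpa [mul_assoc] using this)
    (by
      intro a b hb x y
      have := hb x (b * y)
      simpa [mul_assoc] using this)
  have h1 : (1 : S) ∈ I := by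
    apply IsSimpleRing.one_mem_of_ne_zero_mem I hc
    exact (TwoSidedIdeal.mem_mk' _ _ _ _ _ _ _).2 h
  have h2 : ∀ x y, x * (1 : S) * y ∈ U := (TwoSidedIdeal.mem_mk' _ _ _ _ _ _ _).1 h1
  intro s
  simpa using h2 s 1

/-- Herstein type lemma: a nonabelian Lie ideal of a simple ring has full square. -/
theorem aux_herstein {S : Type*} [Ring S] [IsSimpleRing S] (L P : AddSubgroup S)
    (hL : ∀ l ∈ L, ∀ x, l * x - x * l ∈ L)
    (hne : ∃ l ∈ L, ∃ m ∈ L, l * m ≠ m * l)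
    (hP : ∀ a ∈ L, ∀ b ∈ L, a * b ∈ P) : ∀ s, s ∈ P := by
  obtain ⟨l, hl, m, hm, hlm⟩ := hne
  let P0 : AddSubgroup S := AddSubgroup.closure {y | ∃ a ∈ L, ∃ b ∈ L, y = a * b}
  have hP0 : ∀ a ∈ L, ∀ b ∈ L, a * b ∈ P0 := fun a ha b hb =>
    AddSubgroup.subset_closure ⟨a, ha, b, hb, rfl⟩
  have hP0P : P0 ≤ P := by
    rw [AddSubgroup.closure_le]
    rintro y ⟨a, ha, b, hb, rfl⟩
    exact hP a ha b hb
  have hP0L : ∀ p ∈ P0, ∀ x, p * x - x * p ∈ P0 := by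
    intro p hp x
    induction hp using AddSubgroup.closure_induction with
    | mem y hy =>
      obtain ⟨a, ha, b, hb, rfl⟩ := hy
      have := P0.add_mem (hP0 a ha _ (hL b hb x)) (hP0 _ (hL a ha x) b hb)
      convert this using 1
      noncomm_ring
    | zero => simp
    | add y z _ _ h1 h2 =>
      convert P0.add_mem h1 h2 using 1
      noncomm_ring
    | neg y _ h1 =>
      convert P0.neg_mem h1 using 1
      noncomm_ring
  have hc : l * m - m * l ≠ 0 := sub_ne_zero.2 hlm
  have hU : ∀ s, s ∈ L ⊔ P0 := by
    have hUL : ∀ p ∈ L ⊔ P0, ∀ x, p * x - x * p ∈ L ⊔ P0 := by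
      intro p hp x
      obtain ⟨a, ha, b, hb, rfl⟩ := AddSubgroup.mem_sup.1 hp
      refine AddSubgroup.mem_sup.2 ⟨_, hL a ha x, _, hP0L b hb x, ?_⟩
      noncomm_ring
    refine aux_simple_top _ _ hc ?_
    have key : ∀ y, (l * m - m * l) * y ∈ L ⊔ P0 := by
      intro y
      refine AddSubgroup.mem_sup.2 ⟨_, hL l hl (m * y), _, P0.neg_mem (hP0 m hm _ (hL l hl y)), ?_⟩
      noncomm_ring
    intro x y
    have := AddSubgroup.sub_mem _ (key (y * x)) (hUL _ (key y) x)
    convert this using 1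
    noncomm_ring
  have hKL : ∀ s x, s * x - x * s ∈ L := by
    intro s x
    obtain ⟨a, ha, b, hb, rfl⟩ := AddSubgroup.mem_sup.1 (hU s)
    have h2 : b * x - x * b ∈ L := by
      clear hU
      induction hb using AddSubgroup.closure_induction with
      | mem y hy =>
        obtain ⟨a, ha, b, hb, rfl⟩ := hy
        convert L.add_mem (hL a ha (b * x)) (hL b hb (x * a)) using 1
        noncomm_ring
      | zero => simp
      | add y z _ _ h1 h2 =>
        convert L.add_mem h1 h2 using 1
        noncomm_ring
      | neg y _ h1 =>
        convert L.neg_mem h1 using 1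
        noncomm_ring
    convert L.add_mem (hL a ha x) h2 using 1
    noncomm_ring
  have hKP : ∀ s x, s * x - x * s ∈ P0 := by
    intro s x
    obtain ⟨a, ha, b, hb, rfl⟩ := AddSubgroup.mem_sup.1 (hU s)
    obtain ⟨c, hc, d, hd, rfl⟩ := AddSubgroup.mem_sup.1 (hU x)
    have h1 := P0.sub_mem (hP0 a ha c hc) (hP0 c hc a ha)
    have h2 := hP0L b hb (c + d)
    have h3 := hP0L d hd a
    convert P0.sub_mem (P0.add_mem h1 h2) h3 using 1
    noncomm_ring
  have hfin : ∀ s, s ∈ P0 := by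
    refine aux_simple_top _ _ hc ?_
    have key : ∀ y, (l * m - m * l) * y ∈ P0 := by
      intro y
      convert P0.sub_mem (hKP l (m * y)) (hP0 m hm _ (hL l hl y)) using 1
      noncomm_ring
    intro x y
    convert P0.sub_mem (key (y * x)) (hP0L _ (key y) x) using 1
    noncomm_ring
  exact fun s => hP0P (hfin s)

/-- lemma: elements commuting with all conjugates. -/
theorem aux_cbh {D : Type*} [DivisionRing D] (a b : D)
    (h : ∀ u : D, u ≠ 0 → a * (u * b * u⁻¹) = (u * b * u⁻¹) * a) :
    (∀ x, a * x = x * a) ∨ (∀ x, b * x = x * b) := by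
  by_contra hcon
  push Not at hcon
  obtain ⟨⟨x0, hx0⟩, ⟨y0, hy0⟩⟩ := hcon
  let H : Set D := {c | ∀ u : D, u ≠ 0 → c * (u * b * u⁻¹) = (u * b * u⁻¹) * c}
  have hHsub : ∀ c ∈ H, ∀ d ∈ H, c - d ∈ H := by
    intro c hc d hd u hu
    rw [sub_mul, mul_sub, hc u hu, hd u hu]
  have hHmul : ∀ c ∈ H, ∀ d ∈ H, c * d ∈ H := by
    intro c hc d hd u hu
    rw [mul_assoc, hd u hu, ← mul_assoc, hc u hu, mul_assoc]
  have hHinv : ∀ c ∈ H, c⁻¹ ∈ H := by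
    intro c hc u hu
    exact (Commute.inv_left₀ (hc u hu : Commute c _))
  have hHconj : ∀ c ∈ H, ∀ w : D, w ≠ 0 → w * c * w⁻¹ ∈ H := by
    intro c hc w hw u hu
    have := hc (w⁻¹ * u) (mul_ne_zero (inv_ne_zero hw) hu)
    have h2 := congrArg (fun t => w * t * w⁻¹) this
    simp only [mul_inv_rev, inv_inv] at h2
    calc _ = w * (c * (w⁻¹ * u * b * (u⁻¹ * w))) * w⁻¹ := by
            simp only [mul_assoc]; rw [mul_inv_cancel₀ hw, mul_one]
         _ = _ := h2
         _ = _ := by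
            simp only [mul_assoc]; rw [mul_inv_cancel_left₀ hw]
  have step : ∀ c ∈ H, ∀ x, x ∉ H → c * x = x * c := by
    intro c hc x hx
    have h0 : (0:D) ∈ H := by intro u hu; simp
    have h1 : (1:D) ∈ H := by intro u hu; simp
    have hx0 : x ≠ 0 := fun h => hx (h ▸ h0)
    have hx1 : 1 + x ≠ 0 := by
      intro h
      apply hx
      have : x = 0 - 1 := by rw [zero_sub]; exact (neg_eq_of_add_eq_zero_right h).symm
      rw [this]; exact hHsub _ h0 _ h1
    set c1 := x * c * x⁻¹ with hc1
    set c2 := (1 + x) * c * (1 + x)⁻¹ with hc2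
    have e1 : c1 * x = x * c := by rw [hc1, inv_mul_cancel_right₀ hx0]
    have e2 : c2 * (1 + x) = (1 + x) * c := by rw [hc2, inv_mul_cancel_right₀ hx1]
    have hc1H := hHconj c hc x hx0
    have hc2H := hHconj c hc _ hx1
    have e3 : (c2 - c1) * x = c - c2 := by
      rw [sub_mul, e1]
      have : c2 * x = c + x * c - c2 := by
        rw [mul_add, mul_one, add_mul, one_mul] at e2
        rw [← e2]; abel
      rw [this]; abel
    by_cases h12 : c2 - c1 = 0
    · rw [h12, zero_mul] at e3
      have : c = c1 := by rw [sub_eq_zero.1 e3.symm, sub_eq_zero.1 h12]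
      rw [← e1, ← this]
    · exfalso; apply hx
      have : x = (c2 - c1)⁻¹ * (c - c2) := by
        rw [← e3, inv_mul_cancel_left₀ h12]
      rw [this]
      exact hHmul _ (hHinv _ (hHsub _ hc2H _ hc1H)) _ (hHsub _ hc _ hc2H)
  have hyH : y0 ∉ H ∨ ∃ x, x ∉ H := by
    right
    by_contra hall
    push Not at hall
    have := hall y0 1 one_ne_zero
    simp at this
    exact hy0 this.symm
  obtain ⟨x1, hx1⟩ : ∃ x, x ∉ H := by
    rcases hyH with h | h
    · exact ⟨_, h⟩
    · exact h
  have haH : a ∈ H := h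
  by_cases hx : x0 ∈ H
  · have h1 := step a haH x1 hx1
    have h2 := step a haH (x1 - x0) (by
      intro hh
      apply hx1
      have := hHsub _ hh _ (hHsub _ (hHsub _ hx _ hx) _ hx)
      simpa using this)
    rw [mul_sub, sub_mul, h1] at h2
    exact hx0 (sub_right_injective h2)
  · exact hx0 (step a haH x0 hx)


section Linearization

/-- The multilinear polynomial with coefficients `c`. -/
def auxMlin {F : Type*} [Field F] {A : Type*} [Ring A] [Algebra F A] {d : ℕ}
    (c : Equiv.Perm (Fin d) → F) (y : Fin d → A) : A :=
  ∑ σ : Equiv.Perm (Fin d), c σ • (List.ofFn (fun k => y (σ k))).prod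

theorem aux_lift_expand {F : Type*} [Field F] {A : Type*} [Ring A] [Algebra F A]
    (f : FreeAlgebra F ℕ) :
    ∃ (g : List ℕ →₀ F), (∀ a : ℕ → A,
      FreeAlgebra.lift F a f = g.sum (fun w c => c • (w.map a).prod)) ∧
      ((∀ w ∈ g.support, w = []) → ∃ z : F, ∀ a : ℕ → A, FreeAlgebra.lift F a f = algebraMap F A z) := by
  suffices h : ∃ (g : List ℕ →₀ F), (∀ a : ℕ → A,
      FreeAlgebra.lift F a f = g.sum (fun w c => c • (w.map a).prod)) by
    obtain ⟨g, hg⟩ := h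
    refine ⟨g, hg, fun h => ⟨g [], fun a => ?_⟩⟩
    rw [hg, Finsupp.sum, Finset.sum_subset (s₂ := {[]})]
    · simp [Algebra.algebraMap_eq_smul_one]
    · intro w hw; simp [h w hw]
    · intro w _ hw; simp at hw; simp [hw]
  induction f using FreeAlgebra.induction with
  | grade0 r =>
    refine ⟨Finsupp.single [] r, fun a => ?_⟩
    simp [Algebra.algebraMap_eq_smul_one]
  | grade1 x =>
    refine ⟨Finsupp.single [x] 1, fun a => ?_⟩
    simp
  | add p q hp hq =>
    obtain ⟨g, hg⟩ := hp
    obtain ⟨g', hg'⟩ := hq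
    refine ⟨g + g', fun a => ?_⟩
    rw [map_add, hg, hg', Finsupp.sum_add_index']
    · simp
    · intros; simp [add_smul]
  | mul p q hp hq =>
    obtain ⟨g, hg⟩ := hp
    obtain ⟨g', hg'⟩ := hq
    refine ⟨g.sum fun w c => g'.sum fun w' c' => Finsupp.single (w ++ w') (c * c'), fun a => ?_⟩
    rw [map_mul, hg, hg', Finsupp.sum_sum_index]
    · rw [Finsupp.sum_mul]
      apply Finsupp.sum_congr
      intro w _
      rw [Finsupp.mul_sum, Finsupp.sum_sum_index]
      · apply Finsupp.sum_congr
        intro w' _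
        rw [Finsupp.sum_single_index (by simp)]
        rw [List.map_append, List.prod_append, smul_mul_smul_comm]
      · simp
      · simp [add_smul]
    · simp
    · simp [add_smul]

theorem aux_mobius {d : ℕ} (B : Finset (Fin d)) :
    ∑ A : Finset (Fin d), (if B ⊆ A then (-1 : ℤ) ^ A.card else 0)
      = if B = Finset.univ then (-1) ^ d else 0 := by
  split_ifs with h
  · subst h
    rw [Finset.sum_eq_single Finset.univ]
    · simp
    · intro A _ hA
      rw [if_neg]
      intro h; exact hA (Finset.univ_subset_iff.mp h)
    · simp
  · obtain ⟨j, hj⟩ : ∃ j, j ∉ B := by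
      by_contra hh; push Not at hh; exact h (Finset.eq_univ_iff_forall.mpr hh)
    refine Finset.sum_involution (fun A _ => if j ∈ A then A.erase j else insert j A) ?_ ?_ ?_ ?_
    · intro A _
      by_cases hA : j ∈ A
      · have : B ⊆ A.erase j ↔ B ⊆ A := by
          rw [Finset.subset_erase]; simp [hj]
        simp only [hA, if_true, this]
        split_ifs
        · have := Finset.card_erase_add_one hA
          rw [← this, pow_succ]; ring
        · simp
      · have : B ⊆ insert j A ↔ B ⊆ A := by
          rw [Finset.subset_insert_iff_of_notMem hj]
        simp only [hA, if_false, this, Finset.card_insert_of_notMem, not_false_eq_true]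
        split_ifs
        · rw [pow_succ]; ring
        · simp
    · intro A _ _
      split_ifs with hA
      · intro h; rw [← h] at hA; simp at hA
      · intro h; apply hA; rw [← h]; simp
    · simp
    · intro A _
      by_cases hA : j ∈ A
      · simp [hA]
      · simp [hA]

theorem aux_expand_word {A : Type*} [Ring A] {d n : ℕ} (w0 : Fin d → ℕ) (w : Fin n → ℕ)
    (y : Fin d → A) :
    ∑ B : Finset (Fin d), (-1 : ℤ) ^ B.card •
      (List.ofFn (fun k => ∑ j : Fin d, if j ∈ B ∧ w0 j = w k then y j else 0)).prod
      = ∑ r : Fin n → Fin d, if (∀ k, w0 (r k) = w k) ∧ Function.Surjective r then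
          (-1 : ℤ) ^ d • (List.ofFn (fun k => y (r k))).prod else 0 := by
  have h1 : ∀ B : Finset (Fin d), (List.ofFn (fun k => ∑ j : Fin d, if j ∈ B ∧ w0 j = w k then y j else 0)).prod
      = ∑ r : Fin n → Fin d, if (∀ k, w0 (r k) = w k) ∧ Finset.univ.image r ⊆ B then
        (List.ofFn (fun k => y (r k))).prod else 0 := by
    intro B
    have := (MultilinearMap.mkPiAlgebraFin ℤ n A).map_sum
      (fun (k : Fin n) (j : Fin d) => if j ∈ B ∧ w0 j = w k then y j else 0)
    simp only [MultilinearMap.mkPiAlgebraFin_apply] at this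
    rw [this]
    apply Finset.sum_congr rfl
    intro r _
    split_ifs with h
    · congr 2
      ext k
      rw [if_pos]
      exact ⟨h.2 (Finset.mem_image_of_mem _ (Finset.mem_univ _)), h.1 k⟩
    · have : ∃ k, ¬ (r k ∈ B ∧ w0 (r k) = w k) := by
        by_contra hh
        push Not at hh
        apply h
        refine ⟨fun k => (hh k).2, ?_⟩
        intro j hj
        obtain ⟨k, _, rfl⟩ := Finset.mem_image.mp hj
        exact (hh k).1
      obtain ⟨k, hk⟩ := this
      apply (MultilinearMap.mkPiAlgebraFin ℤ n A).map_coord_zero (m := fun k => if r k ∈ B ∧ w0 (r k) = w k then y (r k) else 0) k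
      rw [if_neg hk]
  simp_rw [h1, Finset.smul_sum]
  rw [Finset.sum_comm]
  apply Finset.sum_congr rfl
  intro r _
  by_cases hr : ∀ k, w0 (r k) = w k
  · simp only [hr, implies_true, true_and]
    have := aux_mobius (Finset.univ.image r)
    have h2 : (Finset.univ.image r = Finset.univ) ↔ Function.Surjective r := by
      rw [Finset.eq_univ_iff_forall]; simp [Function.Surjective]
    simp only [h2] at this
    have h3 := congrArg (fun z : ℤ => z • (List.ofFn (fun k => y (r k))).prod) this
    simp only [Finset.sum_smul, ite_smul, zero_smul] at h3
    rw [← h3]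
    apply Finset.sum_congr rfl
    intro B _
    split_ifs <;> simp
  · simp [hr]

theorem aux_linearize {F : Type*} [Field F] {A : Type*} [Ring A] [Algebra F A]
    (f : FreeAlgebra F ℕ) (hf : ∃ a : ℕ → A, ∃ x, FreeAlgebra.lift F a f * x ≠ x * FreeAlgebra.lift F a f) :
    ∃ (d : ℕ) (c : Equiv.Perm (Fin d) → F), 0 < d ∧ c 1 ≠ 0 ∧ ∀ y : Fin d → A,
      auxMlin c y ∈ AddSubgroup.closure (Set.range fun a : ℕ → A => FreeAlgebra.lift F a f) := by
  classical
  obtain ⟨g, hg, hg0⟩ := aux_lift_expand (A := A) f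
  have hne : ∃ w ∈ g.support, w ≠ [] := by
    by_contra hh
    push Not at hh
    obtain ⟨z, hz⟩ := hg0 hh
    obtain ⟨a, x, hx⟩ := hf
    apply hx
    rw [hz]
    exact Algebra.commutes z x
  obtain ⟨w1, hw1, hw1n⟩ := hne
  obtain ⟨wl, hwl, hmax⟩ := Finset.exists_max_image g.support List.length ⟨w1, hw1⟩
  obtain ⟨d, w0, rfl⟩ : ∃ d, ∃ w0 : Fin d → ℕ, wl = List.ofFn w0 :=
    ⟨wl.length, wl.get, by simp⟩
  have hd : 0 < d := by
    have := hmax w1 hw1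
    have h2 := List.length_pos_iff.mpr hw1n
    simp at this; omega
  refine ⟨d, fun σ => g (List.ofFn (w0 ∘ σ)), hd, ?_, fun y => ?_⟩
  · simpa using hwl
  · set T := AddSubgroup.closure (Set.range fun a : ℕ → A => FreeAlgebra.lift F a f)
    have key : ∑ B : Finset (Fin d), (-1 : ℤ) ^ B.card •
        FreeAlgebra.lift F (fun i => ∑ j : Fin d, if j ∈ B ∧ w0 j = i then y j else 0) f
        = (-1 : ℤ) ^ d • auxMlin (fun σ => g (List.ofFn (w0 ∘ σ))) y := by
      simp_rw [hg, Finsupp.sum, Finset.smul_sum]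
      rw [Finset.sum_comm]
      have : ∀ w ∈ g.support, ∑ B : Finset (Fin d), (-1 : ℤ) ^ B.card • g w •
          (w.map (fun i => ∑ j : Fin d, if j ∈ B ∧ w0 j = i then y j else 0)).prod
          = ∑ σ : Equiv.Perm (Fin d), if List.ofFn (w0 ∘ σ) = w then
            (-1 : ℤ) ^ d • g w • (List.ofFn (fun k => y (σ k))).prod else 0 := by
        intro w hw
        have hlen := hmax w hw
        obtain ⟨n, w, rfl⟩ : ∃ n, ∃ w' : Fin n → ℕ, w = List.ofFn w' :=
          ⟨w.length, w.get, by simp⟩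
        simp only [List.length_ofFn] at hlen
        have h := aux_expand_word w0 w y
        simp_rw [List.map_ofFn, smul_comm _ (g (List.ofFn w)), ← Finset.smul_sum, Function.comp_def]
        rw [h]
        by_cases hnd : n = d
        · subst hnd
          rw [Finset.smul_sum]
          simp_rw [List.ofFn_inj]
          rw [← Finset.sum_filter_add_sum_filter_not Finset.univ (fun r : Fin n → Fin n => Function.Bijective r)]
          rw [Finset.sum_eq_zero (s := Finset.univ.filter (fun r : Fin n → Fin n => ¬ Function.Bijective r))]
          · rw [add_zero]
            refine (Finset.sum_bij (fun (σ : Equiv.Perm (Fin n)) _ => (σ : Fin n → Fin n)) ?_ ?_ ?_ ?_).symm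
            · intro σ _; exact Finset.mem_filter.mpr ⟨Finset.mem_univ _, σ.bijective⟩
            · intro σ _ τ _ h; exact DFunLike.coe_injective h
            · intro r hr
              simp only [Finset.mem_filter, Finset.mem_univ, true_and] at hr
              exact ⟨Equiv.ofBijective r hr, by simp, rfl⟩
            · intro σ _
              simp only [σ.surjective, and_true, funext_iff, smul_ite, smul_zero]
          · intro r hr
            simp only [Finset.mem_filter, Finset.mem_univ, true_and] at hr
            rw [if_neg, smul_zero]
            rintro ⟨_, h2⟩
            exact hr (Finite.surjective_iff_bijective.mp h2)
        · rw [Finset.sum_eq_zero, Finset.sum_eq_zero, smul_zero]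
          · intro σ _
            rw [if_neg]
            intro h
            have := congrArg List.length h
            simp at this
            exact hnd this.symm
          · intro r _
            rw [if_neg]
            rintro ⟨_, h2⟩
            have := Fintype.card_le_of_surjective r h2
            simp at this; omega
      rw [Finset.sum_congr rfl this, Finset.sum_comm, auxMlin, Finset.smul_sum]
      apply Finset.sum_congr rfl
      intro σ _
      rw [Finset.sum_ite_eq]
      split_ifs with h
      · rfl
      · rw [Finsupp.notMem_support_iff.mp h]; simp
    have hT : (-1 : ℤ) ^ d • auxMlin (fun σ => g (List.ofFn (w0 ∘ σ))) y ∈ T := by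
      rw [← key]
      apply T.sum_mem
      intro B _
      apply T.zsmul_mem
      exact AddSubgroup.subset_closure ⟨_, rfl⟩
    have h2 := T.zsmul_mem hT ((-1 : ℤ) ^ d)
    rw [smul_smul, ← mul_pow] at h2
    simpa using h2

end Linearization


section Multilinear

theorem aux_word_comm {A : Type*} [Ring A] {n : ℕ} (z : Fin n → A) (x : A) :
    (List.ofFn z).prod * x - x * (List.ofFn z).prod
      = ∑ k, (List.ofFn (Function.update z k (z k * x - x * z k))).prod := by
  induction n with
  | zero => simp
  | succ n ih =>
    rw [Fin.sum_univ_succ]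
    have h0 : (List.ofFn (Function.update z 0 (z 0 * x - x * z 0))).prod
        = (z 0 * x - x * z 0) * (List.ofFn (fun i : Fin n => z i.succ)).prod := by
      rw [List.ofFn_succ, List.prod_cons]
      simp [Function.update_of_ne, Fin.succ_ne_zero]
    have h1 : ∀ k : Fin n, (List.ofFn (Function.update z k.succ (z k.succ * x - x * z k.succ))).prod
        = z 0 * (List.ofFn (Function.update (fun i : Fin n => z i.succ) k (z k.succ * x - x * z k.succ))).prod := by
      intro k
      rw [List.ofFn_succ, List.prod_cons]
      rw [Function.update_of_ne (Fin.succ_ne_zero k).symm]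
      congr 3
      ext i
      simp [Function.update_apply]
    rw [h0]
    simp_rw [h1]
    rw [← Finset.mul_sum, ← ih (fun i => z i.succ), List.ofFn_succ, List.prod_cons]
    noncomm_ring

theorem aux_mlin_comm {F : Type*} [Field F] {A : Type*} [Ring A] [Algebra F A] {d : ℕ}
    (c : Equiv.Perm (Fin d) → F) (y : Fin d → A) (x : A) :
    auxMlin c y * x - x * auxMlin c y = ∑ j, auxMlin c (Function.update y j (y j * x - x * y j)) := by
  unfold auxMlin
  rw [Finset.sum_comm, Finset.sum_mul, Finset.mul_sum, ← Finset.sum_sub_distrib]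
  apply Finset.sum_congr rfl
  intro σ _
  rw [smul_mul_assoc, mul_smul_comm, ← smul_sub, aux_word_comm, Finset.smul_sum]
  rw [← Equiv.sum_comp σ (fun j => c σ • (List.ofFn (fun k => Function.update y j (y j * x - x * y j) (σ k))).prod)]
  apply Finset.sum_congr rfl
  intro k _
  congr 3
  ext i
  simp [Function.update_apply]

theorem aux_mlin_done {F : Type*} [Field F] {S : Type*} [Ring S] [IsSimpleRing S] [Algebra F S] {d : ℕ}
    (c : Equiv.Perm (Fin d) → F) (T P : AddSubgroup S) (hT : ∀ y, auxMlin c y ∈ T)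
    (hP : ∀ a ∈ T, ∀ b ∈ T, a * b ∈ P)
    (h : ∃ y y' : Fin d → S, auxMlin c y * auxMlin c y' ≠ auxMlin c y' * auxMlin c y) :
    ∀ s, s ∈ P := by
  have hle : AddSubgroup.closure (Set.range (auxMlin c : (Fin d → S) → S)) ≤ T := by
    rw [AddSubgroup.closure_le]
    rintro _ ⟨y, rfl⟩
    exact hT y
  apply aux_herstein (AddSubgroup.closure (Set.range (auxMlin c : (Fin d → S) → S))) P
  · intro l hl x
    induction hl using AddSubgroup.closure_induction with
    | mem l hl =>
      obtain ⟨y, rfl⟩ := hl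
      rw [aux_mlin_comm]
      apply AddSubgroup.sum_mem
      intro j _
      exact AddSubgroup.subset_closure ⟨_, rfl⟩
    | zero => simp
    | add a b _ _ ha hb =>
      have := add_mem ha hb
      convert this using 1
      noncomm_ring
    | neg a _ ha =>
      have := neg_mem ha
      convert this using 1
      noncomm_ring
  · obtain ⟨y, y', hy⟩ := h
    exact ⟨_, AddSubgroup.subset_closure ⟨y, rfl⟩, _, AddSubgroup.subset_closure ⟨y', rfl⟩, hy⟩
  · intro a ha b hb
    exact hP a (hle ha) b (hle hb)

theorem aux_word_monomial {D : Type*} [Ring D] {n : ℕ} (r : Fin n → ℕ) (a : Fin n → D) :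
    (List.ofFn (fun k => Polynomial.monomial (r k) (a k))).prod
      = Polynomial.monomial (∑ k, r k) (List.ofFn a).prod := by
  induction n with
  | zero => simp
  | succ n ih =>
    rw [List.ofFn_succ, List.prod_cons, ih (fun k => r k.succ) (fun k => a k.succ), Polynomial.monomial_mul_monomial, Fin.sum_univ_succ, List.ofFn_succ, List.prod_cons]

theorem aux_mlin_monomial {F : Type*} [Field F] {D : Type*} [Ring D] [Algebra F D] {d : ℕ}
    (c : Equiv.Perm (Fin d) → F) (r : Fin d → ℕ) (a : Fin d → D) :
    auxMlin c (fun k => Polynomial.monomial (r k) (a k))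
      = Polynomial.monomial (∑ k, r k) (auxMlin c a) := by
  unfold auxMlin
  rw [map_sum]
  apply Finset.sum_congr rfl
  intro σ _
  rw [aux_word_monomial (fun k => r (σ k)) (fun k => a (σ k)), Equiv.sum_comp σ r, Polynomial.smul_monomial]

theorem aux_mlin_sum {F : Type*} [Field F] {A : Type*} [Ring A] [Algebra F A] {d : ℕ}
    (c : Equiv.Perm (Fin d) → F) {α : Fin d → Type} (s : (i : Fin d) → Finset (α i))
    (g : (i : Fin d) → α i → A) :
    auxMlin c (fun k => ∑ j ∈ s k, g k j)
      = ∑ r ∈ Fintype.piFinset s, auxMlin c (fun k => g k (r k)) := by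
  let m : MultilinearMap F (fun _ : Fin d => A) A :=
    ∑ σ : Equiv.Perm (Fin d), c σ • (MultilinearMap.mkPiAlgebraFin F d A).domDomCongr σ
  have hm : ∀ y, m y = auxMlin c y := by
    intro y
    simp [m, auxMlin]
  simp_rw [← hm]
  exact m.map_sum_finset g s

theorem aux_mlin_poly_comm {F : Type*} [Field F] {D : Type*} [Ring D] [Algebra F D] {d : ℕ}
    (c : Equiv.Perm (Fin d) → F)
    (h : ∀ y y' : Fin d → D, auxMlin c y * auxMlin c y' = auxMlin c y' * auxMlin c y)
    (p q : Fin d → Polynomial D) : auxMlin c p * auxMlin c q = auxMlin c q * auxMlin c p := by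
  have hp : p = fun k => ∑ j ∈ (p k).support, Polynomial.monomial j ((p k).coeff j) := by
    ext1 k; exact Polynomial.as_sum_support (p k)
  have hq : q = fun k => ∑ j ∈ (q k).support, Polynomial.monomial j ((q k).coeff j) := by
    ext1 k; exact Polynomial.as_sum_support (q k)
  rw [hp, hq, aux_mlin_sum c (α := fun _ => ℕ), aux_mlin_sum c (α := fun _ => ℕ)]
  apply Commute.sum_left
  intro r _
  apply Commute.sum_right
  intro r' _
  rw [aux_mlin_monomial c r (fun k => (p k).coeff (r k)), aux_mlin_monomial c r' (fun k => (q k).coeff (r' k))]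
  unfold Commute SemiconjBy
  rw [Polynomial.monomial_mul_monomial, Polynomial.monomial_mul_monomial, h, add_comm]

end Multilinear

section Chain
variable {F A V : Type*} [Field F] [Ring A] [Algebra F A] [AddCommGroup V] [Module A V]

theorem aux_chain_step [IsSimpleModule A V]
    (hann : ∀ s : Finset V, ∃ a : A, (∀ v ∈ s, a • v = 0) ∧ ∃ v : V, a • v ≠ 0)
    (s : Finset V) (v : V) (hv : ∃ a : A, (∀ u ∈ s, a • u = 0) ∧ a • v ≠ 0) :
    ∃ (v' : V) (x : A), (∀ u ∈ s, x • u = 0) ∧ x • v = v' ∧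
      ∃ a : A, (∀ u ∈ s, a • u = 0) ∧ a • v = 0 ∧ a • v' ≠ 0 := by
  classical
  obtain ⟨a, ha, v', hv'⟩ := hann (insert v s)
  obtain ⟨b, hb, hbv⟩ := hv
  have htop : Submodule.span A {b • v} = ⊤ := by
    rcases eq_bot_or_eq_top (Submodule.span A {b • v}) with h | h
    · exact absurd (Submodule.span_singleton_eq_bot.mp h) hbv
    · exact h
  have : v' ∈ Submodule.span A {b • v} := by rw [htop]; trivial
  obtain ⟨e, he⟩ := Submodule.mem_span_singleton.mp this
  refine ⟨v', e * b, ?_, ?_, a, ?_, ?_, hv'⟩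
  · intro u hu; rw [mul_smul, hb u hu, smul_zero]
  · rw [mul_smul, he]
  · intro u hu; exact ha u (Finset.mem_insert_of_mem hu)
  · exact ha v (Finset.mem_insert_self _ _)

theorem aux_chain_seq [IsSimpleModule A V]
    (hann : ∀ s : Finset V, ∃ a : A, (∀ v ∈ s, a • v = 0) ∧ ∃ v : V, a • v ≠ 0) :
    ∃ (v : ℕ → V) (x : ℕ → A), (∀ i, v i ≠ 0) ∧ (∀ i, x i • v i = v (i + 1)) ∧
      ∀ i j, j < i → x i • v j = 0 := by
  classical
  let St := {p : Finset V × V // ∃ a : A, (∀ u ∈ p.1, a • u = 0) ∧ a • p.2 ≠ 0}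
  have step : ∀ p : St, ∃ (q : St) (x : A), q.1.1 = insert p.1.2 p.1.1 ∧ (∀ u ∈ p.1.1, x • u = 0) ∧
      x • p.1.2 = q.1.2 := by
    rintro ⟨⟨s, v⟩, hp⟩
    obtain ⟨v', x, h1, h2, a, h3, h4, h5⟩ := aux_chain_step hann s v hp
    refine ⟨⟨⟨insert v s, v'⟩, a, ?_, h5⟩, x, rfl, h1, h2⟩
    intro u hu
    rcases Finset.mem_insert.mp hu with rfl | hu
    · exact h4
    · exact h3 u hu
  choose nxt xx h1 h2 h3 using step
  obtain ⟨a0, _, v0, hv0⟩ := hann ∅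
  let p0 : St := ⟨⟨∅, v0⟩, a0, by simp, hv0⟩
  let sq : ℕ → St := fun n => Nat.rec p0 (fun _ p => nxt p) n
  have hs : ∀ n, sq (n + 1) = nxt (sq n) := fun n => rfl
  have hmem : ∀ i j, j < i → (sq j).1.2 ∈ (sq i).1.1 := by
    intro i
    induction i with
    | zero => intro j hj; omega
    | succ i ih =>
      intro j hj
      rw [hs, h1]
      rcases Nat.lt_succ_iff_lt_or_eq.mp hj with h | rfl
      · exact Finset.mem_insert_of_mem (ih j h)
      · exact Finset.mem_insert_self _ _
  refine ⟨fun i => (sq i).1.2, fun i => xx (sq i), ?_, ?_, ?_⟩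
  · intro i h
    obtain ⟨a, _, ha⟩ := (sq i).2
    apply ha
    have h : (sq i).1.2 = 0 := h
    rw [h, smul_zero]
  · intro i; exact h3 _
  · intro i j hj
    exact h2 _ _ (hmem i j hj)

theorem aux_chain_word (v : ℕ → V) (x : ℕ → A) (h0 : ∀ i j, j < i → x i • v j = 0)
    (h1 : ∀ i, x i • v i = v (i + 1)) (l : List ℕ) (a : ℕ) (ha : ∀ i ∈ l, a ≤ i) (hl : l.Nodup) :
    (l.reverse.map x).prod • v a = 0 ∨ l = List.range' a l.length := by
  induction l generalizing a with
  | nil => right; simp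
  | cons i l ih =>
    rw [List.reverse_cons, List.map_append, List.prod_append, mul_smul]
    simp only [List.map_cons, List.map_nil, List.prod_singleton]
    rcases (ha i (by simp)).lt_or_eq with h | rfl
    · left
      rw [h0 i a h, smul_zero]
    · rw [h1]
      have hl' := List.nodup_cons.mp hl
      rcases ih (a + 1) (fun j hj => by
        have h2 := ha j (List.mem_cons_of_mem _ hj)
        have h3 : j ≠ a := fun h => hl'.1 (h ▸ hj)
        omega) hl'.2 with h | h
      · left; exact h
      · right; rw [List.length_cons, List.range'_succ, ← h]

theorem aux_chain_word' (v : ℕ → V) (x : ℕ → A)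
    (h1 : ∀ i, x i • v i = v (i + 1)) (n a : ℕ) :
    ((List.range' a n).reverse.map x).prod • v a = v (a + n) := by
  induction n generalizing a with
  | zero => simp
  | succ n ih =>
    rw [List.range'_succ, List.reverse_cons, List.map_append, List.prod_append, mul_smul]
    simp only [List.map_cons, List.map_nil, List.prod_singleton]
    rw [h1, ih]
    congr 1; ring

theorem aux_chain_mlin {d : ℕ} (c : Equiv.Perm (Fin d) → F) (hd : 0 < d)
    (v : ℕ → V) (x : ℕ → A) (h0 : ∀ i j, j < i → x i • v j = 0)
    (h1 : ∀ i, x i • v i = v (i + 1)) (a b : ℕ) (hab : a ≤ b) :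
    auxMlin c (fun k => x (b + (Fin.rev k).val)) • v a
      = if a = b then algebraMap F A (c 1) • v (a + d) else 0 := by
  have hrev : (List.ofFn (fun k : Fin d => b + (Fin.rev k).val)).reverse = List.range' b d := by
    apply List.ext_getElem
    · simp
    · intro n h1 h2
      simp at h1
      simp [List.getElem_reverse, Fin.rev]
      omega
  have hform : ∀ σ : Equiv.Perm (Fin d), (List.ofFn (fun k => x (b + (Fin.rev (σ k)).val)))
      = (List.ofFn (fun k => b + (Fin.rev (σ k)).val)).reverse.reverse.map x := by
    intro σ
    rw [List.reverse_reverse, List.map_ofFn]; rfl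
  have hdich := fun σ : Equiv.Perm (Fin d) => aux_chain_word v x h0 h1
    (List.ofFn (fun k => b + (Fin.rev (σ k)).val)).reverse a (by
      intro i hi
      simp only [List.mem_reverse, List.mem_ofFn] at hi
      obtain ⟨k, rfl⟩ := hi
      omega) (by
      rw [List.nodup_reverse, List.nodup_ofFn]
      intro k k' h
      have h : b + (Fin.rev (σ k)).val = b + (Fin.rev (σ k')).val := h
      have := Fin.rev_injective (Fin.ext (Nat.add_left_cancel h))
      exact σ.injective this)
  simp only [List.length_reverse, List.length_ofFn] at hdich
  unfold auxMlin
  rw [Finset.sum_smul]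
  split_ifs with h
  · subst h
    rw [Finset.sum_eq_single 1]
    · rw [hform]
      simp only [Equiv.Perm.coe_one, id_eq, hrev]
      rw [← aux_chain_word' v x h1 d a, Algebra.smul_def, mul_smul]
    · intro σ _ hσ
      rw [hform]
      rcases hdich σ with h | h
      · rw [Algebra.smul_def, mul_smul, h, smul_zero]
      · exfalso
        rw [← hrev, List.reverse_inj, List.ofFn_inj] at h
        apply hσ
        ext k
        have := congrFun h k
        have := Fin.rev_injective (Fin.ext (Nat.add_left_cancel this))
        simp [this]
    · simp
  · apply Finset.sum_eq_zero
    intro σ _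
    rw [hform]
    rcases hdich σ with h' | h'
    · rw [Algebra.smul_def, mul_smul, h', smul_zero]
    · exfalso
      have : a ∈ List.range' a d := by simp [hd]
      rw [← h'] at this
      simp only [List.mem_reverse, List.mem_ofFn] at this
      obtain ⟨k, hk⟩ := this
      omega

theorem aux_chain [IsSimpleModule A V] {d : ℕ} (c : Equiv.Perm (Fin d) → F) (hd : 0 < d) (hc : c 1 ≠ 0)
    (hann : ∀ s : Finset V, ∃ a : A, (∀ v ∈ s, a • v = 0) ∧ ∃ v : V, a • v ≠ 0) :
    ∃ y y' : Fin d → A, auxMlin c y * auxMlin c y' ≠ auxMlin c y' * auxMlin c y := by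
  obtain ⟨v, x, hv, h1, h0⟩ := aux_chain_seq hann
  refine ⟨fun k => x (d + (Fin.rev k).val), fun k => x (0 + (Fin.rev k).val), fun h => ?_⟩
  have h2 := congrArg (fun a : A => a • v 0) h
  simp only [mul_smul] at h2
  rw [aux_chain_mlin c hd v x h0 h1 0 0 le_rfl, aux_chain_mlin c hd v x h0 h1 0 d (by omega),
    if_pos rfl, if_neg (by omega), smul_zero, ← mul_smul, ← Algebra.commutes, mul_smul, zero_add,
    aux_chain_mlin c hd v x h0 h1 d d le_rfl, if_pos rfl] at h2
  have h3 := congrArg (fun u : V => algebraMap F A ((c 1)⁻¹ * (c 1)⁻¹) • u) h2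
  simp only [smul_zero, ← mul_smul, ← map_mul] at h3
  have : (c 1)⁻¹ * (c 1)⁻¹ * (c 1 * c 1) = 1 := by field_simp
  rw [mul_assoc] at h3
  simp only [mul_assoc] at this h3
  simp only [this, map_one, one_smul] at h3
  exact hv _ h3

end Chain


theorem aux_artinian {F S : Type*} [Field F] [Ring S] [IsSimpleRing S] [Algebra F S] {d : ℕ}
    (c : Equiv.Perm (Fin d) → F) (hd : 0 < d) (hc : c 1 ≠ 0)
    (h : ∀ y y' : Fin d → S, auxMlin c y * auxMlin c y' = auxMlin c y' * auxMlin c y) :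
    IsArtinianRing S := by
  obtain ⟨I, hI⟩ := Ideal.exists_maximal S
  have : IsSimpleModule S (S ⧸ I) := isSimpleModule_iff_isCoatom.mpr hI.out
  have : Nontrivial (S ⧸ I) := IsSimpleModule.nontrivial S _
  by_contra hart
  obtain ⟨y, y', hy⟩ := aux_chain (A := S) (V := S ⧸ I) c hd hc (by
    intro s
    by_contra hs
    push Not at hs
    have hfaith : ∀ a : S, (∀ v : S ⧸ I, a • v = 0) → a = 0 := by
      intro a ha
      by_contra ha0
      let U : AddSubgroup S := (Module.annihilator S (S ⧸ I)).toAddSubgroup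
      have hU := aux_simple_top U a ha0 (by
        intro x y
        change x * a * y ∈ Module.annihilator S (S ⧸ I)
        rw [Module.mem_annihilator]
        intro m
        rw [mul_smul, mul_smul, ha, smul_zero])
      have h1 : (1 : S) ∈ Module.annihilator S (S ⧸ I) := hU 1
      rw [Module.mem_annihilator] at h1
      obtain ⟨v, hv⟩ := exists_ne (0 : S ⧸ I)
      apply hv
      have := h1 v
      rwa [one_smul] at this
    apply hart
    let φ : S →ₗ[S] (s → S ⧸ I) := LinearMap.pi fun v => LinearMap.toSpanSingleton S (S ⧸ I) v.1
    have : IsArtinian S S := isArtinian_of_injective φ (by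
      rw [← LinearMap.ker_eq_bot, LinearMap.ker_eq_bot']
      intro a ha
      apply hfaith
      apply hs
      intro v hv
      exact congrFun ha ⟨v, hv⟩)
    exact this)
  exact hy (h y y')

/-- Right multiplication as an endomorphism. -/
def auxR {D : Type*} [DivisionRing D] (y : D) : AddMonoid.End D := AddMonoidHom.mulRight y

theorem auxR_apply {D : Type*} [DivisionRing D] (y v : D) : auxR y v = v * y := rfl

theorem auxR_pow {D : Type*} [DivisionRing D] (y : D) (n : ℕ) (v : D) : (auxR y ^ n) v = v * y ^ n := by
  induction n generalizing v with
  | zero => simp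
  | succ n ih =>
    rw [pow_succ, pow_succ']
    change (auxR y ^ n) (auxR y v) = _
    rw [ih, auxR_apply, mul_assoc]

/-- `D[X]` acting on `D`, with `X` acting by right multiplication by `y`. -/
noncomputable def auxAct {D : Type*} [DivisionRing D] (y : D) : Polynomial D →+* AddMonoid.End D :=
  Polynomial.eval₂RingHom' (Module.toAddMonoidEnd D D) (auxR y) (by
    intro a
    apply AddMonoidHom.ext
    intro x
    exact (mul_assoc a x y).symm)

theorem auxAct_monomial {D : Type*} [DivisionRing D] (y d v : D) (n : ℕ) :
    auxAct y (Polynomial.monomial n d) v = d * (v * y ^ n) := by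
  change Polynomial.eval₂ (Module.toAddMonoidEnd D D) (auxR y) (Polynomial.monomial n d) v = _
  rw [Polynomial.eval₂_monomial, ← auxR_pow]
  rfl

theorem auxAct_C {D : Type*} [DivisionRing D] (y d v : D) : auxAct y (Polynomial.C d) v = d * v := by
  rw [← Polynomial.monomial_zero_left, auxAct_monomial, pow_zero, mul_one]

theorem auxAct_mul {D : Type*} [DivisionRing D] (y : D) (p q : Polynomial D) (v : D) :
    auxAct y (p * q) v = auxAct y p (auxAct y q v) := by
  rw [map_mul]; rfl

theorem auxAct_one {D : Type*} [DivisionRing D] (y : D) (p : Polynomial D) :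
    auxAct y p 1 = p.sum fun i a => a * y ^ i := by
  induction p using Polynomial.induction_on' with
  | add p q hp hq =>
    rw [map_add, Polynomial.sum_add_index]
    · rw [← hp, ← hq]; rfl
    · simp
    · simp [add_mul]
  | monomial n a =>
    rw [Polynomial.sum_monomial_index _ _ (by simp)]
    rw [auxAct_monomial, one_mul]

theorem auxAct_faithful {D : Type*} [DivisionRing D] (y : D) (hy : ¬ IsAlgebraic (Subring.center D) y)
    (p : Polynomial D) (hp : ∀ v, auxAct y p v = 0) : p = 0 := by
  classical
  by_contra hp0
  have hex : ∃ n, ∃ p : Polynomial D, p ≠ 0 ∧ (∀ v, auxAct y p v = 0) ∧ p.natDegree = n :=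
    ⟨_, p, hp0, hp, rfl⟩
  obtain ⟨p, hp0, hp, hn⟩ := Nat.find_spec hex
  have hmin : ∀ q : Polynomial D, (∀ v, auxAct y q v = 0) → q.natDegree < p.natDegree → q = 0 := by
    intro q hq hlt
    by_contra hq0
    exact Nat.find_min hex (hn ▸ hlt) ⟨q, hq0, hq, rfl⟩
  have hlc : p.leadingCoeff ≠ 0 := Polynomial.leadingCoeff_ne_zero.mpr hp0
  set q : Polynomial D := Polynomial.C p.leadingCoeff⁻¹ * p with hq
  have hqdeg : q.natDegree = p.natDegree := by
    rw [hq, Polynomial.natDegree_C_mul (inv_ne_zero hlc)]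
  have hqm : q.coeff p.natDegree = 1 := by
    rw [hq, Polynomial.coeff_C_mul]
    exact inv_mul_cancel₀ hlc
  have hqann : ∀ v, auxAct y q v = 0 := by
    intro v
    rw [hq, auxAct_mul, hp, map_zero]
  clear_value q
  have hcomm : ∀ b : D, q * Polynomial.C b - Polynomial.C b * q = 0 := by
    intro b
    by_contra hne
    apply hne
    apply hmin
    · intro v
      rw [map_sub]
      change auxAct y _ v - auxAct y _ v = 0
      rw [auxAct_mul, auxAct_mul, hqann, hqann, map_zero, sub_zero]
    · have hle : (q * Polynomial.C b - Polynomial.C b * q).natDegree ≤ p.natDegree := by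
        apply (Polynomial.natDegree_sub_le _ _).trans
        rw [← hqdeg]
        exact max_le (Polynomial.natDegree_mul_C_le _ _) (Polynomial.natDegree_C_mul_le _ _)
      apply lt_of_le_of_ne hle
      intro heq
      apply hne
      rw [← Polynomial.leadingCoeff_eq_zero, Polynomial.leadingCoeff, heq]
      rw [Polynomial.coeff_sub, Polynomial.coeff_mul_C, Polynomial.coeff_C_mul, hqm]
      simp
  have hcen : ∀ i, q.coeff i ∈ Subring.center D := by
    intro i
    rw [Subring.mem_center_iff]
    intro b
    have := congrArg (fun r => Polynomial.coeff r i) (hcomm b)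
    simp only [Polynomial.coeff_sub, Polynomial.coeff_mul_C, Polynomial.coeff_C_mul, Polynomial.coeff_zero] at this
    exact (sub_eq_zero.mp this).symm
  have hlift : q ∈ Polynomial.lifts (algebraMap (Subring.center D) D) := by
    rw [Polynomial.lifts_iff_coeff_lifts]
    intro n
    exact ⟨⟨_, hcen n⟩, rfl⟩
  obtain ⟨r, hr⟩ := Polynomial.mem_lifts _ |>.mp hlift
  apply hy
  refine ⟨r, ?_, ?_⟩
  · rintro rfl
    rw [Polynomial.map_zero] at hr
    rw [← hr] at hqm
    simp at hqm
  · have := hqann 1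
    rw [auxAct_one, ← hr] at this
    rw [Polynomial.aeval_def, ← Polynomial.eval_map, Polynomial.eval_eq_sum]
    exact this

theorem aux_algebraic {F D : Type*} [Field F] [DivisionRing D] [Algebra F D] {d : ℕ}
    (c : Equiv.Perm (Fin d) → F) (hd : 0 < d) (hc : c 1 ≠ 0)
    (h : ∀ y y' : Fin d → D, auxMlin c y * auxMlin c y' = auxMlin c y' * auxMlin c y) (y : D) :
    IsAlgebraic (Subring.center D) y := by
  by_contra hy
  let _ : Module (Polynomial D) D := Module.compHom D (auxAct y)
  have hsm : ∀ (p : Polynomial D) (v : D), p • v = auxAct y p v := fun p v => rfl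
  have : IsSimpleModule (Polynomial D) D := by
    rw [isSimpleModule_iff_toSpanSingleton_surjective]
    refine ⟨inferInstance, fun x hx z => ⟨Polynomial.C (z * x⁻¹), ?_⟩⟩
    rw [LinearMap.toSpanSingleton_apply, hsm, auxAct_C]
    simp [hx]
  obtain ⟨p, q, hpq⟩ := aux_chain (A := Polynomial D) (V := D) c hd hc (by
    intro s
    let φ : Polynomial D →ₗ[D] (s → D) :=
      { toFun := fun p v => auxAct y p v.1
        map_add' := by intro p q; ext v; rw [map_add]; rfl
        map_smul' := by
          intro a p; ext v
          rw [Polynomial.smul_eq_C_mul, auxAct_mul, auxAct_C]; rfl }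
    have hninj : ¬ Function.Injective φ := by
      intro hinj
      exact Polynomial.not_finite (R := D) (Module.Finite.of_injective φ hinj)
    rw [← LinearMap.ker_eq_bot, LinearMap.ker_eq_bot'] at hninj
    push Not at hninj
    obtain ⟨p, hp, hp0⟩ := hninj
    refine ⟨p, fun v hv => congrFun hp ⟨v, hv⟩, ?_⟩
    by_contra hh
    push Not at hh
    exact hp0 (auxAct_faithful y hy p hh))
  exact hpq (aux_mlin_poly_comm c h p q)


theorem aux_eigen {D : Type*} [DivisionRing D] (A : Subring D) (hA : ∀ x ∈ A, ∀ y ∈ A, x * y = y * x)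
    (hfin : Finite A) (a : D) (ha : a ∈ A) (hnc : ∃ b, a * b ≠ b * a) :
    ∃ κ ∈ A, κ ≠ a ∧ ∃ x : D, x ≠ 0 ∧ x * a = κ * x := by
  classical
  by_contra hcon
  push Not at hcon
  have hfld : IsField A := Finite.isDomain_to_isField A
  let _ : Field A := hfld.toField
  let _ : Fintype A := Fintype.ofFinite A
  let φ : Polynomial A →+* AddMonoid.End D :=
    (auxAct a).comp (Polynomial.mapRingHom A.subtype)
  have hφ : ∀ κ : A, ∀ v, φ (Polynomial.X - Polynomial.C κ) v = v * a - κ * v := by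
    intro κ v
    have h1 : φ (Polynomial.X - Polynomial.C κ) = auxAct a (Polynomial.monomial 1 1) - auxAct a (Polynomial.C (κ : D)) := by
      simp [φ, Polynomial.X]
    rw [h1]
    change auxAct a (Polynomial.monomial 1 1) v - auxAct a (Polynomial.C (κ : D)) v = _
    rw [auxAct_monomial, auxAct_C]; simp
  have hinj : ∀ s : Finset A, (⟨a, ha⟩ : A) ∉ s → ∀ v, φ (∏ κ ∈ s, (Polynomial.X - Polynomial.C κ)) v = 0 → v = 0 := by
    intro s
    induction s using Finset.induction_on with
    | empty => intro _ v hv; simpa using hv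
    | insert κ s hκ ih =>
      intro has v hv
      rw [Finset.prod_insert hκ, map_mul] at hv
      change φ (Polynomial.X - Polynomial.C κ) (φ (∏ κ ∈ s, (Polynomial.X - Polynomial.C κ)) v) = 0 at hv
      rw [hφ] at hv
      apply ih (fun h => has (Finset.mem_insert_of_mem h))
      by_contra hne
      refine hcon κ.1 κ.2 ?_ _ hne (sub_eq_zero.mp hv)
      intro h
      apply has
      have h' : (⟨a, ha⟩ : A) = κ := Subtype.ext h.symm
      rw [h']
      exact Finset.mem_insert_self _ _
  have hprod : ∏ κ : A, (Polynomial.X - Polynomial.C κ) = Polynomial.X ^ (Fintype.card A) - Polynomial.X := by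
    have hone : 1 < Fintype.card A := Fintype.one_lt_card
    have hmon : (Polynomial.X ^ (Fintype.card A) - Polynomial.X : Polynomial A).Monic := by
      apply Polynomial.monic_X_pow_sub
      rw [Polynomial.degree_X]
      exact_mod_cast hone
    have h := Polynomial.prod_multiset_X_sub_C_of_monic_of_roots_card_eq hmon (by
      rw [FiniteField.roots_X_pow_card_sub_X, FiniteField.X_pow_card_sub_X_natDegree_eq _ hone]
      simp)
    rw [FiniteField.roots_X_pow_card_sub_X] at h
    exact h
  obtain ⟨b, hb⟩ := hnc
  apply hb
  have h2 := hinj (Finset.univ.erase ⟨a, ha⟩) (by simp) (b * a - a * b) (by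
    rw [← hφ ⟨a, ha⟩ b]
    change (φ _ * φ _) b = 0
    rw [← map_mul, Finset.prod_erase_mul _ _ (Finset.mem_univ _), hprod]
    have h3 : φ (Polynomial.X ^ (Fintype.card A) - Polynomial.X) = auxAct a (Polynomial.monomial (Fintype.card A) 1) - auxAct a (Polynomial.monomial 1 1) := by
      simp [φ, ← Polynomial.X_pow_eq_monomial]
    rw [h3]
    change auxAct a (Polynomial.monomial (Fintype.card A) 1) b - auxAct a (Polynomial.monomial 1 1) b = 0
    rw [auxAct_monomial, auxAct_monomial]
    have h4 := congrArg Subtype.val (FiniteField.pow_card (⟨a, ha⟩ : A))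
    simp only [SubmonoidClass.mk_pow] at h4
    rw [h4]; simp)
  exact (sub_eq_zero.mp h2).symm

theorem aux_finite_center {D : Type*} [DivisionRing D] (hfin : Finite (Subring.center D))
    (halg : ∀ y : D, IsAlgebraic (Subring.center D) y) (a b : D) : a * b = b * a := by
  by_contra hab
  set Z := Subring.center D
  let A : Subalgebra Z D := Algebra.adjoin Z {a}
  have haA : a ∈ A := Algebra.self_mem_adjoin_singleton Z a
  have hfg : ∀ y : D, (Subalgebra.toSubmodule (Algebra.adjoin Z {y})).FG := fun y =>
    (halg y).isIntegral.fg_adjoin_singleton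
  have hfinite : ∀ N : Submodule Z D, N.FG → Finite N := by
    intro N hN
    have : Module.Finite Z N := Module.Finite.iff_fg.mpr hN
    exact Module.finite_of_finite Z
  obtain ⟨κ, hκ, hκa, x, hx, hxa⟩ := aux_eigen A.toSubring (by
    intro x hx y hy
    have := (Algebra.isMulCommutative_adjoin Z (s := {a}) (by rintro _ rfl _ rfl; rfl)).is_comm.comm ⟨x, hx⟩ ⟨y, hy⟩
    exact congrArg Subtype.val this) (hfinite _ (hfg a)) a haA ⟨b, hab⟩
  let B : Subalgebra Z D := Algebra.adjoin Z {x}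
  have hxB : x ∈ B := Algebra.self_mem_adjoin_singleton Z x
  let As := Subalgebra.toSubmodule A
  let Bs := Subalgebra.toSubmodule B
  have h1 : ∀ k ∈ A, ∃ k' ∈ A, x * k = k' * x := by
    intro k hk
    induction hk using Algebra.adjoin_induction with
    | mem y hy => rw [Set.mem_singleton_iff.mp hy]; exact ⟨κ, hκ, hxa⟩
    | algebraMap z => exact ⟨_, A.algebraMap_mem z, (Algebra.commutes z x).symm⟩
    | add y z _ _ hy hz =>
      obtain ⟨y', hy', hy⟩ := hy
      obtain ⟨z', hz', hz⟩ := hz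
      exact ⟨y' + z', add_mem hy' hz', by rw [mul_add, add_mul, hy, hz]⟩
    | mul y z _ _ hy hz =>
      obtain ⟨y', hy', hy⟩ := hy
      obtain ⟨z', hz', hz⟩ := hz
      exact ⟨y' * z', mul_mem hy' hz', by rw [← mul_assoc, hy, mul_assoc, hz, mul_assoc]⟩
  have h2 : ∀ p ∈ B, ∀ k ∈ A, p * k ∈ As * Bs := by
    intro p hp
    induction hp using Algebra.adjoin_induction with
    | mem y hy =>
      rw [Set.mem_singleton_iff.mp hy]
      intro k hk
      obtain ⟨k', hk', h⟩ := h1 k hk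
      rw [h]
      exact Submodule.mul_mem_mul hk' hxB
    | algebraMap z =>
      intro k hk
      rw [Algebra.commutes]
      exact Submodule.mul_mem_mul hk (B.algebraMap_mem z)
    | add y z _ _ hy hz =>
      intro k hk
      rw [add_mul]
      exact add_mem (hy k hk) (hz k hk)
    | mul y z _ _ hy hz =>
      intro k hk
      rw [mul_assoc]
      have := hz k hk
      refine Submodule.mul_induction_on this ?_ ?_
      · intro m hm n hn
        rw [← mul_assoc]
        have h3 := hy m hm
        refine Submodule.mul_induction_on h3 ?_ ?_
        · intro m' hm' n' hn'
          rw [mul_assoc]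
          exact Submodule.mul_mem_mul hm' (mul_mem (S := Subalgebra Z D) hn' hn)
        · intro u v hu hv; rw [add_mul]; exact add_mem hu hv
      · intro u v hu hv; rw [mul_add]; exact add_mem hu hv
  let E : Subalgebra Z D := (As * Bs).toSubalgebra
    (by
      have := Submodule.mul_mem_mul (M := As) (N := Bs) (one_mem A) (one_mem B)
      rwa [mul_one] at this)
    (by
      intro p q hp hq
      refine Submodule.mul_induction_on hp ?_ ?_
      · intro m hm n hn
        refine Submodule.mul_induction_on hq ?_ ?_
        · intro m' hm' n' hn'
          have h3 := h2 n hn m' hm'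
          have h4 : m * n * (m' * n') = m * (n * m') * n' := by noncomm_ring
          rw [h4]
          refine Submodule.mul_induction_on h3 ?_ ?_
          · intro u hu v hv
            have h5 : m * (u * v) * n' = (m * u) * (v * n') := by noncomm_ring
            rw [h5]
            exact Submodule.mul_mem_mul (mul_mem (S := Subalgebra Z D) hm hu) (mul_mem (S := Subalgebra Z D) hv hn')
          · intro u v hu hv; rw [mul_add, add_mul]; exact add_mem hu hv
        · intro u v hu hv; rw [mul_add]; exact add_mem hu hv
      · intro u v hu hv; rw [add_mul]; exact add_mem hu hv)
  have hE : Finite E := hfinite (As * Bs) ((hfg a).mul (hfg x))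
  have hEf : IsField E := Finite.isDomain_to_isField E
  have haE : a ∈ E := by
    have := Submodule.mul_mem_mul (M := As) (N := Bs) haA (one_mem B)
    rwa [mul_one] at this
  have hxE : x ∈ E := by
    have := Submodule.mul_mem_mul (M := As) (N := Bs) (one_mem A) hxB
    rwa [one_mul] at this
  have h6 := congrArg Subtype.val (hEf.mul_comm ⟨x, hxE⟩ ⟨a, haE⟩)
  have h7 : x * a = a * x := h6
  rw [hxa] at h7
  exact hκa (mul_right_cancel₀ hx h7)


section Curves
variable {D : Type*} [DivisionRing D]

theorem aux_zeta (u v z z' : D) (hz : ∀ x, z * x = x * z) (hz' : ∀ x, z' * x = x * z')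
    (h1 : u * v = (v + z) * u) (h2 : (u + 1) * v = (v + z') * (u + 1)) : u * v = v * u := by
  have h3 : (z - z') * u = z' := by
    have : u * v + v = (v + z') * (u + 1) := by rw [← h2]; noncomm_ring
    rw [h1] at this
    have h4 : (z - z') * u = (v + z) * u + v - (v + z') * (u + 1) + z' := by noncomm_ring
    rw [h4, this, sub_self, zero_add]
  by_cases hzz : z - z' = 0
  · rw [hzz, zero_mul] at h3
    have : z = 0 := by rw [sub_eq_zero.mp hzz, ← h3]
    rw [h1, this, add_zero]
  · apply mul_left_cancel₀ hzz
    calc (z - z') * (u * v) = z' * v := by rw [← mul_assoc, h3]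
      _ = v * z' := hz' v
      _ = v * ((z - z') * u) := by rw [h3]
      _ = (v * (z - z')) * u := by rw [mul_assoc]
      _ = ((z - z') * v) * u := by rw [mul_sub, sub_mul z z' v, hz, hz']
      _ = (z - z') * (v * u) := by rw [mul_assoc]

/-- curves inside `T` -/
def AuxCurve (T : AddSubgroup D) (I : Finset ℕ) (a : ℕ → D) : Prop :=
  ∀ z ∈ Subring.center D, ∑ i ∈ I, a i * z ^ i ∈ T

theorem AuxCurve.conj {T : AddSubgroup D} (hT : ∀ u : D, u ≠ 0 → ∀ t ∈ T, u * t * u⁻¹ ∈ T) {I : Finset ℕ} {a : ℕ → D}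
    (ha : AuxCurve T I a) (u : D) (hu : u ≠ 0) : AuxCurve T I (fun i => u * a i * u⁻¹) := by
  intro z hz
  have := hT u hu _ (ha z hz)
  convert this using 1
  rw [Finset.mul_sum, Finset.sum_mul]
  apply Finset.sum_congr rfl
  intro i _
  have hc : z ^ i * u⁻¹ = u⁻¹ * z ^ i := by
    exact (Subring.mem_center_iff.mp (pow_mem hz i) u⁻¹).symm
  rw [mul_assoc, ← hc]
  simp only [mul_assoc]

theorem AuxCurve.scale {T : AddSubgroup D} {I : Finset ℕ} {a : ℕ → D}
    (ha : AuxCurve T I a) (c : D) (hc : c ∈ Subring.center D) : AuxCurve T I (fun i => a i * c ^ i) := by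
  intro z hz
  have := ha (c * z) (mul_mem hc hz)
  convert this using 1
  apply Finset.sum_congr rfl
  intro i _
  rw [mul_assoc, Commute.mul_pow (show Commute c z from (Subring.mem_center_iff.mp hz c))]

theorem AuxCurve.add {T : AddSubgroup D} {I : Finset ℕ} {a b : ℕ → D}
    (ha : AuxCurve T I a) (hb : AuxCurve T I b) : AuxCurve T I (fun i => a i + b i) := by
  intro z hz
  have := add_mem (ha z hz) (hb z hz)
  rw [← Finset.sum_add_distrib] at this
  simpa only [add_mul] using this

theorem AuxCurve.sub {T : AddSubgroup D} {I : Finset ℕ} {a b : ℕ → D}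
    (ha : AuxCurve T I a) (hb : AuxCurve T I b) : AuxCurve T I (fun i => a i - b i) := by
  intro z hz
  have := sub_mem (ha z hz) (hb z hz)
  rw [← Finset.sum_sub_distrib] at this
  simpa only [sub_mul] using this

theorem aux_exists_pow_ne (hinf : Infinite (Subring.center D)) (i j : ℕ) (hij : i ≠ j) :
    ∃ c ∈ Subring.center D, c ^ i ≠ c ^ j := by
  by_contra h
  push Not at h
  have : (Polynomial.X ^ i : Polynomial (Subring.center D)) = Polynomial.X ^ j := by
    apply Polynomial.funext
    intro r
    simp only [Polynomial.eval_pow, Polynomial.eval_X]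
    exact Subtype.ext (h r.1 r.2)
  have := congrArg Polynomial.natDegree this
  simp at this
  exact hij this

theorem aux_curve (T : AddSubgroup D) (hT : ∀ u : D, u ≠ 0 → ∀ t ∈ T, u * t * u⁻¹ ∈ T)
    (hinf : Infinite (Subring.center D)) (I : Finset ℕ) (a : ℕ → D) (ha : AuxCurve T I a)
    (hnc : ∃ i ∈ I, a i ∉ Subring.center D) :
    ∃ m ∈ I, ∃ v, v ∉ Subring.center D ∧ ∀ z ∈ Subring.center D, v * z ^ m ∈ T := by
  classical
  have hex : ∃ n, ∃ a : ℕ → D, AuxCurve T I a ∧ (∃ i ∈ I, a i ∉ Subring.center D) ∧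
      (I.filter (fun i => a i ≠ 0)).card = n := ⟨_, a, ha, hnc, rfl⟩
  obtain ⟨t, ht, ⟨i, hi, hti⟩, hcard⟩ := Nat.find_spec hex
  set n := Nat.find hex with hn
  have hmin : ∀ b : ℕ → D, AuxCurve T I b → (I.filter (fun i => b i ≠ 0)).card < n →
      ∀ i ∈ I, b i ∈ Subring.center D := by
    intro b hb hlt i hi
    by_contra hh
    exact Nat.find_min hex hlt ⟨b, hb, ⟨i, hi, hh⟩, rfl⟩
  -- key centralizer statement
  have key : ∀ b : ℕ → D, AuxCurve T I b → (I.filter (fun i => b i ≠ 0)).card ≤ n →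
      ∀ i ∈ I, ∀ j ∈ I, b j ≠ 0 → ∀ u : D, u * b j = b j * u → u * b i = b i * u := by
    intro b hb hle i hi j hj hbj u hu
    by_cases hu0 : u = 0
    · rw [hu0]; simp
    have hc : ∀ w : D, w ≠ 0 → w * b j = b j * w → w * b i * w⁻¹ - b i ∈ Subring.center D := by
      intro w hw hwj
      apply hmin (fun i => w * b i * w⁻¹ - b i) ((hb.conj hT w hw).sub hb) _ i hi
      apply lt_of_lt_of_le _ hle
      apply Finset.card_lt_card
      rw [Finset.ssubset_iff_of_subset]
      · refine ⟨j, by simp [hj, hbj], ?_⟩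
        simp only [Finset.mem_filter, not_and, not_not]
        intro _
        rw [hwj, mul_assoc, mul_inv_cancel₀ hw, mul_one, sub_self]
      · intro k hk
        simp only [Finset.mem_filter] at hk ⊢
        refine ⟨hk.1, fun h => hk.2 ?_⟩
        rw [h]; simp
    have hz := hc u hu0 hu
    by_cases hu1 : u + 1 = 0
    · have : u = -1 := eq_neg_of_add_eq_zero_left hu1
      rw [this]; simp
    have hz' := hc (u + 1) hu1 (by rw [add_mul, mul_add, hu]; simp)
    apply aux_zeta u (b i) (u * b i * u⁻¹ - b i) ((u + 1) * b i * (u + 1)⁻¹ - b i)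
    · intro x; exact (Subring.mem_center_iff.mp hz x).symm
    · intro x; exact (Subring.mem_center_iff.mp hz' x).symm
    · simp [mul_assoc, hu0]
    · simp [mul_assoc, hu1]
  have keyc : ∀ b : ℕ → D, AuxCurve T I b → (I.filter (fun i => b i ≠ 0)).card ≤ n →
      ∀ i ∈ I, ∀ j ∈ I, b i * b j = b j * b i := by
    intro b hb hle i hi j hj
    by_cases hbj : b j = 0
    · rw [hbj]; simp
    · exact (key b hb hle i hi j hj hbj (b j) rfl).symm
  have hone : ∀ j ∈ I, j ≠ i → t j = 0 := by
    intro j hj hji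
    by_contra htj
    have hnj : t j ∉ Subring.center D := by
      intro h
      apply hti
      rw [Subring.mem_center_iff]
      intro u
      exact key t ht hcard.le i hi j hj htj u (Subring.mem_center_iff.mp h u)
    have hcomm : ∀ u : D, u ≠ 0 → t i * (u * t j * u⁻¹) = (u * t j * u⁻¹) * t i := by
      intro u hu
      set X := t i * (u * t j * u⁻¹) - (u * t j * u⁻¹) * t i with hX
      set Y := (u * t i * u⁻¹) * t j - t j * (u * t i * u⁻¹) with hY
      have h0 := keyc t ht hcard.le i hi j hj
      have h1 : ∀ c ∈ Subring.center D, X * c ^ j + Y * c ^ i = 0 := by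
        intro c hc
        have h2 := keyc (fun k => t k + u * t k * u⁻¹ * c ^ k) (ht.add ((ht.conj hT u hu).scale c hc)) (by
          rw [← hcard]
          apply Finset.card_le_card
          intro k hk
          simp only [Finset.mem_filter] at hk ⊢
          refine ⟨hk.1, fun h => hk.2 ?_⟩
          rw [h]; simp) i hi j hj
        have hci : ∀ x, x * c ^ i = c ^ i * x := Subring.mem_center_iff.mp (pow_mem hc i)
        have hcj : ∀ x, x * c ^ j = c ^ j * x := Subring.mem_center_iff.mp (pow_mem hc j)
        have h3 : (u * t i * u⁻¹) * (u * t j * u⁻¹) = (u * t j * u⁻¹) * (u * t i * u⁻¹) := by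
          have e1 : (u * t i * u⁻¹) * (u * t j * u⁻¹) = u * (t i * t j) * u⁻¹ := by
            simp [mul_assoc, hu]
          have e2 : (u * t j * u⁻¹) * (u * t i * u⁻¹) = u * (t j * t i) * u⁻¹ := by
            simp [mul_assoc, hu]
          rw [e1, e2, h0]
        rw [hX, hY]
        generalize u * t i * u⁻¹ = p at *
        generalize u * t j * u⁻¹ = q at *
        have e3 : (t i + p * c ^ i) * (t j + q * c ^ j)
            = t i * t j + t i * q * c ^ j + p * t j * c ^ i + p * q * (c ^ i * c ^ j) := by
          have : p * c ^ i * t j = p * t j * c ^ i := by rw [mul_assoc, ← hci, mul_assoc]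
          have h' : p * c ^ i * (q * c ^ j) = p * q * (c ^ i * c ^ j) := by
            rw [mul_assoc p, ← mul_assoc (c ^ i), ← hci q]; simp only [mul_assoc]
          rw [add_mul, mul_add, mul_add, this, h']
          simp only [mul_assoc, add_assoc]
        have e4 : (t j + q * c ^ j) * (t i + p * c ^ i)
            = t j * t i + t j * p * c ^ i + q * t i * c ^ j + q * p * (c ^ i * c ^ j) := by
          have : q * c ^ j * t i = q * t i * c ^ j := by rw [mul_assoc, ← hcj, mul_assoc]
          have h' : q * c ^ j * (p * c ^ i) = q * p * (c ^ i * c ^ j) := by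
            rw [mul_assoc q, ← mul_assoc (c ^ j), ← hcj p, hcj (c ^ i)]; simp only [mul_assoc]
          rw [add_mul, mul_add, mul_add, this, h']
          simp only [mul_assoc, add_assoc]
        rw [e3, e4, h3, h0] at h2
        have h5 := sub_eq_zero.mpr h2
        rw [← h5]
        noncomm_ring
      have h2 := h1 1 (one_mem _)
      simp only [one_pow, mul_one] at h2
      obtain ⟨c, hc, hcne⟩ := aux_exists_pow_ne hinf j i hji
      have h3 := h1 c hc
      have hYX : Y = -X := eq_neg_of_add_eq_zero_right h2
      rw [hYX, neg_mul, ← sub_eq_add_neg, ← mul_sub] at h3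
      rcases mul_eq_zero.mp h3 with h | h
      · exact sub_eq_zero.mp h
      · exact absurd (sub_eq_zero.mp h) hcne
    rcases aux_cbh (t i) (t j) hcomm with h | h
    · exact hti (Subring.mem_center_iff.mpr fun x => (h x).symm)
    · exact hnj (Subring.mem_center_iff.mpr fun x => (h x).symm)
  refine ⟨i, hi, t i, hti, fun z hz => ?_⟩
  have := ht z hz
  rwa [Finset.sum_eq_single_of_mem i hi (fun j hj hji => by rw [hone j hj hji, zero_mul])] at this

end Curves


theorem aux_partial_fractions {K D : Type*} [Field K] [DivisionRing D] [Algebra K D] [Infinite K]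
    (y : D) (hy : IsIntegral K y) (hyK : ∀ x : K, y - algebraMap K D x ≠ 0) :
    ∃ (s : Finset K) (α : K → K), ∑ x ∈ s, algebraMap K D (α x) * (y - algebraMap K D x)⁻¹ = 1 := by
  classical
  obtain ⟨μ, hμ, hμy⟩ := hy
  have hμy : Polynomial.aeval y μ = 0 := hμy
  obtain ⟨s, hs⟩ := Infinite.exists_subset_card_eq K μ.natDegree
  set P := Lagrange.nodal s (id : K → K) with hP
  have hPm : P.Monic := Lagrange.nodal_monic
  have hPd : P.natDegree = μ.natDegree := by rw [hP, Lagrange.natDegree_nodal, hs]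
  have hdeg : (P - μ).degree < s.card := by
    rcases Nat.eq_zero_or_pos μ.natDegree with h0 | h0
    · exfalso
      rw [hμ.natDegree_eq_zero.mp h0] at hμy
      simp at hμy
    have : (P - μ).degree < P.degree := by
      apply Polynomial.degree_sub_lt_left
      · rw [Polynomial.degree_eq_natDegree hPm.ne_zero, Polynomial.degree_eq_natDegree hμ.ne_zero, hPd]
      · exact hPm.ne_zero
      · rw [hPm.leadingCoeff, hμ.leadingCoeff]
    rw [hs, ← hPd, ← Polynomial.degree_eq_natDegree hPm.ne_zero]
    exact this
  have hinterp := Lagrange.eq_interpolate (v := (id : K → K)) (s := s) (fun a _ b _ h => h) hdeg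
  rw [Lagrange.interpolate_apply] at hinterp
  have hPy : Polynomial.aeval y P ≠ 0 := by
    rw [hP, Lagrange.nodal]
    have : ∀ s : Finset K, Polynomial.aeval y (∏ i ∈ s, (Polynomial.X - Polynomial.C (id i))) ≠ 0 := by
      intro s
      induction s using Finset.induction_on with
      | empty => simp
      | insert a s ha ih =>
        rw [Finset.prod_insert ha, map_mul]
        apply mul_ne_zero _ ih
        simpa using hyK a
    exact this s
  have h1 := congrArg (Polynomial.aeval y) hinterp
  rw [map_sub, hμy, sub_zero, map_sum] at h1
  refine ⟨s, fun x => (P - μ).eval x * Lagrange.nodalWeight s id x, ?_⟩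
  apply mul_right_cancel₀ hPy
  rw [one_mul, Finset.sum_mul]
  conv_rhs => rw [h1]
  apply Finset.sum_congr rfl
  intro x hx
  have h2 : P = (Polynomial.X - Polynomial.C x) * Lagrange.nodal (s.erase x) id := by
    rw [hP]; exact Lagrange.nodal_eq_mul_nodal_erase hx
  have h3 : Lagrange.basis s id x = Polynomial.C (Lagrange.nodalWeight s id x) * Lagrange.nodal (s.erase x) id := by
    rw [Lagrange.basis, Lagrange.nodalWeight, Lagrange.nodal, map_prod, ← Finset.prod_mul_distrib]
    rfl
  have h4 : (y - algebraMap K D x)⁻¹ * Polynomial.aeval y P = Polynomial.aeval y (Lagrange.nodal (s.erase x) id) := by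
    rw [h2, map_mul, map_sub, Polynomial.aeval_X, Polynomial.aeval_C, inv_mul_cancel_left₀ (hyK x)]
  rw [mul_assoc, h4, h3, map_mul, map_mul, map_mul, Polynomial.aeval_C, Polynomial.aeval_C, mul_assoc]
  rfl

theorem aux_div_alg {D : Type*} [DivisionRing D] (T P : AddSubgroup D)
    (hT : ∀ u : D, u ≠ 0 → ∀ t ∈ T, u * t * u⁻¹ ∈ T)
    (hP : ∀ a ∈ T, ∀ b ∈ T, a * b ∈ P)
    (hinf : Infinite (Subring.center D)) (halg : ∀ y : D, IsAlgebraic (Subring.center D) y)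
    (m : ℕ) (hm : 0 < m) (v : D) (hv : v ∉ Subring.center D)
    (hvT : ∀ z ∈ Subring.center D, v * z ^ m ∈ T) : ∀ s, s ∈ P := by
  set Z := Subring.center D
  let V : AddSubgroup D :=
    { carrier := {x | ∀ z ∈ Z, x * z ^ m ∈ T}
      zero_mem' := by intro z _; simp
      add_mem' := by intro a b ha hb z hz; rw [add_mul]; exact add_mem (ha z hz) (hb z hz)
      neg_mem' := by intro a ha z hz; rw [neg_mul]; exact neg_mem (ha z hz) }
  have hVT : V ≤ T := by
    intro x hx
    have := hx 1 (one_mem _)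
    simpa using this
  have hcz : ∀ z ∈ Z, ∀ x, x * z = z * x := fun z hz x => Subring.mem_center_iff.mp hz x
  have hVconj : ∀ u : D, u ≠ 0 → ∀ t ∈ V, u * t * u⁻¹ ∈ V := by
    intro u hu t ht z hz
    have := hT u hu _ (ht z hz)
    convert this using 1
    have h := hcz _ (pow_mem hz m) u⁻¹
    rw [mul_assoc, h]
    simp only [mul_assoc]
  have hVm : ∀ x ∈ V, ∀ z ∈ Z, x * z ^ m ∈ V := by
    intro x hx z hz w hw
    have := hx (z * w) (mul_mem hz hw)
    rwa [Commute.mul_pow (show Commute z w from (hcz w hw z)), ← mul_assoc] at this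
  let K : Subfield Z :=
    { carrier := {z | ∀ x ∈ V, x * (z : D) ∈ V}
      zero_mem' := by intro x _; simp [V.zero_mem]
      one_mem' := by intro x hx; simpa using hx
      add_mem' := by
        intro a b ha hb x hx
        have := add_mem (ha x hx) (hb x hx)
        rw [← mul_add] at this
        exact this
      mul_mem' := by
        intro a b ha hb x hx
        have := hb _ (ha x hx)
        rw [mul_assoc] at this
        exact this
      neg_mem' := by
        intro a ha x hx
        have := neg_mem (ha x hx)
        rw [← mul_neg] at this
        exact this
      inv_mem' := by
        intro a ha x hx
        by_cases h0 : a = 0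
        · rw [h0]; simp [V.zero_mem]
        · have hpow : ∀ n : ℕ, x * (a : D) ^ n ∈ V := by
            intro n
            induction n with
            | zero => simpa using hx
            | succ n ih => rw [pow_succ, ← mul_assoc]; exact ha _ ih
          have h1 := hVm _ (hpow (m - 1)) ((a⁻¹ : Z) : D) (a⁻¹ : Z).2
          have h2 : ((a⁻¹ : Z) : D) = (a : D) ^ (m - 1) * ((a⁻¹ : Z) : D) ^ m := by
            have : (a⁻¹ : Z) = a ^ (m - 1) * (a⁻¹ : Z) ^ m := by
              obtain ⟨k, rfl⟩ : ∃ k, m = k + 1 := ⟨m - 1, by omega⟩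
              simp only [Nat.add_sub_cancel]
              rw [pow_succ, ← mul_assoc, ← mul_pow, mul_inv_cancel₀ h0]
              simp
            have h3 := congrArg (Subtype.val) this
            exact h3
          rw [h2, ← mul_assoc]
          exact h1 }
  have hKm : ∀ z : Z, z ^ m ∈ K := by
    intro z x hx
    have := hVm x hx z.1 z.2
    simpa using this
  have hKinf : Infinite K := by
    by_contra hfin
    rw [not_infinite_iff_finite] at hfin
    let _ := Fintype.ofFinite K
    have h0 : (∏ k : K, (Polynomial.X ^ m - Polynomial.C (k : Z))) = 0 := by
      apply Polynomial.funext
      intro z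
      rw [Polynomial.eval_prod, Polynomial.eval_zero]
      apply Finset.prod_eq_zero (Finset.mem_univ ⟨z ^ m, hKm z⟩)
      simp
    rw [Finset.prod_eq_zero_iff] at h0
    obtain ⟨k, _, hk⟩ := h0
    exact Polynomial.X_pow_sub_C_ne_zero hm _ hk
  have : IsScalarTower K Z D := IsScalarTower.of_algebraMap_eq (fun x => rfl)
  have : Algebra.IsIntegral K Z := ⟨fun z => by
    refine ⟨Polynomial.X ^ m - Polynomial.C ⟨z ^ m, hKm z⟩, Polynomial.monic_X_pow_sub_C _ hm.ne', ?_⟩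
    rw [Polynomial.eval₂_sub, Polynomial.eval₂_X_pow, Polynomial.eval₂_C]
    exact sub_self _⟩
  have hLie : ∀ l ∈ V, ∀ y, l * y - y * l ∈ V := by
    intro l hl y
    by_cases hyZ : y ∈ Z
    · rw [hcz y hyZ l, sub_self]; exact zero_mem _
    have hne : ∀ x : K, y - algebraMap K D x ≠ 0 := by
      intro x h
      apply hyZ
      rw [sub_eq_zero.mp h]
      exact (x : Z).2
    have hyi : IsIntegral Z y := (halg y).isIntegral
    have hyint : IsIntegral K y := isIntegral_trans (R := K) (A := Z) y hyi
    obtain ⟨s, α, hsum⟩ := aux_partial_fractions y hyint hne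
    have h1 : ∀ x : K, (l * y - y * l) * (y - algebraMap K D x)⁻¹ ∈ V := by
      intro x
      have h2 := sub_mem hl (hVconj _ (hne x) l hl)
      convert h2 using 1
      have hx : l * algebraMap K D x = algebraMap K D x * l := hcz _ (x : Z).2 l
      have h3 : l * y - y * l = l * (y - algebraMap K D x) - (y - algebraMap K D x) * l := by
        rw [mul_sub, sub_mul, hx]; abel
      rw [h3, sub_mul, mul_assoc, mul_inv_cancel₀ (hne x), mul_one]
    have h4 : l * y - y * l = ∑ x ∈ s, (l * y - y * l) * (y - algebraMap K D x)⁻¹ * algebraMap K D (α x) := by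
      conv_lhs => rw [← mul_one (l * y - y * l), ← hsum, Finset.mul_sum]
      apply Finset.sum_congr rfl
      intro x _
      rw [mul_assoc]
      congr 1
      exact (hcz _ (α x : Z).2 _).symm
    rw [h4]
    apply sum_mem
    intro x _
    exact (α x).2 _ (h1 x)
  apply aux_herstein V P hLie
  · by_contra hcon
    push Not at hcon
    rcases aux_cbh v v (fun u hu => hcon v hvT _ (hVconj u hu v hvT)) with h | h <;>
    exact hv (Subring.mem_center_iff.mpr fun x => (h x).symm)
  · intro a ha b hb
    exact hP a (hVT ha) b (hVT hb)


section MatrixCase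
variable {D : Type*} [DivisionRing D] {ι : Type*} [Fintype ι] [DecidableEq ι]

theorem aux_single_mul (i j : ι) (c : D) (s : Matrix ι ι D) (a b : ι) :
    (Matrix.single i j c * s) a b = if a = i then c * s j b else 0 := by
  rw [Matrix.mul_apply]
  by_cases h : a = i
  · subst h
    rw [Finset.sum_eq_single j]
    · simp
    · intro k _ hk; simp [Matrix.single_apply, hk.symm]
    · simp
  · rw [if_neg h]
    apply Finset.sum_eq_zero
    intro k _
    simp [Matrix.single_apply, Ne.symm h]

theorem aux_mul_single (i j : ι) (c : D) (s : Matrix ι ι D) (a b : ι) :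
    (s * Matrix.single i j c) a b = if b = j then s a i * c else 0 := by
  rw [Matrix.mul_apply]
  by_cases h : b = j
  · subst h
    rw [Finset.sum_eq_single i]
    · simp
    · intro k _ hk; simp [Matrix.single_apply, hk.symm]
    · simp
  · rw [if_neg h]
    apply Finset.sum_eq_zero
    intro k _
    simp [Matrix.single_apply, Ne.symm h]

theorem aux_trans_inv (i j : ι) (hij : i ≠ j) (c : D) :
    (1 + Matrix.single i j c) * (1 - Matrix.single i j c) = 1 := by
  have : Matrix.single i j c * Matrix.single i j c = 0 := by
    ext a b
    rw [aux_single_mul]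
    simp [Matrix.single_apply, hij]
  simp [add_mul, mul_sub, this]

theorem aux_trans_inv' (i j : ι) (hij : i ≠ j) (c : D) :
    (1 - Matrix.single i j c) * (1 + Matrix.single i j c) = 1 := by
  have : Matrix.single i j c * Matrix.single i j c = 0 := by
    ext a b
    rw [aux_single_mul]
    simp [Matrix.single_apply, hij]
  simp [sub_mul, mul_add, this]

theorem aux_conj_entry (i j : ι) (c : D) (s : Matrix ι ι D) (a b : ι) :
    ((1 + Matrix.single i j c) * s * (1 - Matrix.single i j c)) a b
      = s a b + (if a = i then c * s j b else 0)
        - (if b = j then (s a i + (if a = i then c * s j i else 0)) * c else 0) := by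
  rw [mul_sub, mul_one, Matrix.sub_apply, aux_mul_single, add_mul, one_mul]
  simp only [Matrix.add_apply, aux_single_mul]

/-- Amitsur type theorem for conjugation invariant additive subgroups of matrix rings. -/
theorem aux_matrix (l : D) (hl : ∀ x, l * x = x * l) (hl0 : l ≠ 0) (hl1 : l ≠ 1) [Nontrivial ι]
    (T P : AddSubgroup (Matrix ι ι D))
    (hT : ∀ U V : Matrix ι ι D, U * V = 1 → V * U = 1 → ∀ t ∈ T, U * t * V ∈ T)
    (hnc : ∃ t ∈ T, ∃ x, t * x ≠ x * t)
    (hP : ∀ a ∈ T, ∀ b ∈ T, a * b ∈ P) : ∀ s, s ∈ P := by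
  have hdiag : ∀ (i : ι) (c : D), c ≠ 0 → ∀ t ∈ T,
      Matrix.diagonal (fun k => if k = i then c else 1) * t *
        Matrix.diagonal (fun k => if k = i then c⁻¹ else 1) ∈ T := by
    intro i c hc t ht
    refine hT _ _ ?_ ?_ t ht
    · rw [Matrix.diagonal_mul_diagonal, ← Matrix.diagonal_one]
      congr 1; funext k; split_ifs <;> simp [hc]
    · rw [Matrix.diagonal_mul_diagonal, ← Matrix.diagonal_one]
      congr 1; funext k; split_ifs <;> simp [hc]
  have htrans : ∀ (i j : ι) (c : D), i ≠ j → ∀ t ∈ T,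
      (1 + Matrix.single i j c) * t * (1 - Matrix.single i j c) ∈ T := by
    intro i j c hij t ht
    exact hT _ _ (aux_trans_inv i j hij c) (aux_trans_inv' i j hij c) t ht
  -- Step A
  have stepA : ∀ i j : ι, i ≠ j → ∀ t ∈ T, t j i ≠ 0 → ∀ c, Matrix.single i j c ∈ T := by
    intro i j hij t ht htji
    let ph : Matrix ι ι D → Matrix ι ι D := fun t => t -
      Matrix.diagonal (fun k => if k = i then l else 1) * t *
        Matrix.diagonal (fun k => if k = i then l⁻¹ else 1)
    have hph : ∀ t ∈ T, ph t ∈ T := fun t ht => T.sub_mem ht (hdiag i l hl0 t ht)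
    have hphe : ∀ t a b, ph t a b =
        if a = i then (if b = i then 0 else t a b - l * t a b) else
          (if b = i then t a b - t a b * l⁻¹ else 0) := by
      intro t a b
      simp only [ph, Matrix.sub_apply, Matrix.mul_diagonal, Matrix.diagonal_mul]
      split_ifs with h1 h2
      · rw [hl, mul_assoc, mul_inv_cancel₀ hl0]; simp
      · simp
      · simp
      · simp
    set s := ph t with hs
    have hsT : s ∈ T := hph t ht
    have hsji : s j i = t j i - t j i * l⁻¹ := by
      rw [hs, hphe]; simp [hij.symm]
    have hsji0 : s j i ≠ 0 := by
      rw [hsji]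
      intro h
      have h2 : t j i * (1 - l⁻¹) = 0 := by rw [mul_sub, mul_one]; exact h
      rcases mul_eq_zero.1 h2 with h3 | h3
      · exact htji h3
      · apply hl1
        have : l⁻¹ = 1 := (sub_eq_zero.1 h3).symm
        exact inv_eq_one.1 this
    let s1 := (1 + Matrix.single i j 1) * s * (1 - Matrix.single i j 1) - s
    have hs1 : s1 ∈ T := T.sub_mem (htrans i j 1 hij s hsT) hsT
    have hs2 : ph s1 = Matrix.single i j (-(s j i - l * s j i)) := by
      ext a b
      rw [hphe]
      simp only [s1, Matrix.sub_apply, aux_conj_entry, Matrix.single_apply]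
      by_cases ha : a = i
      · subst ha
        by_cases hb : b = a
        · subst hb
          simp [hij.symm]
        · have e1 : s j b = 0 := by rw [hs, hphe]; simp [hij.symm, hb]
          have e2 : s a a = 0 := by rw [hs, hphe]; simp
          by_cases hbj : b = j
          · subst hbj
            simp [hb, e1, e2]
            abel
          · simp [hb, hbj, e1, Ne.symm hbj]
      · by_cases hb : b = i
        · subst hb
          simp [ha, Ne.symm ha, hij]
        · simp [ha, hb, Ne.symm ha]
    have hδ : -(s j i - l * s j i) ≠ 0 := by
      rw [neg_ne_zero]
      intro h
      have h2 : (1 - l) * s j i = 0 := by rw [sub_mul, one_mul]; exact h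
      rcases mul_eq_zero.1 h2 with h3 | h3
      · exact hl1 (sub_eq_zero.1 h3).symm
      · exact hsji0 h3
    have hsT2 : Matrix.single i j (-(s j i - l * s j i)) ∈ T := hs2 ▸ hph s1 hs1
    generalize -(s j i - l * s j i) = δ at hδ hsT2
    intro c
    by_cases hc : c = 0
    · subst hc; rw [Matrix.single_zero]; exact T.zero_mem
    · have := hdiag i (c * δ⁻¹) (mul_ne_zero hc (inv_ne_zero hδ)) _ hsT2
      convert this using 1
      ext a b
      simp only [Matrix.mul_diagonal, Matrix.diagonal_mul, Matrix.single_apply]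
      by_cases ha : i = a
      · subst ha
        by_cases hb : j = b
        · subst hb
          simp [hij.symm, hδ]
        · simp [hb]
      · simp [ha]
  -- Step B
  have stepB : ∃ t ∈ T, ∃ i j : ι, i ≠ j ∧ t i j ≠ 0 := by
    by_contra hcon
    push Not at hcon
    obtain ⟨t, ht, x, hx⟩ := hnc
    apply hx
    have heq : ∀ t ∈ T, ∀ i j : ι, t i i = t j j := by
      intro t ht i j
      by_cases hij : i = j
      · rw [hij]
      have := hcon _ (htrans i j 1 hij t ht) i j hij
      rw [aux_conj_entry, hcon t ht i j hij, hcon t ht j i (Ne.symm hij)] at this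
      simp at this
      exact (sub_eq_zero.1 this).symm
    obtain ⟨i, j, hij⟩ := exists_pair_ne ι
    have hcen : ∀ y, y * t i i = t i i * y := by
      intro y
      by_cases hy : y = 0
      · simp [hy]
      have := heq _ (hdiag i y hy t ht) i j
      simp only [Matrix.mul_diagonal, Matrix.diagonal_mul] at this
      simp [hij.symm] at this
      rw [heq t ht j i] at this
      rw [← eq_mul_inv_iff_mul_eq₀ (inv_ne_zero hy), inv_inv] at this
      exact this
    have htd : t = Matrix.diagonal (fun _ => t i i) := by
      ext a b
      rw [Matrix.diagonal_apply]
      split_ifs with h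
      · subst h; exact heq t ht a i
      · exact hcon t ht a b h
    rw [htd]
    ext a b
    rw [Matrix.mul_diagonal, Matrix.diagonal_mul, hcen]
  have stepC : ∀ i j : ι, i ≠ j → ∀ c, Matrix.single i j c ∈ T := by
    obtain ⟨t, ht, j, i, hji, htji⟩ := stepB
    have h1 := stepA i j hji.symm t ht htji
    have swap : ∀ i j : ι, i ≠ j → (∀ c, Matrix.single i j c ∈ T) →
        ∀ c, Matrix.single j i c ∈ T := by
      intro i j hij h
      exact stepA j i hij.symm _ (h 1) (by simp)
    have row : ∀ i j k : ι, i ≠ j → k ≠ j → (∀ c, Matrix.single i j c ∈ T) →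
        ∀ c, Matrix.single k j c ∈ T := by
      intro i j k hij hkj h
      by_cases hki : k = i
      · subst hki; exact h
      have hm := htrans k i 1 hki _ (h 1)
      have hm2 : Matrix.single j k (1:D) ∈ T := by
        refine stepA j k hkj.symm _ hm ?_ 1
        rw [aux_conj_entry]
        simp [hij.symm, Ne.symm hki]
      exact swap j k hkj.symm (fun c => stepA j k hkj.symm _ hm (by
        rw [aux_conj_entry]
        simp [hij.symm, Ne.symm hki]) c)
    have col : ∀ i j k : ι, i ≠ j → k ≠ i → (∀ c, Matrix.single i j c ∈ T) →
        ∀ c, Matrix.single i k c ∈ T := by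
      intro i j k hij hki h
      exact swap k i hki (row j i k hij.symm hki (swap i j hij h))
    intro a b hab
    by_cases hbi : b = i
    · subst hbi
      exact row j b a hji hab (swap _ _ hji.symm h1)
    · exact row i b a (Ne.symm hbi) hab (col i j b hji.symm hbi h1)
  have hd : ∀ i c, Matrix.single i i c ∈ P := by
    intro i c
    obtain ⟨j, hj⟩ := exists_ne i
    have := hP _ (stepC i j hj.symm c) _ (stepC j i hj 1)
    simpa using this
  have ho : ∀ i j, i ≠ j → ∀ c, Matrix.single i j c ∈ P := by
    intro i j hij c
    have h1 := htrans j i 1 hij.symm _ (stepC i j hij 1)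
    have h2 := T.add_mem (T.sub_mem h1 (stepC i j hij 1)) (stepC j i hij.symm 1)
    have h3 : (1 + Matrix.single j i 1) * Matrix.single i j (1:D) * (1 - Matrix.single j i 1)
        - Matrix.single i j 1 + Matrix.single j i 1 = Matrix.single j j 1 - Matrix.single i i 1 := by
      simp [add_mul, mul_sub]
      abel
    rw [h3] at h2
    have h4 := P.neg_mem (hP _ h2 _ (stepC i j hij c))
    convert h4 using 1
    simp [sub_mul, hij.symm]
  intro s
  rw [Matrix.matrix_eq_sum_single s]
  refine P.sum_mem fun i _ => P.sum_mem fun j _ => ?_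
  by_cases h : i = j
  · subst h; exact hd _ _
  · exact ho i j h _
end MatrixCase


section Final

theorem aux_lift_map {F A B : Type*} [Field F] [Ring A] [Ring B] [Algebra F A] [Algebra F B]
    (φ : A →ₐ[F] B) (a : ℕ → A) (f : FreeAlgebra F ℕ) :
    φ (FreeAlgebra.lift F a f) = FreeAlgebra.lift F (fun i => φ (a i)) f := by
  have : φ.comp (FreeAlgebra.lift F a) = FreeAlgebra.lift F (fun i => φ (a i)) := by
    apply FreeAlgebra.hom_ext
    ext i
    simp
  exact DFunLike.congr_fun this f

theorem aux_lift_conj {F A : Type*} [Field F] [Ring A] [Algebra F A] (U V : A) (h1 : U * V = 1) (h2 : V * U = 1)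
    (a : ℕ → A) (f : FreeAlgebra F ℕ) :
    FreeAlgebra.lift F (fun i => U * a i * V) f = U * FreeAlgebra.lift F a f * V := by
  induction f using FreeAlgebra.induction with
  | grade0 r =>
    rw [AlgHom.commutes, AlgHom.commutes, ← Algebra.commutes, mul_assoc, h1, mul_one]
  | grade1 x => simp
  | add p q hp hq => rw [map_add, map_add, hp, hq, mul_add, add_mul]
  | mul p q hp hq =>
    rw [map_mul, map_mul, hp, hq]
    calc _ = U * FreeAlgebra.lift F a p * (V * U) * FreeAlgebra.lift F a q * V := by
          simp only [mul_assoc]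
      _ = _ := by rw [h2]; simp only [mul_assoc, mul_one, one_mul]

/-- The additive group generated by the values of `f`. -/
def auxT {F : Type*} [Field F] (A : Type*) [Ring A] [Algebra F A] (f : FreeAlgebra F ℕ) : AddSubgroup A :=
  AddSubgroup.closure (Set.range fun a : ℕ → A => FreeAlgebra.lift F a f)

theorem auxT_conj {F A : Type*} [Field F] [Ring A] [Algebra F A] (f : FreeAlgebra F ℕ) (U V : A)
    (h1 : U * V = 1) (h2 : V * U = 1) (t : A) (ht : t ∈ auxT A f) : U * t * V ∈ auxT A f := by
  unfold auxT at *
  induction ht using AddSubgroup.closure_induction with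
  | mem x hx =>
    obtain ⟨a, rfl⟩ := hx
    exact AddSubgroup.subset_closure ⟨_, aux_lift_conj U V h1 h2 a f⟩
  | zero => simp
  | add x y _ _ hx hy => rw [mul_add, add_mul]; exact add_mem hx hy
  | neg x _ hx => rw [mul_neg, neg_mul]; exact neg_mem hx

theorem auxT_mul {F A : Type*} [Field F] [Ring A] [Algebra F A] (f : FreeAlgebra F ℕ) (P : AddSubgroup A)
    (hP : ∀ a b : ℕ → A, FreeAlgebra.lift F a f * FreeAlgebra.lift F b f ∈ P) :
    ∀ a ∈ auxT A f, ∀ b ∈ auxT A f, a * b ∈ P := by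
  intro a ha b hb
  refine AddSubgroup.closure_induction₂ (p := fun a b _ _ => a * b ∈ P) ?_ ?_ ?_ ?_ ?_ ?_ ?_ ha hb
  · rintro _ _ ⟨x, rfl⟩ ⟨y, rfl⟩; exact hP x y
  · intro x _; simp
  · intro x _; simp
  · intro x y z _ _ _ h h'; rw [add_mul]; exact add_mem h h'
  · intro x y z _ _ _ h h'; rw [mul_add]; exact add_mem h h'
  · intro x y _ _ h; rw [neg_mul]; exact neg_mem h
  · intro x y _ _ h; rw [mul_neg]; exact neg_mem h

theorem aux_div_case {F D : Type*} [Field F] [DivisionRing D] [Algebra F D] (f : FreeAlgebra F ℕ)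
    (hf : ∃ a : ℕ → D, ∃ x, FreeAlgebra.lift F a f * x ≠ x * FreeAlgebra.lift F a f)
    (P : AddSubgroup D)
    (hP : ∀ a b : ℕ → D, FreeAlgebra.lift F a f * FreeAlgebra.lift F b f ∈ P) : ∀ s, s ∈ P := by
  classical
  obtain ⟨d, c, hd, hc, hcT⟩ := aux_linearize f hf
  have hPT := auxT_mul f P hP
  by_cases hcomm : ∃ y y' : Fin d → D, auxMlin c y * auxMlin c y' ≠ auxMlin c y' * auxMlin c y
  · exact aux_mlin_done c (auxT D f) P hcT hPT hcomm
  push Not at hcomm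
  have halg := aux_algebraic c hd hc hcomm
  obtain ⟨a, x, hax⟩ := hf
  rcases finite_or_infinite (Subring.center D) with hfin | hinf
  · exact absurd (aux_finite_center hfin halg _ _) hax
  have hT : ∀ u : D, u ≠ 0 → ∀ t ∈ auxT D f, u * t * u⁻¹ ∈ auxT D f := fun u hu t ht =>
    auxT_conj f u u⁻¹ (mul_inv_cancel₀ hu) (inv_mul_cancel₀ hu) t ht
  set t : Polynomial D := FreeAlgebra.lift F (fun i => Polynomial.C (a i) * Polynomial.X) f with ht
  have hev : ∀ z ∈ Subring.center D, t.sum (fun i b => b * z ^ i) = FreeAlgebra.lift F (fun i => a i * z) f := by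
    intro z hz
    let φ0 : Polynomial D →+* D := Polynomial.eval₂RingHom' (RingHom.id D) z
      (fun b => Subring.mem_center_iff.mp hz b)
    let φ : Polynomial D →ₐ[F] D :=
      { φ0 with
        commutes' := by
          intro r
          change Polynomial.eval₂ (RingHom.id D) z (algebraMap F (Polynomial D) r) = _
          rw [Polynomial.algebraMap_apply, Polynomial.eval₂_C]; rfl }
    have h1 : φ t = t.sum (fun i b => b * z ^ i) := by
      change Polynomial.eval₂ (RingHom.id D) z t = _
      rw [Polynomial.eval₂_eq_sum]; rfl
    rw [← h1, ht, aux_lift_map]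
    congr 2
    ext i
    rw [map_mul]
    change Polynomial.eval₂ (RingHom.id D) z (Polynomial.C (a i)) * Polynomial.eval₂ (RingHom.id D) z Polynomial.X = _
    rw [Polynomial.eval₂_C, Polynomial.eval₂_X]; rfl
  set I : Finset ℕ := (Finset.range (t.natDegree + 1)).erase 0 with hI
  have hev2 : ∀ z ∈ Subring.center D, ∑ i ∈ I, t.coeff i * z ^ i + t.coeff 0
      = FreeAlgebra.lift F (fun i => a i * z) f := by
    intro z hz
    rw [← hev z hz, Polynomial.sum_over_range _ (by simp), ← Finset.sum_erase_add _ _ (Finset.mem_range.mpr (Nat.succ_pos _))]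
    simp [hI]
  have h0 : t.coeff 0 = FreeAlgebra.lift F (fun _ => (0 : D)) f := by
    have := hev2 0 (zero_mem _)
    rw [Finset.sum_eq_zero, zero_add] at this
    · simpa using this
    · intro i hi
      have : i ≠ 0 := (Finset.mem_erase.mp hi).1
      simp [this]
  have hcurve : AuxCurve (auxT D f) I t.coeff := by
    intro z hz
    have h1 : ∑ i ∈ I, t.coeff i * z ^ i = FreeAlgebra.lift F (fun i => a i * z) f - t.coeff 0 := by
      rw [← hev2 z hz]; abel
    rw [h1, h0]
    exact sub_mem (AddSubgroup.subset_closure ⟨_, rfl⟩) (AddSubgroup.subset_closure ⟨_, rfl⟩)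
  have hnc : ∃ i ∈ I, t.coeff i ∉ Subring.center D := by
    by_contra hcon
    push Not at hcon
    apply hax
    have h1 := hev2 1 (one_mem _)
    simp only [mul_one, one_pow] at h1
    have h2 : t.coeff 0 ∈ Subring.center D := by
      have h3 : t.coeff 0 = algebraMap F D (FreeAlgebra.lift F (fun _ => (0 : F)) f) := by
        rw [h0]
        have := aux_lift_map (Algebra.ofId F D) (fun _ => (0 : F)) f
        simp only [map_zero] at this
        rw [← this]; rfl
      rw [h3, Subring.mem_center_iff]
      intro g
      exact (Algebra.commutes _ _).symm
    have h4 : FreeAlgebra.lift F a f ∈ Subring.center D := by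
      rw [← h1]
      exact add_mem (sum_mem hcon) h2
    exact (Subring.mem_center_iff.mp h4 x).symm
  obtain ⟨m, hm, v, hv, hvT⟩ := aux_curve (auxT D f) hT hinf I t.coeff hcurve hnc
  exact aux_div_alg (auxT D f) P hT hPT hinf halg m (Nat.pos_of_ne_zero (Finset.mem_erase.mp hm).1) v hv hvT

theorem aux_transfer {F S S' : Type*} [Field F] [Ring S] [Ring S'] [Algebra F S] [Algebra F S']
    (e : S ≃ₐ[F] S') (f : FreeAlgebra F ℕ)
    (h : (∃ a : ℕ → S', ∃ x, FreeAlgebra.lift F a f * x ≠ x * FreeAlgebra.lift F a f) → ∀ P : AddSubgroup S',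
      (∀ a b : ℕ → S', FreeAlgebra.lift F a f * FreeAlgebra.lift F b f ∈ P) → ∀ s, s ∈ P)
    (hf : ∃ a : ℕ → S, ∃ x, FreeAlgebra.lift F a f * x ≠ x * FreeAlgebra.lift F a f)
    (P : AddSubgroup S)
    (hP : ∀ a b : ℕ → S, FreeAlgebra.lift F a f * FreeAlgebra.lift F b f ∈ P) (s : S) : s ∈ P := by
  have := h (by
    obtain ⟨a, x, hax⟩ := hf
    refine ⟨fun i => e (a i), e x, fun h => hax ?_⟩
    have h1 := aux_lift_map (e : S →ₐ[F] S') a f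
    have h1 : e (FreeAlgebra.lift F a f) = FreeAlgebra.lift F (fun i => e (a i)) f := h1
    rw [← h1, ← map_mul, ← map_mul] at h
    exact e.injective h) (P.comap (e.symm : S' →+ S)) (by
    intro a b
    change e.symm _ ∈ P
    rw [map_mul]
    have h1 := fun a => aux_lift_map (e.symm : S' →ₐ[F] S) a f
    have h1 : ∀ a, e.symm (FreeAlgebra.lift F a f) = FreeAlgebra.lift F (fun i => e.symm (a i)) f := h1
    rw [h1, h1]
    exact hP _ _) (e s)
  have h2 : e.symm (e s) ∈ P := this
  simpa using h2

/-- One-by-one matrices over a division algebra. -/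
def auxOneEquiv (F D : Type*) [Field F] [DivisionRing D] [Algebra F D] :
    Matrix (Fin 1) (Fin 1) D ≃ₐ[F] D where
  toFun A := A 0 0
  invFun d := Matrix.of fun _ _ => d
  left_inv A := by
    ext i j
    rw [Subsingleton.elim i 0, Subsingleton.elim j 0]
    rfl
  right_inv d := rfl
  map_mul' A B := by simp [Matrix.mul_apply]
  map_add' A B := rfl
  commutes' r := by simp [Matrix.algebraMap_matrix_apply]

theorem aux_simple_case {F S : Type*} [Field F] (hF : 2 < Cardinal.mk F) [Ring S] [IsSimpleRing S] [Algebra F S]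
    (f : FreeAlgebra F ℕ)
    (hf : ∃ a : ℕ → S, ∃ x, FreeAlgebra.lift F a f * x ≠ x * FreeAlgebra.lift F a f)
    (P : AddSubgroup S)
    (hP : ∀ a b : ℕ → S, FreeAlgebra.lift F a f * FreeAlgebra.lift F b f ∈ P) : ∀ s, s ∈ P := by
  obtain ⟨d, c, hd, hc, hcT⟩ := aux_linearize f hf
  have hPT := auxT_mul f P hP
  by_cases hcomm : ∃ y y' : Fin d → S, auxMlin c y * auxMlin c y' ≠ auxMlin c y' * auxMlin c y
  · exact aux_mlin_done c (auxT S f) P hcT hPT hcomm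
  push Not at hcomm
  have hart := aux_artinian c hd hc hcomm
  obtain ⟨n, hn, D, _, _, ⟨e⟩⟩ := IsSimpleRing.exists_algEquiv_matrix_divisionRing F S
  refine aux_transfer e f ?_ hf P hP
  intro hf' P' hP'
  by_cases hn1 : n = 1
  · subst hn1
    refine aux_transfer (auxOneEquiv F D) f ?_ hf' P' hP'
    intro hf'' P'' hP''
    exact aux_div_case f hf'' P'' hP''
  · have : Nontrivial (Fin n) := by
      rw [Fin.nontrivial_iff_two_le]
      have := hn.out
      omega
    obtain ⟨l, hl⟩ := Cardinal.exists_notMem_of_length_lt [(0 : F), 1] (by simpa using hF)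
    simp only [List.mem_cons, List.not_mem_nil, or_false, not_or] at hl
    apply aux_matrix (algebraMap F D l) (fun x => Algebra.commutes l x)
      (by simpa using hl.1) (by
        intro h
        rw [← map_one (algebraMap F D)] at h
        exact hl.2 ((algebraMap F D).injective h)) (auxT (Matrix (Fin n) (Fin n) D) f) P'
      (fun U V h1 h2 t ht => auxT_conj f U V h1 h2 t ht) _ (auxT_mul f P' hP')
    obtain ⟨a, x, hax⟩ := hf'
    exact ⟨_, AddSubgroup.subset_closure ⟨a, rfl⟩, x, hax⟩

end Final

/-- Let `F` be a field with more than two elements, `R` a unital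
`F`-algebra, and `f ∈ F⟨X⟩` such that `f(R)` is fully noncentral (the two-sided ideal
generated by commutators of values of `f` with elements of `R` is all of `R`). Then for
every maximal two-sided ideal `M` of `R`, every element of `R` is a sum `s + m` with `s`
in the additive subgroup generated by products of two values of `f` and `m ∈ M`. -/
theorem stmt_1 (F : Type*) [Field F] (hF : 2 < Cardinal.mk F)
    (R : Type*) [Ring R] [Algebra F R] (f : FreeAlgebra F ℕ)
    (hf : TwoSidedIdeal.span
        {x : R | ∃ (a : ℕ → R) (r : R),
          x = FreeAlgebra.lift F a f * r - r * FreeAlgebra.lift F a f} = ⊤)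
    (M : TwoSidedIdeal R) (hM : IsCoatom M) :
    ∀ x : R, ∃ s ∈ AddSubgroup.closure
        {y : R | ∃ a b : ℕ → R,
          y = FreeAlgebra.lift F a f * FreeAlgebra.lift F b f},
      ∃ m ∈ M, x = s + m := by
  intro x
  let φ : R →ₐ[F] M.ringCon.Quotient := RingCon.mkₐ F M.ringCon
  have hsurj : Function.Surjective φ := RingCon.mk'_surjective M.ringCon
  have hker : ∀ y : R, φ y = 0 ↔ y ∈ M := by
    intro y
    have h := TwoSidedIdeal.ker_ringCon_mk' M
    have h2 := TwoSidedIdeal.mem_ker (f := M.ringCon.mk') (x := y)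
    rw [h] at h2
    exact h2.symm
  have hnt : Nontrivial M.ringCon.Quotient := by
    refine ⟨⟨1, 0, fun h => hM.1 ?_⟩⟩
    rw [← map_one φ] at h
    have h1 := (hker 1).mp h
    rw [eq_top_iff]
    intro y _
    have := M.mul_mem_left y 1 h1
    rwa [mul_one] at this
  have hsimple : IsSimpleRing M.ringCon.Quotient := by
    apply IsSimpleRing.of_eq_bot_or_eq_top
    intro I
    have hle : M ≤ TwoSidedIdeal.comap φ I := by
      intro y hy
      rw [TwoSidedIdeal.mem_comap, (hker y).mpr hy]
      exact zero_mem _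
    rcases hM.le_iff.mp hle with h | h
    · right
      rw [eq_top_iff]
      intro q _
      obtain ⟨y, rfl⟩ := hsurj q
      rw [← TwoSidedIdeal.mem_comap φ, h]
      trivial
    · left
      rw [eq_bot_iff]
      intro q hq
      obtain ⟨y, rfl⟩ := hsurj q
      rw [← TwoSidedIdeal.mem_comap φ, h] at hq
      rw [(hker y).mpr hq]
      exact zero_mem _
  have hnc : ∃ a : ℕ → M.ringCon.Quotient, ∃ q, FreeAlgebra.lift F a f * q ≠ q * FreeAlgebra.lift F a f := by
    by_contra hcon
    push Not at hcon
    apply hM.1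
    rw [eq_top_iff, ← hf, TwoSidedIdeal.span_le]
    rintro _ ⟨a, r, rfl⟩
    apply (hker _).mp
    rw [map_sub, map_mul, map_mul, aux_lift_map, hcon, sub_self]
  set C := AddSubgroup.closure {y : R | ∃ a b : ℕ → R,
          y = FreeAlgebra.lift F a f * FreeAlgebra.lift F b f} with hC
  have hmem := aux_simple_case hF f hnc (C.map (φ : R →+ M.ringCon.Quotient)) (by
    intro a b
    choose g hg using hsurj
    refine ⟨FreeAlgebra.lift F (fun i => g (a i)) f * FreeAlgebra.lift F (fun i => g (b i)) f,
      AddSubgroup.subset_closure ⟨_, _, rfl⟩, ?_⟩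
    change φ _ = _
    rw [map_mul, aux_lift_map, aux_lift_map]
    simp only [hg]) (φ x)
  obtain ⟨s, hs, hsx⟩ := hmem
  have hsx : φ s = φ x := hsx
  refine ⟨s, hs, x - s, (hker _).mp ?_, by abel⟩
  rw [map_sub, hsx, sub_self]
end
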